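/- Let d ≥ 1, a ≥ 0, and let q, r > 2 satisfy 2/q = (d+a+1)·(1/2 − 1/r). Then there exists C = C(d,a,r) > 0 such that for every F ∈ 𝒮(ℝ^{d+1}_+×ℝ), the function 𝕋_a(F)(X) := ∫_ℝ ∫_{ℝ^{d+1}_+} 𝕊_a(X,Y,−t) F(Y,t) dω_a(Y) dt satisfies ‖𝕋_a(F)‖_{L²_a(ℝ^{d+1}_+)} ≤ C · ( ∫_ℝ ( ∫_{ℝ^{d+1}_+} |F(Y,t)|^{r'} dω_a(Y) )^{q'/r'} dt )^{1/q'}. In particular, for q = r = 2(d+a+3)/(d+a+1) there is C = C(d,a) > 0 with ‖𝕋_a(F)‖_{L²_a(ℝ^{d+1}_+)} ≤ C·‖F‖_{L^{2(d+a+3)/(d+a+5)}(ℝ^{d+1}_+×ℝ, dω_a dt)}. -/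

import Mathlib

open MeasureTheory Filter Complex
open scoped ENNReal NNReal Topology

noncomputable section

/-- Bessel function of the first kind of order `ν`, via its power series. -/
def besselJ (ν : ℝ) (x : ℝ) : ℝ :=
  ∑' k : ℕ, ((-1 : ℝ) ^ k / ((k.factorial : ℝ) * Real.Gamma ((k : ℝ) + ν + 1))) *
    (x / 2) ^ (2 * (k : ℝ) + ν)

/-- The half-line Schrödinger–Bessel kernel `S_a(z,ζ,t)`. -/
def SaK (a : ℝ) (z ζ t : ℝ) : ℂ :=
  (Complex.exp (-Complex.I * ((Real.sign t : ℝ) : ℂ) * (((a + 1) * Real.pi / 4 : ℝ) : ℂ)) /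
      (((2 * |t|) ^ ((a + 1) / 2) : ℝ) : ℂ)) *
    (((z * ζ / (2 * |t|)) ^ ((1 - a) / 2) : ℝ) : ℂ) *
    ((besselJ ((a - 1) / 2) (z * ζ / (2 * |t|)) : ℝ) : ℂ) *
    Complex.exp (Complex.I * ((z ^ 2 + ζ ^ 2 : ℝ) : ℂ) / ((4 * t : ℝ) : ℂ))

/-- The boundary kernel `S_a(z,0,t)`. -/
def Sa0 (a : ℝ) (z t : ℝ) : ℂ :=
  ((((2 : ℝ) ^ (-a) / Real.Gamma ((a + 1) / 2) : ℝ)) : ℂ) *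
    Complex.exp (-Complex.I * ((Real.sign t : ℝ) : ℂ) * (((a + 1) * Real.pi / 4 : ℝ) : ℂ)) *
    (((|t| ^ (-((a + 1) / 2)) : ℝ)) : ℂ) *
    Complex.exp (Complex.I * ((z ^ 2 : ℝ) : ℂ) / ((4 * t : ℝ) : ℂ))

/-- The free Schrödinger kernel on `ℝ^d` (principal branch of the power). -/
def Sfree (d : ℕ) (x y : Fin d → ℝ) (t : ℝ) : ℂ :=
  (4 * (Real.pi : ℂ) * Complex.I * (t : ℂ)) ^ (-(d : ℂ) / 2) *
    Complex.exp (Complex.I * ((∑ i, (x i - y i) ^ 2 : ℝ) : ℂ) / ((4 * t : ℝ) : ℂ))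

/-- The full half-space kernel `𝕊_a(X,Y,t) = S_a(z,ζ,t)·S(x,y,t)`. -/
def SK (d : ℕ) (a : ℝ) (X Y : (Fin d → ℝ) × ℝ) (t : ℝ) : ℂ :=
  SaK a X.2 Y.2 t * Sfree d X.1 Y.1 t

/-- The weighted measure `dω_a = z^a dx dz` on the half-space `ℝ^d × (0,∞)`. -/
def ωa (d : ℕ) (a : ℝ) : Measure ((Fin d → ℝ) × ℝ) :=
  (volume : Measure (Fin d → ℝ)).prod
    (((volume : Measure ℝ).restrict (Set.Ioi 0)).withDensity fun z => ENNReal.ofReal (z ^ a))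

/-- The mixed norm `‖Φ‖_{L^q_t L^r_x}`. -/
def mixNorm (d : ℕ) (q r : ℝ) (Φ : (Fin d → ℝ) → ℝ → ℂ) : ℝ≥0∞ :=
  (∫⁻ t : ℝ, (∫⁻ x : Fin d → ℝ, (‖Φ x t‖₊ : ℝ≥0∞) ^ r) ^ (q / r)) ^ (1 / q)

/-- The mixed norm `‖Φ‖_{L^q_T L^r_x}` over the time interval `[0,T]`. -/
def mixNormT (d : ℕ) (T q r : ℝ) (Φ : (Fin d → ℝ) → ℝ → ℂ) : ℝ≥0∞ :=
  (∫⁻ t in Set.Ioc (0 : ℝ) T, (∫⁻ x : Fin d → ℝ, (‖Φ x t‖₊ : ℝ≥0∞) ^ r) ^ (q / r)) ^ (1 / q)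

/-- The homogeneous propagator `𝕋_a^*(u₀)`. -/
def Tstar (d : ℕ) (a : ℝ) (u₀ : (Fin d → ℝ) × ℝ → ℂ) (X : (Fin d → ℝ) × ℝ) (t : ℝ) : ℂ :=
  if t = 0 then u₀ X else ∫ Y, SK d a X Y t * u₀ Y ∂(ωa d a)

/-- The inhomogeneous Duhamel term `𝔻_a(F)`. -/
def Dop (d : ℕ) (a : ℝ) (F : (Fin d → ℝ) × ℝ → ℝ → ℂ) (X : (Fin d → ℝ) × ℝ) (t : ℝ) : ℂ :=
  ∫ τ in (0 : ℝ)..t, ∫ Y, SK d a X Y (t - τ) * F Y τ ∂(ωa d a)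

/-- The boundary-data operator `Θ_a^*(Φ)`. -/
def ThetaStar (d : ℕ) (a : ℝ) (Φ : (Fin d → ℝ) → ℝ → ℂ) (X : (Fin d → ℝ) × ℝ) (t : ℝ) : ℂ :=
  Complex.I *
    ∫ τ in (0 : ℝ)..t, ∫ y : Fin d → ℝ, Sa0 a X.2 (t - τ) * Sfree d X.1 y (t - τ) * Φ y τ

/-- The weight `k(z) = min{1, z^{a/2}}`. -/
def kwt (a z : ℝ) : ℝ := min 1 (z ^ (a / 2))

/-- The weight `k^{-1}(z) = max{1, z^{-a/2}}`. -/
def kinv (a z : ℝ) : ℝ := max 1 (z ^ (-a / 2))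


open scoped ComplexConjugate

section

/-- entire Bessel-type series -/
def hB (s : ℝ) (v : ℂ) : ℂ := ∑' m : ℕ, v ^ m / (((m.factorial : ℝ) * Real.Gamma ((m : ℝ) + s) : ℝ) : ℂ)

lemma gamma_lower (s : ℝ) (hs : 1/2 ≤ s) (m : ℕ) :
    Real.Gamma s * (1/2)^m ≤ Real.Gamma ((m : ℝ) + s) := by
  induction m with
  | zero => simp
  | succ n ih =>
    have h1 : (0:ℝ) < (n:ℝ) + s := by positivity
    have : ((n + 1 : ℕ) : ℝ) + s = ((n:ℝ) + s) + 1 := by push_cast; ring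
    rw [this, Real.Gamma_add_one h1.ne', pow_succ]
    have hg := Real.Gamma_pos_of_pos (show 0 < s by linarith)
    have h2 : (1/2:ℝ) ≤ (n:ℝ) + s := by have : (0:ℝ) ≤ n := Nat.cast_nonneg n
                                        linarith
    calc Real.Gamma s * ((1/2)^n * (1/2)) = (1/2) * (Real.Gamma s * (1/2)^n) := by ring
      _ ≤ _ := by gcongr

lemma hB_term_le (s : ℝ) (hs : 1/2 ≤ s) (v : ℂ) (R : ℝ) (hv : ‖v‖ ≤ R) (m : ℕ) :
    ‖v ^ m / (((m.factorial : ℝ) * Real.Gamma ((m : ℝ) + s) : ℝ) : ℂ)‖ ≤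
      (Real.Gamma s)⁻¹ * ((2 * R) ^ m / m.factorial) := by
  have hs0 : 0 < s := by linarith
  have hg := Real.Gamma_pos_of_pos hs0
  have h1 := gamma_lower s hs m
  have h2 : 0 < Real.Gamma ((m:ℝ) + s) := Real.Gamma_pos_of_pos (by positivity)
  have hf : (0:ℝ) < m.factorial := by positivity
  rw [norm_div, norm_pow, Complex.norm_real, Real.norm_of_nonneg (by positivity)]
  rw [div_le_iff₀ (by positivity)]
  have hR : 0 ≤ R := (norm_nonneg v).trans hv
  calc ‖v‖^m ≤ R^m := by gcongr
    _ = (Real.Gamma s)⁻¹ * ((2*R)^m / m.factorial) * (m.factorial * (Real.Gamma s * (1/2)^m)) := by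
        field_simp
        rw [← mul_pow]
        congr 1; ring
    _ ≤ _ := by gcongr

lemma hB_bound_summable (s R : ℝ) :
    Summable (fun m : ℕ => (Real.Gamma s)⁻¹ * ((2 * R) ^ m / m.factorial)) :=
  (Real.summable_pow_div_factorial (2*R)).mul_left _

lemma hB_summable (s : ℝ) (hs : 1/2 ≤ s) (v : ℂ) :
    Summable (fun m : ℕ => v ^ m / (((m.factorial : ℝ) * Real.Gamma ((m : ℝ) + s) : ℝ) : ℂ)) :=
  Summable.of_norm_bounded (hB_bound_summable s ‖v‖) (hB_term_le s hs v ‖v‖ le_rfl)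

lemma hB_hasDerivAt (s : ℝ) (hs : 1/2 ≤ s) (v : ℂ) :
    HasDerivAt (hB s) (hB (s+1) v) v := by
  set R := ‖v‖ + 1
  have key : HasDerivAt (fun z : ℂ => ∑' m : ℕ, z ^ m / (((m.factorial : ℝ) * Real.Gamma ((m : ℝ) + s) : ℝ) : ℂ))
      (∑' m : ℕ, (m * v ^ (m-1)) / (((m.factorial : ℝ) * Real.Gamma ((m : ℝ) + s) : ℝ) : ℂ)) v := by
    refine hasDerivAt_tsum_of_isPreconnected (F := ℂ)
       (g := fun (m : ℕ) (z : ℂ) => z ^ m / (((m.factorial : ℝ) * Real.Gamma ((m : ℝ) + s) : ℝ) : ℂ))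
       (g' := fun (m : ℕ) (v : ℂ) => (m * v ^ (m-1)) / (((m.factorial : ℝ) * Real.Gamma ((m : ℝ) + s) : ℝ) : ℂ))
      (u := fun m : ℕ => m * R^(m-1) / (m.factorial * Real.Gamma (m+s)))
      (t := Metric.ball (0:ℂ) R) (y₀ := 0) ?_ Metric.isOpen_ball (convex_ball (0:ℂ) R).isPreconnected ?_ ?_ ?_ ?_ ?_
    · rw [← summable_nat_add_iff 1]
      refine Summable.of_nonneg_of_le ?_ ?_ (hB_bound_summable (s+1) R)
      · intro m
        have : 0 < Real.Gamma (((m+1:ℕ):ℝ)+s) := Real.Gamma_pos_of_pos (by positivity)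
        positivity
      · intro m
        have h := hB_term_le (s+1) (by linarith) (R:ℂ) R (by rw [Complex.norm_real, Real.norm_of_nonneg (by positivity)]) m
        refine le_trans (le_of_eq ?_) h
        have e : ((m+1:ℕ):ℝ)+s = (m:ℝ)+(s+1) := by push_cast; ring
        have : 0 < Real.Gamma ((m:ℝ)+(s+1)) := Real.Gamma_pos_of_pos (by positivity)
        rw [e, norm_div, norm_pow, Complex.norm_real, Complex.norm_real, Real.norm_of_nonneg (by positivity : 0 ≤ R),
          Real.norm_of_nonneg (by positivity)]
        simp only [Nat.add_sub_cancel, Nat.factorial_succ]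
        push_cast
        field_simp
    · intro n y _
      exact ((hasDerivAt_pow n y).div_const _)
    · intro n y hy
      have hy' : ‖y‖ < R := by simpa using hy
      have : 0 < Real.Gamma ((n:ℝ)+s) := Real.Gamma_pos_of_pos (by positivity)
      rw [norm_div, norm_mul, norm_pow, Complex.norm_real, Real.norm_of_nonneg (by positivity)]
      simp only [Complex.norm_natCast]
      gcongr
    · simp; positivity
    · exact hB_summable s hs 0
    · simp [R]
  refine HasDerivAt.congr_deriv key ?_
  symm
  unfold hB
  rw [Summable.tsum_eq_zero_add (f := fun m : ℕ => (m * v ^ (m-1)) / (((m.factorial : ℝ) * Real.Gamma ((m : ℝ) + s) : ℝ) : ℂ))]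
  · simp only [Nat.cast_zero, zero_mul, zero_div, zero_add]
    congr 1; ext m
    have e : ((m+1:ℕ):ℝ)+s = (m:ℝ)+(s+1) := by push_cast; ring
    have : 0 < Real.Gamma ((m:ℝ)+(s+1)) := Real.Gamma_pos_of_pos (by positivity)
    have h0 : ((m.factorial:ℝ) * Real.Gamma ((m:ℝ)+(s+1)) : ℝ) ≠ 0 := by positivity
    rw [e]
    simp only [Nat.add_sub_cancel, Nat.factorial_succ]
    have h1 : ((m+1:ℕ):ℂ) ≠ 0 := by exact_mod_cast Nat.succ_ne_zero m
    push_cast at h1 ⊢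
    rw [mul_assoc, mul_div_mul_left _ _ h1]
  · rw [← summable_nat_add_iff 1]
    refine (hB_summable (s+1) (by linarith) v).congr ?_
    intro m
    have e : ((m+1:ℕ):ℝ)+s = (m:ℝ)+(s+1) := by push_cast; ring
    rw [e]
    simp only [Nat.add_sub_cancel, Nat.factorial_succ]
    have h1 : ((m+1:ℕ):ℂ) ≠ 0 := by exact_mod_cast Nat.succ_ne_zero m
    push_cast at h1 ⊢
    rw [mul_assoc, mul_div_mul_left _ _ h1]

lemma hB_rel (s : ℝ) (hs : 1/2 ≤ s) (v : ℂ) :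
    v * hB (s+1+1) v + s * hB (s+1) v = hB s v := by
  have A : HasSum (fun m : ℕ => m * v ^ m / (((m.factorial : ℝ) * Real.Gamma ((m : ℝ) + (s+1)) : ℝ) : ℂ))
      (v * hB (s+1+1) v) := by
    rw [← hasSum_nat_add_iff' 1]
    simp only [Finset.range_one, Finset.sum_singleton, Nat.cast_zero, zero_mul, zero_div, sub_zero]
    refine ((hB_summable (s+1+1) (by linarith) v).hasSum.mul_left v).congr_fun ?_
    intro m
    have e : ((m+1:ℕ):ℝ)+(s+1) = (m:ℝ)+(s+1+1) := by push_cast; ring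
    rw [e]
    simp only [Nat.factorial_succ]
    have h1 : ((m+1:ℕ):ℂ) ≠ 0 := by exact_mod_cast Nat.succ_ne_zero m
    push_cast at h1 ⊢
    rw [mul_assoc ((m:ℂ)+1), mul_div_mul_left _ _ h1, pow_succ]
    ring
  have B := (hB_summable (s+1) (by linarith) v).hasSum.mul_left (s:ℂ)
  have C := A.add B
  refine C.unique ?_
  refine (hB_summable s hs v).hasSum.congr_fun ?_
  intro m
  have h1 : (m:ℝ)+s ≠ 0 := by positivity
  have : 0 < Real.Gamma ((m:ℝ)+s) := Real.Gamma_pos_of_pos (by positivity)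
  have e : (m:ℝ)+(s+1) = ((m:ℝ)+s)+1 := by ring
  rw [e, Real.Gamma_add_one h1]
  have h2 : ((Real.Gamma ((m:ℝ)+s) : ℝ):ℂ) ≠ 0 := by exact_mod_cast this.ne'
  have h3 : ((m:ℂ)+s) ≠ 0 := by exact_mod_cast h1
  push_cast
  field_simp

lemma hB_zero (s : ℝ) : hB s 0 = ((Real.Gamma s)⁻¹ : ℝ) := by
  rw [hB, tsum_eq_single 0]
  · simp
  · intro m hm; simp [hm]

lemma hB_energy (s : ℝ) (hs : 1/2 ≤ s) (x : ℂ) :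
    ‖hB s (x^2/4)‖ ≤ (Real.Gamma s)⁻¹ * Real.exp |x.re| := by
  have hg := Real.Gamma_pos_of_pos (show 0 < s by linarith)
  set c := |x.re|
  let f : ℝ → ℂ := fun τ => hB s ((τ:ℂ)^2 * x^2/4)
  let h1 : ℝ → ℂ := fun τ => hB (s+1) ((τ:ℂ)^2 * x^2/4)
  let g : ℝ → ℂ := fun τ => (τ:ℂ) * x / 2 * h1 τ
  have hv : ∀ τ : ℝ, HasDerivAt (fun τ : ℝ => (τ:ℂ)^2 * x^2/4) ((τ:ℂ) * x^2/2) τ := by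
    intro τ
    have := (((hasDerivAt_id τ).ofReal_comp.pow 2).mul_const (x^2)).div_const 4
    refine this.congr_deriv ?_
    simp; ring
  have hf : ∀ τ, HasDerivAt f (x * g τ) τ := by
    intro τ
    have := (hB_hasDerivAt s hs ((τ:ℂ)^2 * x^2/4)).comp τ (hv τ)
    refine this.congr_deriv ?_
    simp only [g, h1]; ring
  have hgd : ∀ τ, HasDerivAt g (x * (f τ - (s-1/2) * h1 τ)) τ := by
    intro τ
    have a1 := (hB_hasDerivAt (s+1) (by linarith) ((τ:ℂ)^2 * x^2/4)).comp τ (hv τ)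
    have a2 := (((hasDerivAt_id τ).ofReal_comp.mul_const x).div_const 2).mul a1
    refine a2.congr_deriv ?_
    have := hB_rel s hs ((τ:ℂ)^2 * x^2/4)
    simp only [f, h1, ← this, Function.comp, id, ofReal_one]
    ring
  let N : ℝ → ℝ := fun τ => normSq (f τ) + normSq (g τ)
  have hN : ∀ τ, HasDerivAt N (2 * ((conj (f τ) * (x * g τ)).re + (conj (g τ) * (x * (f τ - (s-1/2) * h1 τ))).re)) τ := by
    intro τ
    have rr : ∀ (u : ℝ → ℂ) (u' : ℂ), HasDerivAt u u' τ →
        HasDerivAt (fun τ => normSq (u τ)) (2 * (conj (u τ) * u').re) τ := by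
      intro u u' hu
      have e1 : HasDerivAt (fun τ => (u τ).re) u'.re τ := by
        exact (Complex.reCLM.hasFDerivAt.comp_hasDerivAt τ hu)
      have e2 : HasDerivAt (fun τ => (u τ).im) u'.im τ := by
        exact (Complex.imCLM.hasFDerivAt.comp_hasDerivAt τ hu)
      have := (e1.mul e1).add (e2.mul e2)
      refine (this.congr_deriv ?_)
      simp; ring
    exact ((rr f _ (hf τ)).add (rr g _ (hgd τ))).congr_deriv (by ring)
  have hNle : ∀ τ, 0 ≤ τ → 2 * ((conj (f τ) * (x * g τ)).re + (conj (g τ) * (x * (f τ - (s-1/2) * h1 τ))).re) ≤ 2 * c * N τ := by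
    intro τ hτ
    have e1 : (conj (g τ) * (x * ((s-1/2) * h1 τ))).re = (s-1/2) * (τ/2) * (normSq x * normSq (h1 τ)) := by
      have : conj (g τ) * (x * ((s-1/2) * h1 τ)) = (((s-1/2) * (τ/2) * (normSq x * normSq (h1 τ)) : ℝ):ℂ) := by
        push_cast
        rw [← Complex.mul_conj, ← Complex.mul_conj]
        simp only [g, map_mul, map_div₀, conj_ofReal, map_ofNat]
        ring
      rw [this, ofReal_re]
    have e2 : (conj (g τ) * (x * (f τ - (s-1/2) * h1 τ))).re = (conj (g τ) * (x * f τ)).re - (s-1/2) * (τ/2) * (normSq x * normSq (h1 τ)) := by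
      rw [← e1, ← sub_re]; congr 1; ring
    rw [e2]
    have e3 : 0 ≤ (s-1/2) * (τ/2) * (normSq x * normSq (h1 τ)) := by
      have := normSq_nonneg x; have := normSq_nonneg (h1 τ)
      have : 0 ≤ s - 1/2 := by linarith
      positivity
    have e4 : (conj (f τ) * (x * g τ)).re + (conj (g τ) * (x * f τ)).re = 2 * x.re * ((f τ).re * (g τ).re + (f τ).im * (g τ).im) := by
      simp; ring
    have e5 : 2 * x.re * ((f τ).re * (g τ).re + (f τ).im * (g τ).im) ≤ c * N τ := by
      simp only [N, normSq_apply]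
      have hc1 : x.re ≤ c := le_abs_self _
      have hc2 : -c ≤ x.re := neg_abs_le _
      nlinarith [mul_nonneg (sub_nonneg.2 hc1) (sq_nonneg ((f τ).re + (g τ).re)), mul_nonneg (sub_nonneg.2 hc1) (sq_nonneg ((f τ).im + (g τ).im)),
        mul_nonneg (by linarith : 0 ≤ x.re + c) (sq_nonneg ((f τ).re - (g τ).re)), mul_nonneg (by linarith : 0 ≤ x.re + c) (sq_nonneg ((f τ).im - (g τ).im))]
    linarith
  let Q : ℝ → ℝ := fun τ => N τ * Real.exp (-(2*c*τ))
  have hQd : ∀ τ, HasDerivAt Q (2 * ((conj (f τ) * (x * g τ)).re + (conj (g τ) * (x * (f τ - (s-1/2) * h1 τ))).re) * Real.exp (-(2*c*τ)) + N τ * (Real.exp (-(2*c*τ)) * (-(2*c*1)))) τ := by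
    intro τ
    exact (hN τ).mul (((hasDerivAt_id τ).const_mul (2*c)).neg.exp)
  have hanti : AntitoneOn Q (Set.Ici 0) := by
    apply antitoneOn_of_deriv_nonpos (convex_Ici 0)
    · exact fun τ _ => (hQd τ).continuousAt.continuousWithinAt
    · exact fun τ _ => (hQd τ).differentiableAt.differentiableWithinAt
    · intro τ hτ
      rw [interior_Ici] at hτ
      rw [(hQd τ).deriv]
      have := hNle τ (le_of_lt hτ)
      have := Real.exp_pos (-(2*c*τ))
      nlinarith
  have h01 : Q 1 ≤ Q 0 := hanti (by simp) (by simp) zero_le_one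
  have hN0 : N 0 = ((Real.Gamma s)⁻¹)^2 := by
    simp [N, f, g, hB_zero]; ring
  have hN1 : ‖hB s (x^2/4)‖^2 ≤ N 1 := by
    simp only [N, f]
    rw [Complex.sq_norm]
    have := normSq_nonneg (g 1)
    simpa using this
  simp only [Q, hN0] at h01
  have h2 : N 1 ≤ ((Real.Gamma s)⁻¹ * Real.exp c)^2 := by
    have : N 1 = N 1 * Real.exp (-(2*c*1)) * Real.exp (2*c) := by
      rw [mul_assoc, ← Real.exp_add]; simp
    rw [this, mul_pow, ← Real.exp_nat_mul]
    push_cast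
    gcongr
    simpa using h01
  exact abs_le_of_sq_le_sq' (hN1.trans h2) (by positivity) |>.2

lemma hB_conj (s : ℝ) (v : ℂ) : conj (hB s v) = hB s (conj v) := by
  rw [hB, hB, conj_tsum]
  congr 1; ext m
  simp

lemma hB_ofReal_nonneg (s : ℝ) (hs : 1/2 ≤ s) (v : ℝ) (hv : 0 ≤ v) : ∃ y : ℝ, 0 ≤ y ∧ hB s v = y := by
  refine ⟨∑' m : ℕ, v ^ m / ((m.factorial : ℝ) * Real.Gamma ((m : ℝ) + s)), ?_, ?_⟩
  · refine tsum_nonneg fun m => ?_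
    have : 0 < Real.Gamma ((m:ℝ)+s) := Real.Gamma_pos_of_pos (by positivity)
    positivity
  · rw [hB, Complex.ofReal_tsum]; congr 1; ext m; push_cast; rfl

lemma hB_continuous (s : ℝ) (hs : 1/2 ≤ s) : Continuous (hB s) :=
  continuous_iff_continuousAt.2 fun v => (hB_hasDerivAt s hs v).continuousAt

end

section

lemma diffInt {α : Type*} [MeasurableSpace α] (μ : Measure α) (F : ℂ → α → ℂ) (U : Set ℂ)
    (hU : IsOpen U) (hm : ∀ z ∈ U, AEStronglyMeasurable (F z) μ) (bd : α → ℝ) (hbd : Integrable bd μ)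
    (hle : ∀ z ∈ U, ∀ a, ‖F z a‖ ≤ bd a) (hd : ∀ a, DifferentiableOn ℂ (fun z => F z a) U) :
    DifferentiableOn ℂ (fun z => ∫ a, F z a ∂μ) U := by
  intro z₀ hz₀
  obtain ⟨ε, hε, hball⟩ := Metric.isOpen_iff.1 hU z₀ hz₀
  have hder : ∀ a, ∀ z ∈ U, HasDerivAt (fun z => F z a) (deriv (fun z => F z a) z) z :=
    fun a z hz => ((hd a).differentiableAt (hU.mem_nhds hz)).hasDerivAt
  have key := hasDerivAt_integral_of_dominated_loc_of_deriv_le (μ := μ) (𝕜 := ℂ) (F := F) (x₀ := z₀)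
    (s := Metric.ball z₀ (ε/2)) (F' := fun z a => deriv (fun z => F z a) z)
    (bound := fun a => bd a / (ε/2)) (Metric.ball_mem_nhds _ (by positivity)) ?_ ?_ ?_ ?_ ?_ ?_
  · exact key.2.differentiableAt.differentiableWithinAt
  · filter_upwards [hU.mem_nhds hz₀] with z hz using hm z hz
  · exact Integrable.mono' hbd (hm z₀ hz₀) (Eventually.of_forall (hle z₀ hz₀))
  · -- measurability of derivative
    let u : ℕ → ℂ := fun n => z₀ + ((ε/2/(n+1) : ℝ) : ℂ)
    have hu0 : Tendsto (fun n : ℕ => ε/2/((n:ℝ)+1)) atTop (𝓝 0) :=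
      Tendsto.div_atTop tendsto_const_nhds (tendsto_natCast_atTop_atTop.atTop_add tendsto_const_nhds)
    have hut : Tendsto u atTop (𝓝[≠] z₀) := by
      rw [tendsto_nhdsWithin_iff]
      constructor
      · have : Tendsto (fun n : ℕ => z₀ + ((ε/2/((n:ℝ)+1) : ℝ) : ℂ)) atTop (𝓝 (z₀ + ((0:ℝ):ℂ))) :=
          tendsto_const_nhds.add ((Complex.continuous_ofReal.tendsto 0).comp hu0)
        simpa [u] using this
      · refine Eventually.of_forall fun n => ?_
        have : (ε/2/((n:ℝ)+1) : ℝ) ≠ 0 := by positivity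
        have h2 : ((ε/2/((n:ℝ)+1) : ℝ) : ℂ) ≠ 0 := by exact_mod_cast this
        intro h
        apply h2
        have h' : z₀ + ((ε/2/((n:ℝ)+1) : ℝ) : ℂ) = z₀ := h
        simpa using h'
    have huU : ∀ n, u n ∈ U := by
      intro n
      apply hball
      simp only [u, Metric.mem_ball, dist_eq_norm, add_sub_cancel_left, Complex.norm_real]
      rw [Real.norm_of_nonneg (by positivity)]
      have : (1:ℝ) ≤ (n:ℝ)+1 := by have : (0:ℝ) ≤ n := Nat.cast_nonneg n
                                   linarith
      calc ε/2/((n:ℝ)+1) ≤ ε/2/1 := by gcongr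
        _ < ε := by linarith
    refine aestronglyMeasurable_of_tendsto_ae (u := atTop)
      (f := fun n : ℕ => fun a => slope (fun z => F z a) z₀ (u n)) (fun n => ?_) ?_
    · simp only [slope_def_field]
      simp only [div_eq_mul_inv]
      exact ((hm _ (huU n)).sub (hm _ hz₀)).mul_const _
    · refine Eventually.of_forall fun a => ?_
      exact ((hasDerivAt_iff_tendsto_slope.1 (hder a z₀ hz₀)).comp hut)
  · refine Eventually.of_forall fun a z hz => ?_
    apply Complex.norm_deriv_le_of_forall_mem_sphere_norm_le (by positivity)
    · apply DifferentiableOn.diffContOnCl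
      refine (hd a).mono ?_
      refine subset_trans Metric.closure_ball_subset_closedBall ?_
      intro w hw
      apply hball
      have h1 := Metric.mem_closedBall.1 hw
      have h2 := Metric.mem_ball.1 hz
      have := dist_triangle w z z₀
      exact Metric.mem_ball.2 (by linarith)
    · intro w hw
      apply hle
      apply hball
      have h1 := Metric.mem_sphere.1 hw
      have h2 := Metric.mem_ball.1 hz
      have := dist_triangle w z z₀
      exact Metric.mem_ball.2 (by linarith)
  · exact hbd.div_const _
  · refine Eventually.of_forall fun a z hz => ?_
    exact hder a z (hball (Metric.ball_subset_ball (by linarith) hz))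

lemma moment_integrable (q c : ℝ) (hq : -1 < q) (hc : 0 < c) :
    Integrable (fun z : ℝ => z ^ q * Real.exp (-c * z^2)) (volume.restrict (Set.Ioi 0)) := by
  have := integrableOn_rpow_mul_exp_neg_mul_rpow (p := 2) (s := q) (b := c) hq (by norm_num) hc
  refine this.congr_fun ?_ measurableSet_Ioi
  intro x hx
  simp

lemma moment_real (q c : ℝ) (hq : -1 < q) (hc : 0 < c) :
    ∫ z in Set.Ioi (0:ℝ), z ^ q * Real.exp (-c * z^2) = 1/2 * Real.Gamma ((q+1)/2) * c ^ (-((q+1)/2)) := by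
  have := integral_rpow_mul_exp_neg_mul_rpow (p := 2) (q := q) (b := c) (by norm_num) hq hc
  simp only [Real.rpow_two] at this
  rw [this, neg_div]; ring

lemma moment_complex (q : ℝ) (hq : -1 < q) (p : ℂ) (hp : 0 < p.re) :
    ∫ z in Set.Ioi (0:ℝ), ((z ^ q : ℝ) : ℂ) * exp (-p * z^2) =
      1/2 * (Real.Gamma ((q+1)/2) : ℂ) * p ^ (-(((q+1)/2 : ℝ):ℂ)) := by
  set c := min (p.re/2) (1/2)
  have hc : 0 < c := by simp only [c]; positivity
  let U : Set ℂ := {w | c < w.re}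
  have hU : IsOpen U := isOpen_lt continuous_const Complex.continuous_re
  have hUpos : ∀ w ∈ U, 0 < w.re := fun w hw => hc.trans hw
  have d1 : DifferentiableOn ℂ (fun p : ℂ => ∫ z in Set.Ioi (0:ℝ), ((z ^ q : ℝ) : ℂ) * exp (-p * z^2)) U := by
    refine diffInt _ (fun p z => ((z ^ q : ℝ) : ℂ) * exp (-p * z^2)) U hU ?_ 
      (fun z => ‖z ^ q * Real.exp (-c * z^2)‖) (moment_integrable q c hq hc).norm ?_ ?_
    · intro w hw
      apply Measurable.aestronglyMeasurable
      fun_prop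
    · intro w hw z
      have hw' : c < w.re := hw
      rw [norm_mul, norm_mul, Complex.norm_real, Complex.norm_exp]
      gcongr
      rw [Real.norm_of_nonneg (Real.exp_pos _).le]
      gcongr
      have : (-w * (z:ℂ)^2).re = -w.re * z^2 := by
        rw [← ofReal_pow]; simp [-ofReal_pow]
      rw [this]
      gcongr
    · intro z
      fun_prop
  have d2 : DifferentiableOn ℂ (fun p : ℂ => 1/2 * (Real.Gamma ((q+1)/2) : ℂ) * p ^ (-(((q+1)/2 : ℝ):ℂ))) U := by
    intro w hw
    apply DifferentiableAt.differentiableWithinAt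
    apply DifferentiableAt.const_mul
    exact differentiableAt_id.cpow_const (Or.inl (hUpos w hw))
  have hconv : IsPreconnected U := (convex_halfSpace_re_gt c).isPreconnected
  have key := AnalyticOnNhd.eqOn_of_preconnected_of_frequently_eq (d1.analyticOnNhd hU) (d2.analyticOnNhd hU)
    hconv (z₀ := 1) (by simp only [U, Set.mem_ofPred_eq, one_re, c]; exact (min_le_right _ _).trans_lt (by norm_num)) ?_
  · exact key (show c < p.re from (min_le_left _ _).trans_lt (by linarith))
  · have ht : Tendsto (fun n : ℕ => ((1 + 1/((n:ℝ)+1) : ℝ):ℂ)) atTop (𝓝[≠] 1) := by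
      rw [tendsto_nhdsWithin_iff]
      constructor
      · have : Tendsto (fun n : ℕ => ((1 + 1/((n:ℝ)+1) : ℝ):ℂ)) atTop (𝓝 (((1 + 0:ℝ):ℂ))) :=
          (Complex.continuous_ofReal.tendsto _).comp (tendsto_const_nhds.add tendsto_one_div_add_atTop_nhds_zero_nat)
        simpa using this
      · refine Eventually.of_forall fun n => ?_
        have : (1 + 1/((n:ℝ)+1) : ℝ) ≠ 1 := by
          have : 0 < 1/((n:ℝ)+1) := by positivity
          linarith
        simp only [Set.mem_compl_iff, Set.mem_singleton_iff]
        exact_mod_cast this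
    refine ht.frequently (Frequently.of_forall fun n => ?_)
    have hn : 0 < (1 + 1/((n:ℝ)+1) : ℝ) := by positivity
    generalize (1 + 1/((n:ℝ)+1) : ℝ) = x at hn
    have := moment_real q x hq hn
    have h2 : (x:ℂ) ^ (-(((q+1)/2 : ℝ):ℂ)) = ((x ^ (-((q+1)/2)) : ℝ) : ℂ) := by
      rw [Complex.ofReal_cpow hn.le]; push_cast; rfl
    rw [h2]
    have h3 : (∫ z in Set.Ioi (0:ℝ), ((z ^ q : ℝ) : ℂ) * exp (-(x:ℂ) * z^2)) = ((∫ z in Set.Ioi (0:ℝ), z ^ q * Real.exp (-x * z^2) : ℝ) : ℂ) := by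
      rw [← integral_complex_ofReal]
      congr 1; ext z; push_cast; rfl
    rw [h3, this]; push_cast; ring

lemma gv (j : ℕ) : ∀ (k : ℕ) (s : ℝ), 0 < s →
    ∑ m ∈ Finset.range (j+1), (j.choose m : ℝ) * (k.descFactorial m) / Real.Gamma (m + s) =
      Real.Gamma (j + k + s) / (Real.Gamma (k+s) * Real.Gamma (j+s)) := by
  induction j with
  | zero =>
    intro k s hs
    have : 0 < Real.Gamma ((k:ℝ)+s) := Real.Gamma_pos_of_pos (by positivity)
    simp; field_simp
  | succ j ih =>
    intro k s hs
    have h1 : ∑ m ∈ Finset.range (j+1+1), ((j+1).choose m : ℝ) * (k.descFactorial m) / Real.Gamma (m + s)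
      = ∑ m ∈ Finset.range (j+1), (j.choose m : ℝ) * (k.descFactorial m) / Real.Gamma (m + s)
       + ∑ m ∈ Finset.range (j+1), (j.choose m : ℝ) * (k.descFactorial (m+1)) / Real.Gamma (m + (s+1)) := by
      rw [Finset.sum_range_succ']
      have e : ∀ m ∈ Finset.range (j+1), ((j+1).choose (m+1) : ℝ) * (k.descFactorial (m+1)) / Real.Gamma (((m+1:ℕ):ℝ) + s)
         = (j.choose (m+1) : ℝ) * (k.descFactorial (m+1)) / Real.Gamma (((m+1:ℕ):ℝ) + s) + (j.choose m : ℝ) * (k.descFactorial (m+1)) / Real.Gamma (m + (s+1)) := by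
        intro m _
        have : (((m+1:ℕ):ℝ) + s) = m + (s+1) := by push_cast; ring
        rw [this, Nat.choose_succ_succ]; push_cast; ring
      rw [Finset.sum_congr rfl e, Finset.sum_add_distrib]
      have e2 : ∑ m ∈ Finset.range (j+1), (j.choose m : ℝ) * (k.descFactorial m) / Real.Gamma (m + s)
        = ∑ m ∈ Finset.range (j+1), (j.choose (m+1) : ℝ) * (k.descFactorial (m+1)) / Real.Gamma (((m+1:ℕ):ℝ) + s)
          + ((j+1).choose 0 : ℝ) * (k.descFactorial 0) / Real.Gamma (((0:ℕ):ℝ) + s) := by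
        rw [Finset.sum_range_succ' (fun m => (j.choose m : ℝ) * (k.descFactorial m) / Real.Gamma (m + s)), Finset.sum_range_succ]
        simp
      rw [e2]; ring
    have hk : 0 < Real.Gamma ((k:ℝ)+s) := Real.Gamma_pos_of_pos (by positivity)
    have hj : 0 < Real.Gamma ((j:ℝ)+s) := Real.Gamma_pos_of_pos (by positivity)
    have hjk : 0 < Real.Gamma ((j:ℝ)+k+s) := Real.Gamma_pos_of_pos (by positivity)
    have g1 : Real.Gamma (((j+1:ℕ):ℝ)+k+s) = (j+k+s) * Real.Gamma (j+k+s) := by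
      rw [← Real.Gamma_add_one (by positivity)]; congr 1; push_cast; ring
    have g2 : Real.Gamma (((j+1:ℕ):ℝ)+s) = (j+s) * Real.Gamma (j+s) := by
      rw [← Real.Gamma_add_one (by positivity)]; congr 1; push_cast; ring
    have hjs : (0:ℝ) < j + s := by positivity
    rw [h1, ih k s hs, g1, g2]
    cases k with
    | zero =>
      simp at *
      field_simp
    | succ k =>
      have e : ∀ m ∈ Finset.range (j+1), (j.choose m : ℝ) * ((k+1).descFactorial (m+1)) / Real.Gamma (m + (s+1))
         = (k+1) * ((j.choose m : ℝ) * (k.descFactorial m) / Real.Gamma (m + (s+1))) := by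
        intro m _
        rw [Nat.succ_descFactorial_succ]; push_cast; ring
      rw [Finset.sum_congr rfl e, ← Finset.mul_sum, ih k (s+1) (by linarith)]
      have a1 : (j:ℝ) + k + (s+1) = j + ((k+1:ℕ):ℝ) + s := by push_cast; ring
      have a2 : (k:ℝ) + (s+1) = ((k+1:ℕ):ℝ) + s := by push_cast; ring
      have a3 : Real.Gamma ((j:ℝ) + (s+1)) = (j+s) * Real.Gamma (j+s) := by
        rw [← Real.Gamma_add_one (by positivity)]; congr 1; ring
      rw [a1, a2, a3]
      field_simp
      push_cast; ring

end

section

def dco (s : ℝ) (j k : ℕ) : ℝ :=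
  Real.Gamma (j + k + s) / ((j.factorial * Real.Gamma (j+s)) * (k.factorial * Real.Gamma (k+s)))

lemma dco_eq (s : ℝ) (hs : 0 < s) (j k : ℕ) :
    dco s j k = ∑ m ∈ Finset.range (j+1), if m ≤ j ∧ m ≤ k then
      1 / ((j-m).factorial * (k-m).factorial * (m.factorial * Real.Gamma (m+s))) else 0 := by
  have h := gv j k s hs
  have hk : 0 < Real.Gamma ((k:ℝ)+s) := Real.Gamma_pos_of_pos (by positivity)
  have hj : 0 < Real.Gamma ((j:ℝ)+s) := Real.Gamma_pos_of_pos (by positivity)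
  have : dco s j k = (1 / ((j.factorial:ℝ) * k.factorial)) * (Real.Gamma (j + k + s) / (Real.Gamma (k+s) * Real.Gamma (j+s))) := by
    rw [dco]; field_simp
  rw [this, ← h, Finset.mul_sum]
  refine Finset.sum_congr rfl fun m hm => ?_
  have hmj : m ≤ j := by have := Finset.mem_range.1 hm; omega
  have hm' : 0 < Real.Gamma ((m:ℝ)+s) := Real.Gamma_pos_of_pos (by positivity)
  by_cases hmk : m ≤ k
  · rw [if_pos ⟨hmj, hmk⟩]
    have e1 : (j.choose m : ℝ) * m.factorial * (j-m).factorial = j.factorial := by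
      exact_mod_cast Nat.choose_mul_factorial_mul_factorial hmj
    have e2 : ((k-m).factorial : ℝ) * k.descFactorial m = k.factorial := by
      exact_mod_cast Nat.factorial_mul_descFactorial hmk
    rw [← e1, ← e2]
    have : (j.choose m : ℝ) ≠ 0 := by exact_mod_cast (Nat.choose_pos hmj).ne'
    have : (k.descFactorial m : ℝ) ≠ 0 := by
      intro h0; rw [h0, mul_zero] at e2; exact (Nat.factorial_ne_zero k) (by exact_mod_cast e2.symm)
    field_simp
  · rw [if_neg (by tauto), Nat.descFactorial_of_lt (by omega)]
    simp

lemma dser (s : ℝ) (hs : 1/2 ≤ s) (A B : ℂ) :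
    HasSum (fun jk : ℕ × ℕ => A ^ jk.1 * B ^ jk.2 * (dco s jk.1 jk.2 : ℂ))
      (exp A * exp B * hB s (A * B)) := by
  have hs0 : 0 < s := by linarith
  let E : ℂ → ℕ → ℂ := fun A n => A ^ n / n.factorial
  let H : ℕ → ℂ := fun m => (A*B) ^ m / (((m.factorial : ℝ) * Real.Gamma ((m : ℝ) + s) : ℝ) : ℂ)
  have hE : ∀ A, HasSum (E A) (exp A) := fun A => by
    rw [Complex.exp_eq_exp_ℂ]; exact NormedSpace.expSeries_div_hasSum_exp A
  have hEn : ∀ A, Summable (fun n => ‖E A n‖) := fun A => NormedSpace.norm_expSeries_div_summable A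
  have hH : HasSum H (hB s (A*B)) := (hB_summable s hs (A*B)).hasSum
  have hHn : Summable (fun n => ‖H n‖) := (hB_summable s hs (A*B)).norm
  have h2n : Summable (fun x : ℕ × ℕ => ‖E A x.1 * E B x.2‖) := (hEn A).mul_norm (hEn B)
  have h2 : HasSum (fun x : ℕ × ℕ => E A x.1 * E B x.2) (exp A * exp B) :=
    (hE A).mul (hE B) h2n.of_norm
  have h3 : HasSum (fun x : (ℕ × ℕ) × ℕ => (E A x.1.1 * E B x.1.2) * H x.2) (exp A * exp B * hB s (A*B)) :=
    h2.mul hH (h2n.mul_norm hHn).of_norm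
  let φ : (ℕ × ℕ) × ℕ → (ℕ × ℕ) × ℕ := fun x => ((x.1.1 + x.2, x.1.2 + x.2), x.2)
  have hφ : Function.Injective φ := by
    rintro ⟨⟨i, l⟩, m⟩ ⟨⟨i', l'⟩, m'⟩ h
    simp only [φ, Prod.mk.injEq] at h ⊢
    omega
  let G : (ℕ × ℕ) × ℕ → ℂ := fun x => if x.2 ≤ x.1.1 ∧ x.2 ≤ x.1.2 then
    (E A (x.1.1 - x.2) * E B (x.1.2 - x.2)) * H x.2 else 0
  have hG : HasSum G (exp A * exp B * hB s (A*B)) := by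
    rw [← hφ.hasSum_iff]
    · refine h3.congr_fun ?_
      rintro ⟨⟨i, l⟩, m⟩
      simp [G, φ]
    · rintro ⟨⟨j, k⟩, m⟩ hx
      simp only [G]
      rw [if_neg]
      rintro ⟨h1, h2⟩
      apply hx
      refine ⟨((j-m, k-m), m), ?_⟩
      have h1' : m ≤ j := h1
      have h2' : m ≤ k := h2
      simp only [φ, Nat.sub_add_cancel h1', Nat.sub_add_cancel h2']
  refine hG.prod_fiberwise ?_
  rintro ⟨j, k⟩
  have : A ^ j * B ^ k * (dco s j k : ℂ) = ∑ m ∈ Finset.range (j+1), G ((j,k),m) := by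
    rw [dco_eq s hs0]
    push_cast
    rw [Finset.mul_sum]
    refine Finset.sum_congr rfl fun m hm => ?_
    simp only [G]
    by_cases hc : m ≤ j ∧ m ≤ k
    · rw [if_pos hc, if_pos hc]
      simp only [E, H]
      obtain ⟨h1, h2⟩ := hc
      have e1 : A ^ j = A^(j-m) * A^m := by rw [← pow_add]; congr 1; omega
      have e2 : B ^ k = B^(k-m) * B^m := by rw [← pow_add]; congr 1; omega
      have hm' : 0 < Real.Gamma ((m:ℝ)+s) := Real.Gamma_pos_of_pos (by positivity)
      have : ((Real.Gamma ((m:ℝ)+s) : ℝ) : ℂ) ≠ 0 := by exact_mod_cast hm'.ne'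
      have : ((j-m).factorial : ℂ) ≠ 0 := by exact_mod_cast Nat.factorial_ne_zero _
      have : ((k-m).factorial : ℂ) ≠ 0 := by exact_mod_cast Nat.factorial_ne_zero _
      have : (m.factorial : ℂ) ≠ 0 := by exact_mod_cast Nat.factorial_ne_zero _
      rw [e1, e2, mul_pow]
      push_cast
      field_simp
    · rw [if_neg hc, if_neg hc]; simp
  show HasSum (fun m => G ((j,k),m)) (A ^ j * B ^ k * (dco s j k : ℂ))
  rw [this]
  apply hasSum_sum_of_ne_finset_zero
  intro m hm
  simp only [G]
  rw [if_neg]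
  intro h
  apply hm
  rw [Finset.mem_range]
  have := h.1
  omega

lemma weber (a : ℝ) (ha : 0 ≤ a) (p α β : ℂ) (hp : 0 < p.re) :
    ∫ z in Set.Ioi (0:ℝ), ((z ^ a : ℝ) : ℂ) * exp (-p * z^2) * (hB ((a+1)/2) (α * z^2) * hB ((a+1)/2) (β * z^2))
     = 1/2 * p ^ (-(((a+1)/2 : ℝ):ℂ)) * (exp (α/p) * exp (β/p) * hB ((a+1)/2) (α/p * (β/p))) := by
  set s := (a+1)/2 with hs_def
  have hs : 1/2 ≤ s := by rw [hs_def]; linarith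
  have hs0 : 0 < s := by linarith
  have hp0 : p ≠ 0 := by rintro rfl; simp at hp
  let co : ℕ → ℂ := fun m => (((m.factorial : ℝ) * Real.Gamma ((m : ℝ) + s) : ℝ) : ℂ)
  have hcopos : ∀ m : ℕ, 0 < (m.factorial : ℝ) * Real.Gamma ((m : ℝ) + s) := fun m => by
    have : 0 < Real.Gamma ((m:ℝ)+s) := Real.Gamma_pos_of_pos (by positivity)
    positivity
  let F : ℕ × ℕ → ℝ → ℂ := fun x z => (α ^ x.1 / co x.1 * (β ^ x.2 / co x.2)) *
    (((z ^ (a + 2*(x.1+x.2)) : ℝ) : ℂ) * exp (-p * z^2))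
  have hq : ∀ x : ℕ × ℕ, -1 < a + 2*((x.1:ℝ)+x.2) := fun x => by
    have : (0:ℝ) ≤ 2*((x.1:ℝ)+x.2) := by positivity
    linarith
  have hgam : ∀ x : ℕ × ℕ, (a + 2*((x.1:ℝ)+x.2) + 1)/2 = x.1 + x.2 + s := fun x => by rw [hs_def]; ring
  have hnorm : ∀ (x : ℕ × ℕ) (z : ℝ), z ∈ Set.Ioi (0:ℝ) → ‖F x z‖ = (‖α‖ ^ x.1 / (x.1.factorial * Real.Gamma (x.1 + s)) * (‖β‖ ^ x.2 / (x.2.factorial * Real.Gamma (x.2 + s)))) *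
    (z ^ (a + 2*((x.1:ℝ)+x.2)) * Real.exp (-p.re * z^2)) := by
    intro x z hz
    have hz' : 0 < z := hz
    have : (-p * (z:ℂ)^2).re = -p.re * z^2 := by
        rw [← ofReal_pow]; simp [-ofReal_pow]
    simp only [F, norm_mul, norm_div, norm_pow, co, Complex.norm_real, Complex.norm_exp, this]
    have h1 := hcopos x.1
    have h2 := hcopos x.2
    rw [Real.norm_of_nonneg (by positivity : 0 ≤ z ^ (a + 2*((x.1:ℝ)+x.2)))]
    rw [← norm_mul, ← norm_mul, Real.norm_of_nonneg h1.le, Real.norm_of_nonneg h2.le]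
  have hint : ∀ x, Integrable (F x) (volume.restrict (Set.Ioi 0)) := by
    intro x
    apply Integrable.const_mul
    refine Integrable.mono' (moment_integrable _ p.re (hq x) hp) ?_ ?_
    · apply Measurable.aestronglyMeasurable; fun_prop
    · filter_upwards [ae_restrict_mem measurableSet_Ioi] with z hz
      have hz' : 0 < z := hz
      have : (-p * (z:ℂ)^2).re = -p.re * z^2 := by
        rw [← ofReal_pow]; simp [-ofReal_pow]
      rw [norm_mul, Complex.norm_real, Complex.norm_exp, this, Real.norm_of_nonneg (by positivity)]
  have hpn : ∀ x : ℕ × ℕ, (p.re) ^ (-((x.1:ℝ) + x.2 + s)) = p.re ^ (-s) * ((p.re⁻¹)^x.1 * (p.re⁻¹)^x.2) := by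
    intro x
    rw [show -((x.1:ℝ) + x.2 + s) = -s + -(((x.1+x.2:ℕ)):ℝ) by push_cast; ring, Real.rpow_add hp, Real.rpow_neg hp.le (((x.1+x.2:ℕ)):ℝ), Real.rpow_natCast, ← pow_add, inv_pow]
  have hnint : ∀ x, ∫ z in Set.Ioi (0:ℝ), ‖F x z‖ = 1/2 * p.re ^ (-s) * ((‖α‖/p.re)^x.1 * (‖β‖/p.re)^x.2 * dco s x.1 x.2) := by
    intro x
    rw [setIntegral_congr_fun measurableSet_Ioi (hnorm x), integral_const_mul, moment_real _ _ (hq x) hp, hgam, hpn]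
    simp only [dco, div_eq_mul_inv, mul_pow]
    rw [mul_inv (_ * _) (_ * _)]
    ring
  have hsum : Summable (fun x => ∫ z in Set.Ioi (0:ℝ), ‖F x z‖) := by
    simp_rw [hnint]
    apply Summable.mul_left
    have := (dser s hs ((‖α‖/p.re : ℝ):ℂ) ((‖β‖/p.re : ℝ):ℂ)).summable
    exact_mod_cast this
  have key := hasSum_integral_of_summable_integral_norm hint hsum
  have hval : ∀ x, ∫ z in Set.Ioi (0:ℝ), F x z = 1/2 * p ^ (-((s:ℝ):ℂ)) * ((α/p)^x.1 * (β/p)^x.2 * (dco s x.1 x.2 : ℂ)) := by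
    intro x
    have hpc : p ^ (-(((x.1:ℝ) + x.2 + s : ℝ):ℂ)) = p ^ (-((s:ℝ):ℂ)) * ((p⁻¹)^x.1 * (p⁻¹)^x.2) := by
      rw [show -(((x.1:ℝ) + x.2 + s : ℝ):ℂ) = -((s:ℝ):ℂ) + -(((x.1+x.2:ℕ)):ℂ) by push_cast; ring, Complex.cpow_add _ _ hp0, Complex.cpow_neg _ (((x.1+x.2:ℕ)):ℂ), Complex.cpow_natCast, ← pow_add, inv_pow]
    simp only [F]
    rw [integral_const_mul, moment_complex _ (hq x) p hp, hgam, hpc]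
    simp only [dco, div_eq_mul_inv, mul_pow, co]
    push_cast
    rw [mul_inv (_ * _) (_ * _)]
    ring
  simp_rw [hval] at key
  have key2 := (dser s hs (α/p) (β/p)).mul_left (1/2 * p ^ (-((s:ℝ):ℂ)))
  rw [key2.unique key]
  symm
  apply setIntegral_congr_fun measurableSet_Ioi
  intro z hz
  have hz' : 0 < z := hz
  show ∑' x, F x z = _
  have h1 : HasSum (fun m : ℕ => (α * (z:ℂ)^2)^m / co m) (hB s (α * (z:ℂ)^2)) := (hB_summable s hs _).hasSum
  have h2 : HasSum (fun m : ℕ => (β * (z:ℂ)^2)^m / co m) (hB s (β * (z:ℂ)^2)) := (hB_summable s hs _).hasSum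
  have h12 := (h1.mul h2 ((h1.summable.norm).mul_norm h2.summable.norm).of_norm).mul_left (((z ^ a : ℝ) : ℂ) * exp (-p * z^2))
  refine HasSum.tsum_eq (h12.congr_fun ?_)
  intro x
  simp only [F]
  have : z ^ (a + 2*((x.1:ℝ)+x.2)) = z^a * ((z^2)^x.1 * (z^2)^x.2) := by
    rw [Real.rpow_add hz', ← pow_add, ← pow_mul, ← Real.rpow_natCast]; push_cast; rfl
  rw [this]
  push_cast
  ring

end

section

def kx (d : ℕ) (w : ℂ) (x y : Fin d → ℝ) : ℂ :=
  (4 * (Real.pi : ℂ) * w) ^ (((-(d : ℝ) / 2 : ℝ)) : ℂ) * exp (-((∑ i, (x i - y i) ^ 2 : ℝ) : ℂ) / (4 * w))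

def kz (a : ℝ) (w : ℂ) (z ζ : ℝ) : ℂ :=
  (2 * w) ^ ((-((a+1)/2) : ℝ) : ℂ) * (((2:ℝ) ^ (1 - (a+1)/2) : ℝ) : ℂ) *
    exp (-((z ^ 2 + ζ ^ 2 : ℝ) : ℂ) / (4 * w)) * hB ((a+1)/2) (((z * ζ : ℝ) : ℂ)^2 / (16 * w ^ 2))

def kern (d : ℕ) (a : ℝ) (w : ℂ) (X Y : (Fin d → ℝ) × ℝ) : ℂ := kx d w X.1 Y.1 * kz a w X.2 Y.2

lemma Sfree_eq (d : ℕ) (x y : Fin d → ℝ) (t : ℝ) (ht : t ≠ 0) : Sfree d x y t = kx d (I * t) x y := by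
  have ht' : (t : ℂ) ≠ 0 := by exact_mod_cast ht
  unfold Sfree kx
  congr 1
  · congr 1
    · ring
    · push_cast; ring
  · congr 1
    push_cast
    field_simp
    rw [I_sq]; ring

lemma bessel_hB (a : ℝ) (ha : 0 ≤ a) (x : ℝ) (hx : 0 < x) :
    (((x ^ ((1 - a) / 2) : ℝ)) : ℂ) * ((besselJ ((a - 1) / 2) x : ℝ) : ℂ) =
      (((2:ℝ) ^ (1 - (a+1)/2) : ℝ) : ℂ) * hB ((a+1)/2) (-(x:ℂ)^2/4) := by
  have hs : 1/2 ≤ (a+1)/2 := by linarith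
  unfold besselJ hB
  rw [Complex.ofReal_tsum, ← tsum_mul_left, ← tsum_mul_left]
  congr 1; ext k
  have e1 : (k:ℝ) + (a-1)/2 + 1 = k + (a+1)/2 := by ring
  have e2 : (x/2) ^ (2 * (k:ℝ) + (a-1)/2) = (x/2)^(2*k) * (x ^ ((a-1)/2) / (2:ℝ) ^ ((a-1)/2)) := by
    rw [Real.rpow_add (by positivity), Real.div_rpow hx.le (by norm_num) ((a-1)/2)]
    congr 1
    rw [← Real.rpow_natCast]; push_cast; rfl
  have e3 : (2:ℝ) ^ (1 - (a+1)/2) = ((2:ℝ) ^ ((a-1)/2))⁻¹ := by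
    rw [← Real.rpow_neg (by norm_num)]; congr 1; ring
  have e4 : x ^ ((1 - a) / 2) = (x ^ ((a-1)/2))⁻¹ := by
    rw [← Real.rpow_neg hx.le]; congr 1; ring
  rw [e1, e2, e3, e4]
  have h1 : x ^ ((a-1)/2) ≠ 0 := by positivity
  have h2 : (2:ℝ) ^ ((a-1)/2) ≠ 0 := by positivity
  have h3 : Real.Gamma ((k:ℝ) + (a+1)/2) ≠ 0 := (Real.Gamma_pos_of_pos (by positivity)).ne'
  have h4 : (k.factorial : ℝ) ≠ 0 := by positivity
  have e5 : (-(x:ℂ)^2/4)^k = (((-1)^k * (x/2)^(2*k) : ℝ) : ℂ) := by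
    push_cast
    rw [pow_mul, ← mul_pow]; congr 1; ring
  rw [e5]
  norm_cast
  push_cast
  field_simp

lemma SaK_eq (a : ℝ) (ha : 0 ≤ a) (z ζ t : ℝ) (hz : 0 < z) (hζ : 0 < ζ) (ht : t ≠ 0) :
    SaK a z ζ t = kz a (I * t) z ζ := by
  have ht' : (t : ℂ) ≠ 0 := by exact_mod_cast ht
  have hta : 0 < |t| := abs_pos.2 ht
  unfold SaK kz
  rw [mul_assoc (_ / _), bessel_hB a ha _ (by positivity)]
  have e1 : -(((z * ζ / (2 * |t|) : ℝ) : ℂ))^2/4 = ((z * ζ : ℝ) : ℂ)^2 / (16 * (I * t)^2) := by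
    rw [mul_pow, I_sq]
    have : ((|t| : ℝ) : ℂ)^2 = (t:ℂ)^2 := by rw [← ofReal_pow, sq_abs, ofReal_pow]
    push_cast
    rw [div_pow, mul_pow, mul_pow, this]
    field_simp
    ring
  rw [e1]
  have e2 : I * ((z^2+ζ^2 : ℝ) : ℂ) / ((4 * t : ℝ) : ℂ) = -((z^2+ζ^2 : ℝ) : ℂ) / (4 * (I * t)) := by
    push_cast
    field_simp
    rw [I_sq]; ring
  rw [e2]
  have e3 : (2 * (I * t)) ^ ((-((a+1)/2) : ℝ) : ℂ) =
    Complex.exp (-Complex.I * ((Real.sign t : ℝ) : ℂ) * (((a + 1) * Real.pi / 4 : ℝ) : ℂ)) /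
      (((2 * |t|) ^ ((a + 1) / 2) : ℝ) : ℂ) := by
    have hdec : 2 * (I * (t:ℂ)) = ((2 * |t| : ℝ) : ℂ) * (I * (Real.sign t : ℝ)) := by
      rcases lt_or_gt_of_ne ht with h | h
      · rw [Real.sign_of_neg h, abs_of_neg h]; push_cast; ring
      · rw [Real.sign_of_pos h, abs_of_pos h]; push_cast; ring
    have hne : I * ((Real.sign t : ℝ) : ℂ) ≠ 0 := by
      rcases lt_or_gt_of_ne ht with h | h
      · rw [Real.sign_of_neg h]; simp
      · rw [Real.sign_of_pos h]; simp
    have hl : Complex.log (I * ((Real.sign t : ℝ) : ℂ)) = I * ((Real.sign t : ℝ) : ℂ) * (Real.pi/2) := by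
      rcases lt_or_gt_of_ne ht with h | h
      · rw [Real.sign_of_neg h]; simp only [ofReal_neg, ofReal_one, mul_neg, mul_one, Complex.log_neg_I]; ring
      · rw [Real.sign_of_pos h]; simp only [ofReal_one, mul_one, Complex.log_I]; ring
    have h2t : (0:ℝ) < 2 * |t| := by positivity
    rw [hdec, Complex.cpow_def_of_ne_zero (mul_ne_zero (by exact_mod_cast h2t.ne') hne),
      Complex.log_ofReal_mul h2t hne, hl, Real.rpow_def_of_pos h2t, ofReal_exp, ← Complex.exp_sub]
    congr 1
    push_cast; ring
  rw [e3]; ring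

lemma SK_eq (d : ℕ) (a : ℝ) (ha : 0 ≤ a) (X Y : (Fin d → ℝ) × ℝ) (t : ℝ) (hz : 0 < X.2) (hζ : 0 < Y.2) (ht : t ≠ 0) :
    SK d a X Y t = kern d a (I * t) X Y := by
  rw [SK, kern, Sfree_eq _ _ _ _ ht, SaK_eq a ha _ _ _ hz hζ ht, mul_comm]

lemma kern_symm (d : ℕ) (a : ℝ) (w : ℂ) (X Y : (Fin d → ℝ) × ℝ) : kern d a w X Y = kern d a w Y X := by
  unfold kern kx kz
  simp only [sub_sq_comm (X.1 _), add_comm (X.2^2), mul_comm X.2]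

lemma kern_conj (d : ℕ) (a : ℝ) (w : ℂ) (hw : 0 < w.re) (X Y : (Fin d → ℝ) × ℝ) :
    conj (kern d a w X Y) = kern d a (conj w) X Y := by
  have h2 : (2 * w).arg ≠ Real.pi := by
    intro h; rw [Complex.arg_eq_pi_iff] at h
    have := h.1; simp at this; linarith
  have h4 : (4 * (Real.pi:ℂ) * w).arg ≠ Real.pi := by
    intro h; rw [Complex.arg_eq_pi_iff] at h
    have := h.1; simp at this; nlinarith [Real.pi_pos]
  unfold kern kx kz
  simp only [map_mul, hB_conj, ← Complex.exp_conj, map_div₀, map_neg, conj_ofReal, map_pow]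
  have e2 := Complex.cpow_conj (2*w) ((-((a+1)/2) : ℝ) : ℂ) h2
  have e4 := Complex.cpow_conj (4 * (Real.pi:ℂ) * w) ((-(d:ℝ)/2 : ℝ) : ℂ) h4
  simp only [map_mul, conj_ofReal] at e2 e4
  rw [e2, e4, conj_conj, conj_conj]
  simp only [Complex.conj_ofNat]

/-- squared distance -/
def sqd (d : ℕ) (X Y : (Fin d → ℝ) × ℝ) : ℝ := ∑ i, (X.1 i - Y.1 i)^2 + (X.2 - Y.2)^2

def C0 (d : ℕ) (a : ℝ) : ℝ := (4 * Real.pi) ^ (-(d:ℝ)/2) * (2 ^ (-((a+1)/2)) * 2 ^ (1 - (a+1)/2) * (Real.Gamma ((a+1)/2))⁻¹)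

lemma C0_pos (d : ℕ) (a : ℝ) (ha : 0 ≤ a) : 0 < C0 d a := by
  have : 0 < Real.Gamma ((a+1)/2) := Real.Gamma_pos_of_pos (by linarith)
  have := Real.pi_pos
  unfold C0; positivity

lemma kern_bound (d : ℕ) (a : ℝ) (ha : 0 ≤ a) (w : ℂ) (hw0 : w ≠ 0) (hw : 0 ≤ w.re) (X Y : (Fin d → ℝ) × ℝ)
    (hz : 0 ≤ X.2) (hζ : 0 ≤ Y.2) :
    ‖kern d a w X Y‖ ≤ C0 d a * ‖w‖ ^ (-((d:ℝ)+a+1)/2) * Real.exp (-(w⁻¹.re/4) * sqd d X Y) := by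
  have hwn : 0 < ‖w‖ := norm_pos_iff.2 hw0
  have hpi := Real.pi_pos
  have hre : 0 ≤ w⁻¹.re := by rw [Complex.inv_re]; exact div_nonneg hw (Complex.normSq_nonneg _)
  set ρ := w⁻¹.re with hρ
  have hq : ∀ Q : ℝ, ‖exp (-(Q:ℂ) / (4 * w))‖ = Real.exp (-(ρ/4) * Q) := by
    intro Q
    rw [Complex.norm_exp]
    congr 1
    rw [show -(Q:ℂ) / (4 * w) = ((-Q/4 : ℝ) : ℂ) * w⁻¹ by push_cast; field_simp]
    rw [Complex.re_ofReal_mul]; ring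
  have hb : ‖hB ((a+1)/2) (((X.2 * Y.2 : ℝ) : ℂ)^2 / (16 * w ^ 2))‖ ≤ (Real.Gamma ((a+1)/2))⁻¹ * Real.exp (ρ/2 * (X.2 * Y.2)) := by
    have := hB_energy ((a+1)/2) (by linarith) (((X.2 * Y.2/2 : ℝ) : ℂ) * w⁻¹)
    rw [Complex.re_ofReal_mul, abs_of_nonneg (by positivity)] at this
    convert this using 2
    · congr 1; push_cast; field_simp; ring
    · congr 1; rw [← hρ]; ring
  have hG : 0 < Real.Gamma ((a+1)/2) := Real.Gamma_pos_of_pos (by linarith)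
  unfold kern kx kz
  rw [norm_mul, norm_mul, norm_mul, norm_mul, norm_mul, hq, hq, Complex.norm_cpow_real, Complex.norm_cpow_real, Complex.norm_real]
  have n4 : ‖4 * (Real.pi:ℂ) * w‖ = (4 * Real.pi) * ‖w‖ := by simp [abs_of_pos hpi]
  have n2 : ‖2 * w‖ = 2 * ‖w‖ := by simp
  rw [n4, n2, Real.mul_rpow (by positivity) hwn.le, Real.mul_rpow (by positivity) hwn.le, Real.norm_of_nonneg (by positivity)]
  have hsplit : ‖w‖ ^ (-((d:ℝ)+a+1)/2) = ‖w‖ ^ (-(d:ℝ)/2) * ‖w‖ ^ (-((a+1)/2)) := by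
    rw [← Real.rpow_add hwn]; congr 1; ring
  have hexp : Real.exp (-(ρ/4) * sqd d X Y) = Real.exp (-(ρ/4) * ∑ i, (X.1 i - Y.1 i)^2) * (Real.exp (-(ρ/4) * (X.2^2+Y.2^2)) * Real.exp (ρ/2 * (X.2 * Y.2))) := by
    rw [← Real.exp_add, ← Real.exp_add]; congr 1; unfold sqd; ring
  rw [hsplit, hexp, C0]
  calc _ ≤ (4 * Real.pi) ^ (-(d:ℝ) / 2) * ‖w‖ ^ (-(d:ℝ) / 2) * Real.exp (-(ρ / 4) * ∑ i, (X.1 i - Y.1 i) ^ 2) *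
    (2 ^ (-((a + 1) / 2)) * ‖w‖ ^ (-((a + 1) / 2)) * 2 ^ (1 - (a + 1) / 2) * Real.exp (-(ρ / 4) * (X.2 ^ 2 + Y.2 ^ 2)) *
      ((Real.Gamma ((a+1)/2))⁻¹ * Real.exp (ρ/2 * (X.2 * Y.2)))) := by gcongr
    _ = _ := by ring

end

section

instance ωa_sf (d : ℕ) (a : ℝ) : SigmaFinite (ωa d a) := by
  unfold ωa
  have : SigmaFinite (((volume : Measure ℝ).restrict (Set.Ioi 0)).withDensity fun z => ENNReal.ofReal (z ^ a)) :=
    SigmaFinite.withDensity_ofReal _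
  infer_instance

lemma ωa_pos (d : ℕ) (a : ℝ) : ∀ᵐ X ∂(ωa d a), 0 < X.2 := by
  unfold ωa
  have h0 : ∀ᵐ z ∂(((volume : Measure ℝ).restrict (Set.Ioi 0)).withDensity fun z => ENNReal.ofReal (z ^ a)), 0 < z := by
    apply (withDensity_absolutelyContinuous _ _).ae_le
    exact ae_restrict_mem measurableSet_Ioi
  exact (Measure.quasiMeasurePreserving_snd).ae h0

lemma ωa_integral_mul (d : ℕ) (a : ℝ) (f : (Fin d → ℝ) → ℂ) (g : ℝ → ℂ) :
    ∫ X, f X.1 * g X.2 ∂(ωa d a) = (∫ x, f x) * ∫ z in Set.Ioi (0:ℝ), ((z^a : ℝ) : ℂ) * g z := by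
  unfold ωa
  rw [integral_prod_mul, integral_withDensity_eq_integral_toReal_smul₀ (by fun_prop) (by simp)]
  congr 1
  apply setIntegral_congr_fun measurableSet_Ioi
  intro z hz
  have hz' : 0 < z := hz
  simp only [ENNReal.toReal_ofReal (by positivity : 0 ≤ z^a), Complex.real_smul]

def gss (d : ℕ) (c : ℝ) (X : (Fin d → ℝ) × ℝ) : ℝ := Real.exp (-c * (∑ i, X.1 i ^ 2 + X.2 ^ 2))

lemma gss_integrable (d : ℕ) (a : ℝ) (ha : 0 ≤ a) (c : ℝ) (hc : 0 < c) : Integrable (gss d c) (ωa d a) := by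
  have h1 : Integrable (fun x : Fin d → ℝ => Real.exp (-c * ∑ i, x i ^ 2)) := by
    have := (GaussianFourier.integrable_cexp_neg_mul_sum_add (b := (c:ℂ)) (ι := Fin d) (by simpa using hc) 0).norm
    refine this.congr (ae_of_all _ fun x => ?_)
    simp only [Pi.zero_apply, zero_mul, Finset.sum_const_zero, add_zero]
    have : (-(c:ℂ) * ∑ i, (x i : ℂ)^2) = ((-c * ∑ i, x i^2 : ℝ) : ℂ) := by push_cast; rfl
    rw [this, ← ofReal_exp, Complex.norm_real, Real.norm_of_nonneg (Real.exp_pos _).le]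
  have h2 : Integrable (fun z : ℝ => Real.exp (-c * z^2)) (((volume : Measure ℝ).restrict (Set.Ioi 0)).withDensity fun z => ENNReal.ofReal (z ^ a)) := by
    rw [integrable_withDensity_iff_integrable_smul₀' (by fun_prop) (by simp)]
    refine (moment_integrable a c (by linarith) hc).congr ?_
    filter_upwards [ae_restrict_mem measurableSet_Ioi] with z hz
    have hz' : 0 < z := hz
    simp only [ENNReal.toReal_ofReal (by positivity : 0 ≤ z^a), smul_eq_mul]
  unfold ωa
  refine (h1.mul_prod h2).congr (ae_of_all _ fun X => ?_)
  simp only [gss]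
  rw [← Real.exp_add]; congr 1; ring

lemma kern_continuous (d : ℕ) (a : ℝ) (ha : 0 ≤ a) (w : ℂ) :
    Continuous (fun P : ((Fin d → ℝ) × ℝ) × ((Fin d → ℝ) × ℝ) => kern d a w P.1 P.2) := by
  have := hB_continuous ((a+1)/2) (by linarith)
  unfold kern kx kz
  fun_prop

lemma kern_measurable (d : ℕ) (a : ℝ) (ha : 0 ≤ a) :
    Measurable (fun P : ℂ × (((Fin d → ℝ) × ℝ) × ((Fin d → ℝ) × ℝ)) => kern d a P.1 P.2.1 P.2.2) := by
  have := (hB_continuous ((a+1)/2) (by linarith)).measurable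
  unfold kern kx kz
  refine Measurable.mul (Measurable.mul (by fun_prop) (by fun_prop)) (Measurable.mul (Measurable.mul (by fun_prop) (by fun_prop)) ?_)
  exact this.comp (by fun_prop)

lemma kern_continuousAt_w (d : ℕ) (a : ℝ) (ha : 0 ≤ a) (w : ℂ) (hw : w ∈ slitPlane) (X Y : (Fin d → ℝ) × ℝ) :
    ContinuousAt (fun w => kern d a w X Y) w := by
  have hBc := hB_continuous ((a+1)/2) (by linarith)
  have hw0 : w ≠ 0 := slitPlane_ne_zero hw
  unfold kern kx kz
  have hpi := Real.pi_pos
  have e1 : ∀ r : ℝ, 0 < r → (r:ℂ) * w ∈ slitPlane := by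
    intro r hr
    rw [mem_slitPlane_iff] at hw ⊢
    rw [re_ofReal_mul, im_ofReal_mul]
    rcases hw with h | h
    · left; positivity
    · right; positivity
  refine ContinuousAt.mul (ContinuousAt.mul ?_ ?_) (ContinuousAt.mul (ContinuousAt.mul (ContinuousAt.mul ?_ ?_) ?_) ?_)
  · refine ContinuousAt.cpow (by fun_prop) (by fun_prop) ?_
    have := e1 (4 * Real.pi) (by positivity); push_cast at this; exact this
  · refine ContinuousAt.cexp (ContinuousAt.div (by fun_prop) (by fun_prop) (by simpa using hw0))
  · refine ContinuousAt.cpow (by fun_prop) (by fun_prop) ?_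
    have := e1 2 (by positivity); push_cast at this; exact this
  · fun_prop
  · refine ContinuousAt.cexp (ContinuousAt.div (by fun_prop) (by fun_prop) (by simpa using hw0))
  · exact ContinuousAt.comp hBc.continuousAt (ContinuousAt.div (by fun_prop) (by fun_prop) (by simpa using hw0))

lemma kern_gauss (d : ℕ) (a : ℝ) (ha : 0 ≤ a) (w : ℂ) (ε ρ N : ℝ) (hε : 0 < ε) (hρ : 0 ≤ ρ) (hw : ε ≤ w.re) (hwρ : ρ ≤ w⁻¹.re/4)
    (X Y : (Fin d → ℝ) × ℝ) (hz : 0 ≤ X.2) (hζ : 0 ≤ Y.2) (hY : ∑ i, Y.1 i ^ 2 + Y.2 ^ 2 ≤ N) :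
    ‖kern d a w X Y‖ ≤ (C0 d a * ε ^ (-((d:ℝ)+a+1)/2) * Real.exp (ρ * N)) * gss d (ρ/2) X := by
  have hw0 : w ≠ 0 := by rintro rfl; simp at hw; linarith
  have hC := C0_pos d a ha
  have hnw : ε ≤ ‖w‖ := hw.trans (Complex.re_le_norm w)
  refine (kern_bound d a ha w hw0 (by linarith) X Y hz hζ).trans ?_
  have h1 : ‖w‖ ^ (-((d:ℝ)+a+1)/2) ≤ ε ^ (-((d:ℝ)+a+1)/2) :=
    Real.rpow_le_rpow_of_nonpos hε hnw (by have : (0:ℝ) ≤ d := by positivity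
                                           linarith)
  have h2 : (∑ i, X.1 i ^ 2 + X.2 ^ 2)/2 - N ≤ sqd d X Y := by
    have : (∑ i, X.1 i ^ 2)/2 - ∑ i, Y.1 i ^ 2 ≤ ∑ i, (X.1 i - Y.1 i)^2 := by
      rw [Finset.sum_div, ← Finset.sum_sub_distrib]
      refine Finset.sum_le_sum fun i _ => ?_
      nlinarith [sq_nonneg (X.1 i - 2 * Y.1 i)]
    unfold sqd
    nlinarith [sq_nonneg (X.2 - 2 * Y.2)]
  have h0 : 0 ≤ sqd d X Y := by unfold sqd; positivity
  have h3 : Real.exp (-(w⁻¹.re/4) * sqd d X Y) ≤ Real.exp (ρ * N) * gss d (ρ/2) X := by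
    rw [gss, ← Real.exp_add]
    apply Real.exp_le_exp.2
    nlinarith [mul_le_mul_of_nonneg_right hwρ h0, mul_le_mul_of_nonneg_left h2 hρ]
  calc _ ≤ C0 d a * ε ^ (-((d:ℝ)+a+1)/2) * (Real.exp (ρ * N) * gss d (ρ/2) X) := by gcongr
    _ = _ := by ring

end

section

lemma inv_re_pos (w : ℂ) (hw : 0 < w.re) : 0 < w⁻¹.re := by
  have : w ≠ 0 := by rintro rfl; simp at hw
  rw [Complex.inv_re]; exact div_pos hw (Complex.normSq_pos.2 this)

lemma kx_comp (d : ℕ) (w w' : ℂ) (hw : 0 < w.re) (hw' : 0 < w'.re) (y y' : Fin d → ℝ) :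
    ‖∫ x, kx d w x y * kx d w' x y'‖ = ‖kx d (w+w') y y'‖ := by
  have hw0 : w ≠ 0 := by rintro rfl; simp at hw
  have hw0' : w' ≠ 0 := by rintro rfl; simp at hw'
  have hs0 : w + w' ≠ 0 := by
    intro h; have := congrArg re h; simp at this; linarith
  set p := 1/(4*w) + 1/(4*w') with hp
  have hpr : 0 < p.re := by
    have e : p = ((1/4 : ℝ):ℂ) * w⁻¹ + ((1/4 : ℝ):ℂ) * w'⁻¹ := by rw [hp]; push_cast; field_simp
    rw [e, add_re, re_ofReal_mul, re_ofReal_mul]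
    have := inv_re_pos w hw
    have := inv_re_pos w' hw'
    positivity
  have hpe : p = (w+w')/(4*w*w') := by rw [hp]; field_simp; ring
  have hp0 : p ≠ 0 := by rintro h; rw [h] at hpr; simp at hpr
  let c : Fin d → ℂ := fun i => 2 * (y i/(4*w) + y' i/(4*w'))
  let K : ℂ := exp (-∑ i, ((y i:ℂ)^2/(4*w) + (y' i:ℂ)^2/(4*w')))
  have h1 : ∀ x, kx d w x y * kx d w' x y' = ((4 * (Real.pi : ℂ) * w) ^ (((-(d : ℝ) / 2 : ℝ)) : ℂ) * (4 * (Real.pi : ℂ) * w') ^ (((-(d : ℝ) / 2 : ℝ)) : ℂ) * K) *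
      exp (-p * ∑ i, (x i : ℂ)^2 + ∑ i, c i * x i) := by
    intro x
    unfold kx
    have : exp (-((∑ i, (x i - y i) ^ 2 : ℝ) : ℂ) / (4 * w)) * exp (-((∑ i, (x i - y' i) ^ 2 : ℝ) : ℂ) / (4 * w')) = K * exp (-p * ∑ i, (x i : ℂ)^2 + ∑ i, c i * x i) := by
      simp only [K]
      rw [← Complex.exp_add, ← Complex.exp_add]
      congr 1
      push_cast
      rw [neg_div, neg_div, Finset.sum_div, Finset.sum_div, neg_mul, Finset.mul_sum, ← sub_eq_zero]
      simp only [← Finset.sum_neg_distrib, ← Finset.sum_add_distrib, ← Finset.sum_sub_distrib]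
      refine Finset.sum_eq_zero fun i _ => ?_
      simp only [c, hp]
      field_simp
      ring
    linear_combination ((4 * (Real.pi : ℂ) * w) ^ (((-(d : ℝ) / 2 : ℝ)) : ℂ) * (4 * (Real.pi : ℂ) * w') ^ (((-(d : ℝ) / 2 : ℝ)) : ℂ)) * this
  simp_rw [h1]
  rw [integral_const_mul, GaussianFourier.integral_cexp_neg_mul_sum_add hpr]
  have hK : K * exp ((∑ i, c i ^ 2) / (4 * p)) = exp (-((∑ i, (y i - y' i) ^ 2 : ℝ) : ℂ) / (4 * (w+w'))) := by
    simp only [K]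
    rw [← Complex.exp_add]
    congr 1
    push_cast
    rw [neg_div, Finset.sum_div, Finset.sum_div, ← sub_eq_zero]
    simp only [← Finset.sum_neg_distrib, ← Finset.sum_add_distrib, ← Finset.sum_sub_distrib]
    refine Finset.sum_eq_zero fun i _ => ?_
    simp only [c, hpe]
    field_simp
    ring
  have e : (4 * (Real.pi : ℂ) * w) ^ (((-(d : ℝ) / 2 : ℝ)) : ℂ) * (4 * (Real.pi : ℂ) * w') ^ (((-(d : ℝ) / 2 : ℝ)) : ℂ) * K * ((Real.pi / p) ^ ((Fintype.card (Fin d) : ℂ)/2) * exp ((∑ i, c i ^ 2) / (4 * p)))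
    = (4 * (Real.pi : ℂ) * w) ^ (((-(d : ℝ) / 2 : ℝ)) : ℂ) * (4 * (Real.pi : ℂ) * w') ^ (((-(d : ℝ) / 2 : ℝ)) : ℂ) * (Real.pi / p) ^ (((d:ℝ)/2 : ℝ) : ℂ) * (K * exp ((∑ i, c i ^ 2) / (4 * p))) := by
    rw [Fintype.card_fin]; push_cast; ring
  rw [e, hK, kx, norm_mul, norm_mul (_ ^ _)]
  congr 1
  rw [norm_mul, norm_mul, Complex.norm_cpow_real, Complex.norm_cpow_real, Complex.norm_cpow_real, Complex.norm_cpow_real, hpe]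
  simp only [norm_mul, norm_div, Complex.norm_real, Complex.norm_ofNat]
  have hA : 0 < ‖w‖ := norm_pos_iff.2 hw0
  have hB' : 0 < ‖w'‖ := norm_pos_iff.2 hw0'
  have hD : 0 < ‖w+w'‖ := norm_pos_iff.2 hs0
  rw [Real.norm_of_nonneg Real.pi_pos.le]
  have hpi := Real.pi_pos
  generalize ‖w‖ = A at *
  generalize ‖w'‖ = B at *
  generalize ‖w+w'‖ = D at *
  rw [neg_div, Real.rpow_neg (by positivity), Real.rpow_neg (by positivity), Real.rpow_neg (by positivity), ← Real.inv_rpow (by positivity), ← Real.inv_rpow (by positivity), ← Real.inv_rpow (by positivity),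
    ← Real.mul_rpow (by positivity) (by positivity), ← Real.mul_rpow (by positivity) (by positivity)]
  congr 1
  field_simp

lemma kx_mass (d : ℕ) (ε : ℝ) (hε : 0 < ε) (y : Fin d → ℝ) :
    ‖∫ x, kx d ε x y‖ = 1 := by
  unfold kx
  rw [integral_const_mul]
  have h2 : ∫ x : Fin d → ℝ, exp (-((∑ i, (x i - y i) ^ 2 : ℝ) : ℂ) / (4 * ε)) = ∫ x : Fin d → ℝ, exp (-((∑ i, (x i) ^ 2 : ℝ) : ℂ) / (4 * ε)) := 
    integral_sub_right_eq_self (fun x : Fin d → ℝ => exp (-((∑ i, (x i) ^ 2 : ℝ) : ℂ) / (4 * ε))) y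
  have h3 := GaussianFourier.integral_cexp_neg_mul_sum_add (b := ((1/(4*ε) : ℝ):ℂ)) (ι := Fin d) (by rw [ofReal_re]; positivity) 0
  have h4 : ∀ x : Fin d → ℝ, exp (-((∑ i, (x i) ^ 2 : ℝ) : ℂ) / (4 * ε)) = exp (-((1/(4*ε) : ℝ):ℂ) * ∑ i, (x i : ℂ)^2 + ∑ i, (0 : Fin d → ℂ) i * x i) := by
    intro x; congr 1; simp; ring
  rw [h2]
  simp_rw [h4]
  rw [h3, norm_mul, norm_mul, Complex.norm_cpow_real, Fintype.card_fin]
  have : ((d:ℂ)/2) = ((d/2:ℝ):ℂ) := by push_cast; rfl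
  rw [this, Complex.norm_cpow_real]
  have hpi := Real.pi_pos
  simp only [norm_mul, norm_div, Complex.norm_real, Complex.norm_ofNat, Real.norm_of_nonneg hpi.le, Real.norm_of_nonneg hε.le, Real.norm_of_nonneg (by positivity : 0 ≤ 1/(4*ε))]
  rw [neg_div, Real.rpow_neg (by positivity), ← Real.inv_rpow (by positivity), ← mul_assoc, ← Real.mul_rpow (by positivity) (by positivity)]
  rw [show (4 * Real.pi * ε)⁻¹ * (Real.pi / (1/(4*ε))) = 1 by field_simp]
  simp

lemma kz_comp (a : ℝ) (ha : 0 ≤ a) (w w' : ℂ) (hw : 0 < w.re) (hw' : 0 < w'.re) (ζ ζ' : ℝ) :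
    ‖∫ z in Set.Ioi (0:ℝ), ((z^a : ℝ) : ℂ) * (kz a w z ζ * kz a w' z ζ')‖ = ‖kz a (w+w') ζ ζ'‖ := by
  have hw0 : w ≠ 0 := by rintro rfl; simp at hw
  have hw0' : w' ≠ 0 := by rintro rfl; simp at hw'
  have hs0 : w + w' ≠ 0 := by
    intro h; have := congrArg re h; simp at this; linarith
  set p := 1/(4*w) + 1/(4*w') with hp
  have hpr : 0 < p.re := by
    have e : p = ((1/4 : ℝ):ℂ) * w⁻¹ + ((1/4 : ℝ):ℂ) * w'⁻¹ := by rw [hp]; push_cast; field_simp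
    rw [e, add_re, re_ofReal_mul, re_ofReal_mul]
    have := inv_re_pos w hw
    have := inv_re_pos w' hw'
    positivity
  have hpe : p = (w+w')/(4*w*w') := by rw [hp]; field_simp; ring
  have hp0 : p ≠ 0 := by rintro h; rw [h] at hpr; simp at hpr
  set α : ℂ := (ζ:ℂ)^2/(16*w^2) with hα
  set β : ℂ := (ζ':ℂ)^2/(16*w'^2) with hβ
  set k : ℂ := (((2:ℝ) ^ (1 - (a+1)/2) : ℝ) : ℂ)
  let K : ℂ := exp (-(ζ:ℂ)^2/(4*w)) * exp (-(ζ':ℂ)^2/(4*w'))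
  have h1 : ∀ z : ℝ, ((z^a : ℝ) : ℂ) * (kz a w z ζ * kz a w' z ζ') =
     ((2 * w) ^ ((-((a+1)/2) : ℝ) : ℂ) * (2 * w') ^ ((-((a+1)/2) : ℝ) : ℂ) * (k * k) * K) *
      (((z ^ a : ℝ) : ℂ) * exp (-p * z^2) * (hB ((a+1)/2) (α * z^2) * hB ((a+1)/2) (β * z^2))) := by
    intro z
    unfold kz
    have : exp (-((z ^ 2 + ζ ^ 2 : ℝ) : ℂ) / (4 * w)) * exp (-((z ^ 2 + ζ' ^ 2 : ℝ) : ℂ) / (4 * w')) = K * exp (-p * z^2) := by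
      simp only [K]
      rw [← Complex.exp_add, ← Complex.exp_add, ← Complex.exp_add]
      congr 1
      push_cast
      rw [hp]; field_simp; ring
    rw [show ((z * ζ : ℝ) : ℂ)^2 / (16 * w ^ 2) = α * z^2 by rw [hα]; push_cast; ring,
      show ((z * ζ' : ℝ) : ℂ)^2 / (16 * w' ^ 2) = β * z^2 by rw [hβ]; push_cast; ring]
    linear_combination ((2 * w) ^ ((-((a+1)/2) : ℝ) : ℂ) * (2 * w') ^ ((-((a+1)/2) : ℝ) : ℂ) * (k * k)) * ((z ^ a : ℝ) : ℂ) * (hB ((a+1)/2) (α * z^2) * hB ((a+1)/2) (β * z^2)) * this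
  simp_rw [h1]
  rw [integral_const_mul, weber a ha p α β hpr]
  have hK : K * (exp (α/p) * exp (β/p)) = exp (-((ζ ^ 2 + ζ' ^ 2 : ℝ) : ℂ) / (4 * (w + w'))) := by
    simp only [K]
    rw [← Complex.exp_add, ← Complex.exp_add, ← Complex.exp_add]
    congr 1
    push_cast
    rw [hα, hβ, hpe]; field_simp; ring
  have hAB : α/p * (β/p) = ((ζ * ζ' : ℝ) : ℂ)^2 / (16 * (w+w') ^ 2) := by
    rw [hα, hβ, hpe]; push_cast; field_simp; ring
  have e : (2 * w) ^ ((-((a+1)/2) : ℝ) : ℂ) * (2 * w') ^ ((-((a+1)/2) : ℝ) : ℂ) * (k * k) * K * (1/2 * p ^ (-(((a+1)/2 : ℝ):ℂ)) * (exp (α/p) * exp (β/p) * hB ((a+1)/2) (α/p * (β/p))))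
    = ((2 * w) ^ ((-((a+1)/2) : ℝ) : ℂ) * (2 * w') ^ ((-((a+1)/2) : ℝ) : ℂ) * (k * (1/2) * p ^ ((-((a+1)/2 : ℝ) : ℝ):ℂ)) * k) * (K * (exp (α/p) * exp (β/p))) * hB ((a+1)/2) (α/p * (β/p)) := by
    push_cast; ring
  rw [e, hK, hAB, kz, norm_mul, norm_mul, norm_mul, norm_mul (_ * _) (hB _ _), norm_mul (_ * _) (exp _), norm_mul ((2 * (w+w')) ^ _)]
  congr 3
  rw [norm_mul, norm_mul, norm_mul, Complex.norm_cpow_real, Complex.norm_cpow_real, Complex.norm_cpow_real, Complex.norm_cpow_real, hpe]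
  simp only [norm_mul, norm_div, Complex.norm_real, Complex.norm_ofNat, k, norm_one]
  have hA : 0 < ‖w‖ := norm_pos_iff.2 hw0
  have hB' : 0 < ‖w'‖ := norm_pos_iff.2 hw0'
  have hD : 0 < ‖w+w'‖ := norm_pos_iff.2 hs0
  generalize ‖w‖ = A at *
  generalize ‖w'‖ = B at *
  generalize ‖w+w'‖ = D at *
  have h2 : (2:ℝ) ^ (1 - (a+1)/2) = 2 * (2:ℝ) ^ (-((a+1)/2)) := by
    rw [sub_eq_add_neg, Real.rpow_add (by norm_num), Real.rpow_one]
  rw [Real.norm_of_nonneg (by positivity), h2]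
  have : (2 * A) ^ (-((a+1)/2)) * (2 * B) ^ (-((a+1)/2)) * (2:ℝ) ^ (-((a+1)/2)) * (D/(4*A*B)) ^ (-((a+1)/2)) = (2*D) ^ (-((a+1)/2)) := by
    rw [← Real.mul_rpow (by positivity) (by positivity), ← Real.mul_rpow (by positivity) (by positivity), ← Real.mul_rpow (by positivity) (by positivity)]
    congr 1; field_simp; norm_num
  rw [← this]; ring

lemma kz_mass (a : ℝ) (ha : 0 ≤ a) (ε : ℝ) (hε : 0 < ε) (ζ : ℝ) :
    ‖∫ z in Set.Ioi (0:ℝ), ((z^a : ℝ) : ℂ) * kz a ε z ζ‖ = 1 := by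
  have hε' : (ε:ℂ) ≠ 0 := by exact_mod_cast hε.ne'
  have hG : 0 < Real.Gamma ((a+1)/2) := Real.Gamma_pos_of_pos (by linarith)
  have hG' : ((Real.Gamma ((a+1)/2) : ℝ) : ℂ) ≠ 0 := by exact_mod_cast hG.ne'
  set p : ℂ := ((1/(4*ε) : ℝ) : ℂ) with hp
  have hpr : 0 < p.re := by rw [hp, ofReal_re]; positivity
  set α : ℂ := (ζ:ℂ)^2/(16*(ε:ℂ)^2) with hα
  set k : ℂ := (((2:ℝ) ^ (1 - (a+1)/2) : ℝ) : ℂ)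
  have h1 : ∀ z : ℝ, ((z^a : ℝ) : ℂ) * kz a ε z ζ =
     ((2 * (ε:ℂ)) ^ ((-((a+1)/2) : ℝ) : ℂ) * k * exp (-(ζ:ℂ)^2/(4*ε)) * (Real.Gamma ((a+1)/2) : ℝ)) *
      (((z ^ a : ℝ) : ℂ) * exp (-p * z^2) * (hB ((a+1)/2) (α * z^2) * hB ((a+1)/2) (0 * z^2))) := by
    intro z
    unfold kz
    have : exp (-((z ^ 2 + ζ ^ 2 : ℝ) : ℂ) / (4 * ε)) = exp (-(ζ:ℂ)^2/(4*ε)) * exp (-p * z^2) := by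
      rw [← Complex.exp_add]
      congr 1
      push_cast
      rw [hp]; push_cast; field_simp; ring
    rw [show ((z * ζ : ℝ) : ℂ)^2 / (16 * (ε:ℂ) ^ 2) = α * z^2 by rw [hα]; push_cast; ring, zero_mul, hB_zero, this]
    have hGG := mul_inv_cancel₀ hG'
    rw [ofReal_inv]
    linear_combination (-(((z^a : ℝ) : ℂ) * (2 * (ε:ℂ)) ^ ((-((a+1)/2) : ℝ) : ℂ) * k * exp (-(ζ:ℂ)^2/(4*ε)) * exp (-p * z^2) * hB ((a+1)/2) (α * z^2))) * hGG
  simp_rw [h1]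
  rw [integral_const_mul, weber a ha p α 0 hpr, zero_div, mul_zero, hB_zero, Complex.exp_zero]
  have hK : exp (-(ζ:ℂ)^2/(4*ε)) * exp (α/p) = 1 := by
    rw [← Complex.exp_add, hα, hp]
    have : -(ζ:ℂ)^2/(4*ε) + (ζ:ℂ)^2/(16*(ε:ℂ)^2)/((1/(4*ε) : ℝ) : ℂ) = 0 := by
      push_cast; field_simp; ring
    rw [this, Complex.exp_zero]
  have e : ((2 * (ε:ℂ)) ^ ((-((a+1)/2) : ℝ) : ℂ) * k * exp (-(ζ:ℂ)^2/(4*ε)) * (Real.Gamma ((a+1)/2) : ℝ)) * (1/2 * p ^ (-(((a+1)/2 : ℝ):ℂ)) * (exp (α/p) * 1 * ((Real.Gamma ((a+1)/2))⁻¹ : ℝ)))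
   = ((2 * (ε:ℂ)) ^ ((-((a+1)/2) : ℝ) : ℂ) * k * (1/2) * p ^ ((-((a+1)/2 : ℝ) : ℝ):ℂ)) * (exp (-(ζ:ℂ)^2/(4*ε)) * exp (α/p)) := by
    have hGG := mul_inv_cancel₀ hG'
    rw [ofReal_inv, ofReal_neg]
    linear_combination ((2 * (ε:ℂ)) ^ (-(((a+1)/2 : ℝ) : ℂ)) * k * (1/2) * p ^ (-(((a+1)/2 : ℝ) : ℂ)) * (exp (-(ζ:ℂ)^2/(4*ε)) * exp (α/p))) * hGG
  rw [e, hK, mul_one, norm_mul, norm_mul, norm_mul, Complex.norm_cpow_real, Complex.norm_cpow_real]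
  simp only [norm_mul, norm_div, Complex.norm_real, Complex.norm_ofNat, k, norm_one, hp]
  have h2 : (2:ℝ) ^ (1 - (a+1)/2) = 2 * (2:ℝ) ^ (-((a+1)/2)) := by
    rw [sub_eq_add_neg, Real.rpow_add (by norm_num), Real.rpow_one]
  rw [Real.norm_of_nonneg (by positivity : (0:ℝ) ≤ 2 ^ (1 - (a+1)/2)), Real.norm_of_nonneg hε.le, Real.norm_ofNat, h2]
  have : (2 * ε) ^ (-((a+1)/2)) * (2:ℝ) ^ (-((a+1)/2)) * (1/(4*ε)) ^ (-((a+1)/2)) = 1 := by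
    rw [← Real.mul_rpow (by positivity) (by positivity), ← Real.mul_rpow (by positivity) (by positivity)]
    rw [show 2 * ε * 2 * (1/(4*ε)) = 1 by field_simp; norm_num, Real.one_rpow]
  linear_combination this

lemma kern_comp (d : ℕ) (a : ℝ) (ha : 0 ≤ a) (w w' : ℂ) (hw : 0 < w.re) (hw' : 0 < w'.re) (Y Y' : (Fin d → ℝ) × ℝ) :
    ‖∫ X, kern d a w X Y * kern d a w' X Y' ∂(ωa d a)‖ = ‖kern d a (w+w') Y Y'‖ := by
  have : ∀ X : (Fin d → ℝ) × ℝ, kern d a w X Y * kern d a w' X Y' = (fun x => kx d w x Y.1 * kx d w' x Y'.1) X.1 * (fun z => kz a w z Y.2 * kz a w' z Y'.2) X.2 := by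
    intro X; simp only [kern]; ring
  simp_rw [this]
  rw [ωa_integral_mul d a (fun x => kx d w x Y.1 * kx d w' x Y'.1) (fun z => kz a w z Y.2 * kz a w' z Y'.2), norm_mul, kx_comp d w w' hw hw', kz_comp a ha w w' hw hw', kern, norm_mul]

lemma kern_real_nonneg (d : ℕ) (a : ℝ) (ha : 0 ≤ a) (ε : ℝ) (hε : 0 < ε) (X Y : (Fin d → ℝ) × ℝ) :
    ((‖kern d a ε X Y‖ : ℝ) : ℂ) = kern d a ε X Y := by
  suffices h : ∃ y : ℝ, 0 ≤ y ∧ kern d a ε X Y = y by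
    obtain ⟨y, hy, h⟩ := h
    rw [h, Complex.norm_real, Real.norm_of_nonneg hy]
  obtain ⟨b, hb, hb'⟩ := hB_ofReal_nonneg ((a+1)/2) (by linarith) ((X.2*Y.2)^2/(16*ε^2)) (by positivity)
  have hpi := Real.pi_pos
  refine ⟨((4 * Real.pi * ε) ^ (-(d : ℝ) / 2 : ℝ) * Real.exp (-(∑ i, (X.1 i - Y.1 i) ^ 2 : ℝ) / (4 * ε))) * ((2 * ε) ^ (-((a+1)/2) : ℝ) * ((2:ℝ) ^ (1 - (a+1)/2)) * Real.exp (-(X.2^2+Y.2^2)/(4*ε)) * b), by positivity, ?_⟩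
  unfold kern kx kz
  push_cast at hb'
  have e1 : (((4 * Real.pi * ε) ^ (-(d : ℝ) / 2 : ℝ) : ℝ) : ℂ) = (4 * (Real.pi:ℂ) * ε) ^ (((-(d : ℝ) / 2 : ℝ)) : ℂ) := by
    rw [Complex.ofReal_cpow (by positivity)]; push_cast; rfl
  have e2 : (((2 * ε) ^ (-((a+1)/2) : ℝ) : ℝ) : ℂ) = (2 * (ε:ℂ)) ^ ((-((a+1)/2) : ℝ) : ℂ) := by
    rw [Complex.ofReal_cpow (by positivity)]; push_cast; rfl
  rw [ofReal_mul, ofReal_mul, ofReal_mul, ofReal_mul, ofReal_mul, ofReal_mul, ← hb', e1, e2, ofReal_exp, ofReal_exp]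
  simp only [ofReal_mul, ofReal_div, ofReal_neg, ofReal_ofNat]

lemma kern_integrable (d : ℕ) (a : ℝ) (ha : 0 ≤ a) (w : ℂ) (hw : 0 < w.re) (Y : (Fin d → ℝ) × ℝ) (hζ : 0 ≤ Y.2) :
    Integrable (fun X => kern d a w X Y) (ωa d a) := by
  have h1 := inv_re_pos w hw
  refine Integrable.mono' ((gss_integrable d a ha (w⁻¹.re/4/2) (by positivity)).const_mul (C0 d a * w.re ^ (-((d:ℝ)+a+1)/2) * Real.exp (w⁻¹.re/4 * (∑ i, Y.1 i ^ 2 + Y.2 ^ 2))))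
    ((kern_continuous d a ha w).comp (by fun_prop : Continuous fun X => (X, Y))).aestronglyMeasurable ?_
  filter_upwards [ωa_pos d a] with X hX
  exact kern_gauss d a ha w w.re (w⁻¹.re/4) _ hw (by positivity) le_rfl le_rfl X Y hX.le hζ le_rfl

lemma kern_mass (d : ℕ) (a : ℝ) (ha : 0 ≤ a) (ε : ℝ) (hε : 0 < ε) (Y : (Fin d → ℝ) × ℝ) (hζ : 0 ≤ Y.2) :
    ∫⁻ X, ‖kern d a ε X Y‖ₑ ∂(ωa d a) = 1 := by
  have hi := kern_integrable d a ha ε (by simpa using hε) Y hζ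
  rw [← ofReal_integral_norm_eq_lintegral_enorm hi, ← ENNReal.ofReal_one]
  congr 1
  have h0 : 0 ≤ ∫ X, ‖kern d a ε X Y‖ ∂(ωa d a) := integral_nonneg fun _ => norm_nonneg _
  rw [← Real.norm_of_nonneg h0, ← Complex.norm_real, ← integral_complex_ofReal]
  simp_rw [kern_real_nonneg d a ha ε hε]
  have := ωa_integral_mul d a (fun x => kx d ε x Y.1) (fun z => kz a ε z Y.2)
  simp only [kern]
  rw [this, norm_mul, kx_mass d ε hε, kz_mass a ha ε hε, one_mul]

end

section

section abs
variable {α β γ : Type*} [MeasurableSpace α] [MeasurableSpace β] [MeasurableSpace γ]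

lemma fub_int (ν : Measure α) [SigmaFinite ν] (μ : Measure β) [IsFiniteMeasure μ] (μ' : Measure γ) [IsFiniteMeasure μ']
    (g : α → ℝ) (hg : Integrable (fun X => g X ^ 2) ν)
    (k : α → β → ℂ) (k' : α → γ → ℂ) (hk : Measurable (Function.uncurry k)) (hk' : Measurable (Function.uncurry k'))
    (hb : ∀ X Y, ‖k X Y‖ ≤ g X) (hb' : ∀ X Y, ‖k' X Y‖ ≤ g X) :
    Integrable (Function.uncurry fun X (P : β × γ) => k X P.1 * k' X P.2) (ν.prod (μ.prod μ')) := by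
  refine Integrable.mono' (g := fun z => g z.1 ^ 2 * (1:ℝ)) (hg.mul_prod (integrable_const (1:ℝ))) ?_ ?_
  · apply Measurable.aestronglyMeasurable
    exact (hk.comp (by fun_prop : Measurable fun z : α × (β × γ) => (z.1, z.2.1))).mul
      (hk'.comp (by fun_prop : Measurable fun z : α × (β × γ) => (z.1, z.2.2)))
  · refine ae_of_all _ fun z => ?_
    simp only [Function.uncurry, norm_mul, mul_one, sq]
    exact mul_le_mul (hb _ _) (hb' _ _) (norm_nonneg _) ((norm_nonneg _).trans (hb z.1 z.2.1))

lemma fub (ν : Measure α) [SigmaFinite ν] (μ : Measure β) [IsFiniteMeasure μ] (μ' : Measure γ) [IsFiniteMeasure μ']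
    (g : α → ℝ) (hg : Integrable (fun X => g X ^ 2) ν)
    (k : α → β → ℂ) (k' : α → γ → ℂ) (hk : Measurable (Function.uncurry k)) (hk' : Measurable (Function.uncurry k'))
    (hb : ∀ X Y, ‖k X Y‖ ≤ g X) (hb' : ∀ X Y, ‖k' X Y‖ ≤ g X) :
    ∫ X, (∫ Y, k X Y ∂μ) * (∫ Y, k' X Y ∂μ') ∂ν = ∫ P, (∫ X, k X P.1 * k' X P.2 ∂ν) ∂(μ.prod μ') := by
  rw [← integral_integral_swap (fub_int ν μ μ' g hg k k' hk hk' hb hb')]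
  congr 1; ext X
  exact (integral_prod_mul (fun Y => k X Y) (fun Y => k' X Y)).symm

lemma u_meas (μ : Measure β) [SFinite μ] (k : α → β → ℂ) (hk : Measurable (Function.uncurry k)) :
    Measurable fun X => ∫ Y, k X Y ∂μ :=
  (hk.stronglyMeasurable.integral_prod_right (ν := μ)).measurable

lemma u_bound (μ : Measure β) [IsFiniteMeasure μ] (g : α → ℝ) (k : α → β → ℂ) (hb : ∀ X Y, ‖k X Y‖ ≤ g X) (X : α) :
    ‖∫ Y, k X Y ∂μ‖ ≤ g X * μ.real Set.univ :=
  norm_integral_le_of_norm_le_const (ae_of_all _ fun Y => hb X Y)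

lemma lint_sq (ν : Measure α) (u : α → ℂ) :
    ∫⁻ X, ‖u X‖ₑ^2 ∂ν = ∫⁻ X, ENNReal.ofReal (‖u X‖^2) ∂ν := by
  congr 1; ext X
  rw [← ofReal_norm_eq_enorm, ENNReal.ofReal_pow (norm_nonneg _)]

lemma lint_sq_eq (ν : Measure α) (u : α → ℂ) (hu : Integrable (fun X => ‖u X‖^2) ν) :
    ∫⁻ X, ‖u X‖ₑ^2 ∂ν = ‖∫ X, u X * conj (u X) ∂ν‖ₑ := by
  rw [lint_sq, ← ofReal_integral_eq_lintegral_ofReal hu (ae_of_all _ fun _ => by positivity)]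
  have : ∀ X, u X * conj (u X) = ((‖u X‖^2 : ℝ) : ℂ) := fun X => by
    rw [Complex.mul_conj, Complex.normSq_eq_norm_sq]
  simp_rw [this]
  rw [integral_complex_ofReal, ← ofReal_norm_eq_enorm, Complex.norm_real, Real.norm_of_nonneg (integral_nonneg fun _ => by positivity)]

lemma u_sq_int (ν : Measure α) (μ : Measure β) [IsFiniteMeasure μ]
    (g : α → ℝ) (hg : Integrable (fun X => g X ^ 2) ν)
    (k : α → β → ℂ) (hk : Measurable (Function.uncurry k))
    (hb : ∀ X Y, ‖k X Y‖ ≤ g X) : Integrable (fun X => ‖∫ Y, k X Y ∂μ‖^2) ν := by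
  refine Integrable.mono' (hg.mul_const ((μ.real Set.univ)^2)) ((u_meas μ k hk).norm.pow_const 2).aestronglyMeasurable (ae_of_all _ fun X => ?_)
  rw [Real.norm_of_nonneg (by positivity), ← mul_pow]
  exact pow_le_pow_left₀ (norm_nonneg _) (u_bound μ g k hb X) 2

lemma TTs (ν : Measure α) [SigmaFinite ν] (μ : Measure β) [IsFiniteMeasure μ]
    (g : α → ℝ) (hg : Integrable (fun X => g X ^ 2) ν)
    (k : α → β → ℂ) (hk : Measurable (Function.uncurry k))
    (hb : ∀ X Y, ‖k X Y‖ ≤ g X) :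
    ∫⁻ X, ‖∫ Y, k X Y ∂μ‖ₑ^2 ∂ν ≤ ∫⁻ P, ‖∫ X, k X P.1 * conj (k X P.2) ∂ν‖ₑ ∂(μ.prod μ) := by
  rw [lint_sq_eq ν _ (u_sq_int ν μ g hg k hk hb)]
  have : ∀ X, conj (∫ Y, k X Y ∂μ) = ∫ Y, conj (k X Y) ∂μ := fun X => integral_conj.symm
  simp_rw [this]
  rw [fub ν μ μ g hg k (fun X Y => conj (k X Y)) hk (Complex.continuous_conj.measurable.comp hk) hb (fun X Y => by simpa using hb X Y)]
  exact enorm_integral_le_lintegral_enorm _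

/-- L2 bound via Schur. -/
lemma L2b (ν : Measure α) [SigmaFinite ν] (μ : Measure β) [IsFiniteMeasure μ]
    (g : α → ℝ) (hg : Integrable (fun X => g X ^ 2) ν)
    (k : α → β → ℂ) (hk : Measurable (Function.uncurry k))
    (hb : ∀ X Y, ‖k X Y‖ ≤ g X) (m : β → β → ℝ≥0∞) (hm : Measurable (Function.uncurry m))
    (hm1 : ∀ Y, ∫⁻ Y', m Y Y' ∂μ ≤ 1) (hm2 : ∀ Y', ∫⁻ Y, m Y Y' ∂μ ≤ 1)
    (hM : ∀ Y Y', ‖∫ X, k X Y * conj (k X Y') ∂ν‖ₑ ≤ m Y Y')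
    (G : β → ℂ) (hG : Measurable G) (K : ℝ) (hK : ∀ Y, ‖G Y‖ ≤ K) :
    ∫⁻ X, ‖∫ Y, k X Y * G Y ∂μ‖ₑ^2 ∂ν ≤ ∫⁻ Y, ‖G Y‖ₑ^2 ∂μ := by
  have hGe : Measurable fun Y => ‖G Y‖ₑ := hG.enorm
  refine (TTs ν μ (fun X => g X * K) ?_ (fun X Y => k X Y * G Y) (hk.mul (hG.comp measurable_snd)) ?_).trans ?_
  · simp_rw [mul_pow]; exact hg.mul_const _
  · intro X Y
    rw [norm_mul]
    exact mul_le_mul (hb X Y) (hK Y) (norm_nonneg _) ((norm_nonneg _).trans (hb X Y))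
  calc _ ≤ ∫⁻ P : β × β, (m P.1 P.2 * ‖G P.1‖ₑ^2 + m P.1 P.2 * ‖G P.2‖ₑ^2)/2 ∂(μ.prod μ) := by
        refine lintegral_mono fun P => ?_
        have : ∀ X, k X P.1 * G P.1 * conj (k X P.2 * G P.2) = (k X P.1 * conj (k X P.2)) * (G P.1 * conj (G P.2)) := by
          intro X; rw [map_mul]; ring
        simp_rw [this]
        rw [integral_mul_const, enorm_mul, enorm_mul]
        have hc : ‖conj (G P.2)‖ₑ = ‖G P.2‖ₑ := by
          rw [← ofReal_norm_eq_enorm, ← ofReal_norm_eq_enorm, Complex.norm_conj]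
        rw [hc]
        refine (mul_le_mul_left (hM P.1 P.2) _).trans ?_
        have hAM : ‖G P.1‖ₑ * ‖G P.2‖ₑ ≤ (‖G P.1‖ₑ^2 + ‖G P.2‖ₑ^2)/2 := by
          rw [ENNReal.le_div_iff_mul_le (by simp) (by simp)]
          simp only [enorm_eq_nnnorm]
          norm_cast
          rw [← NNReal.coe_le_coe]; push_cast
          nlinarith [sq_nonneg ((‖G P.1‖:ℝ) - ‖G P.2‖)]
        refine (mul_le_mul_right hAM _).trans ?_
        rw [← mul_add, mul_div_assoc]
    _ = (∫⁻ Y, ∫⁻ Y', m Y Y' * ‖G Y‖ₑ^2 ∂μ ∂μ + ∫⁻ Y', ∫⁻ Y, m Y Y' * ‖G Y'‖ₑ^2 ∂μ ∂μ)/2 := by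
        have hm' : Measurable fun P : β × β => m P.1 P.2 := hm
        have h1 : Measurable fun P : β × β => m P.1 P.2 * ‖G P.1‖ₑ^2 := by fun_prop
        have h2 : Measurable fun P : β × β => m P.1 P.2 * ‖G P.2‖ₑ^2 := by fun_prop
        have h12 : Measurable fun P : β × β => m P.1 P.2 * ‖G P.1‖ₑ^2 + m P.1 P.2 * ‖G P.2‖ₑ^2 := h1.add h2
        simp_rw [div_eq_mul_inv]
        rw [lintegral_mul_const _ h12, lintegral_add_left h1, lintegral_prod _ h1.aemeasurable, lintegral_prod_symm _ h2.aemeasurable]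
    _ ≤ (∫⁻ Y, ‖G Y‖ₑ^2 ∂μ + ∫⁻ Y, ‖G Y‖ₑ^2 ∂μ)/2 := by
        gcongr with Y Y'
        · have hmY : Measurable fun Y' => m Y Y' := hm.comp measurable_prodMk_left
          rw [lintegral_mul_const _ hmY]
          exact (mul_le_mul_left (hm1 Y) _).trans (one_mul _).le
        · have hmY : Measurable fun Y => m Y Y' := hm.comp measurable_prodMk_right
          rw [lintegral_mul_const _ hmY]
          exact (mul_le_mul_left (hm2 Y') _).trans (one_mul _).le
    _ = _ := by rw [← two_mul, mul_comm, mul_div_assoc, ENNReal.div_self (by simp) (by simp), mul_one]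

/-- bilinear L2 bound. -/
lemma bilL2 (ν : Measure α) [SigmaFinite ν] (μ : Measure β) [IsFiniteMeasure μ]
    (g : α → ℝ) (hg : Integrable (fun X => g X ^ 2) ν)
    (k k' : α → β → ℂ) (hk : Measurable (Function.uncurry k)) (hk' : Measurable (Function.uncurry k'))
    (hb : ∀ X Y, ‖k X Y‖ ≤ g X) (hb' : ∀ X Y, ‖k' X Y‖ ≤ g X) (m : β → β → ℝ≥0∞) (hm : Measurable (Function.uncurry m))
    (hm1 : ∀ Y, ∫⁻ Y', m Y Y' ∂μ ≤ 1) (hm2 : ∀ Y', ∫⁻ Y, m Y Y' ∂μ ≤ 1)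
    (hM : ∀ Y Y', ‖∫ X, k X Y * conj (k X Y') ∂ν‖ₑ ≤ m Y Y')
    (hM' : ∀ Y Y', ‖∫ X, k' X Y * conj (k' X Y') ∂ν‖ₑ ≤ m Y Y')
    (G H : β → ℂ) (hG : Measurable G) (hH : Measurable H) (K : ℝ) (hK : ∀ Y, ‖G Y‖ ≤ K) (hK' : ∀ Y, ‖H Y‖ ≤ K) :
    ‖∫ P : β × β, (∫ X, k X P.1 * k' X P.2 ∂ν) * (G P.1 * H P.2) ∂(μ.prod μ)‖ₑ ≤ (∫⁻ Y, ‖G Y‖ₑ^2 ∂μ) ^ (1/2:ℝ) * (∫⁻ Y, ‖H Y‖ₑ^2 ∂μ) ^ (1/2:ℝ) := by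
  have e := fub ν μ μ (fun X => g X * K) (by simp_rw [mul_pow]; exact hg.mul_const _) (fun X Y => k X Y * G Y) (fun X Y => k' X Y * H Y)
    (hk.mul (hG.comp measurable_snd)) (hk'.mul (hH.comp measurable_snd))
    (fun X Y => by rw [norm_mul]; exact mul_le_mul (hb X Y) (hK Y) (norm_nonneg _) ((norm_nonneg _).trans (hb X Y)))
    (fun X Y => by rw [norm_mul]; exact mul_le_mul (hb' X Y) (hK' Y) (norm_nonneg _) ((norm_nonneg _).trans (hb' X Y)))
  have e2 : ∀ P : β × β, (∫ X, k X P.1 * k' X P.2 ∂ν) * (G P.1 * H P.2) = ∫ X, (k X P.1 * G P.1) * (k' X P.2 * H P.2) ∂ν := by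
    intro P
    rw [← integral_mul_const]; congr 1; ext X; ring
  simp_rw [e2]
  rw [← e]
  refine (enorm_integral_le_lintegral_enorm _).trans ?_
  simp_rw [enorm_mul]
  have h1 := u_meas μ (fun X Y => k X Y * G Y) (hk.mul (hG.comp measurable_snd))
  have h2 := u_meas μ (fun X Y => k' X Y * H Y) (hk'.mul (hH.comp measurable_snd))
  have hol := ENNReal.lintegral_mul_le_Lp_mul_Lq ν (p := 2) (q := 2) (by constructor <;> norm_num) h1.enorm.aemeasurable h2.enorm.aemeasurable
  refine hol.trans ?_
  simp only [ENNReal.rpow_ofNat]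
  gcongr
  · exact L2b ν μ g hg k hk hb m hm hm1 hm2 hM G hG K hK
  · exact L2b ν μ g hg k' hk' hb' m hm hm1 hm2 hM' H hH K hK'

end abs
end

section

def gz (p : ℝ) (g z : ℂ) : ℂ := g * ((‖g‖ : ℂ) ^ ((p:ℂ) * (1 + z) / 2 - 1))

lemma gz_norm (p : ℝ) (hp : 0 < p) (g z : ℂ) (hz : -1 < z.re) : ‖gz p g z‖ = ‖g‖ ^ (p * (1 + z.re)/2) := by
  unfold gz
  by_cases h : g = 0
  · subst h
    have : p * (1 + z.re) / 2 ≠ 0 := by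
      have : 0 < 1 + z.re := by linarith
      positivity
    simp [Real.zero_rpow this]
  · have h' : 0 < ‖g‖ := norm_pos_iff.2 h
    rw [norm_mul, Complex.norm_cpow_eq_rpow_re_of_pos h']
    have : ((p:ℂ) * (1 + z) / 2 - 1).re = p * (1 + z.re)/2 - 1 := by
      have : ((p:ℂ) * (1 + z) / 2 - 1) = ((p/2:ℝ):ℂ) * (1+z) - 1 := by push_cast; ring
      rw [this]; simp [Complex.re_ofReal_mul]; ring
    rw [this]
    nth_rw 1 [← Real.rpow_one ‖g‖]
    rw [← Real.rpow_add h']; congr 1; ring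

lemma gz_diff (p : ℝ) (g : ℂ) : Differentiable ℂ (gz p g) := by
  unfold gz
  by_cases h : g = 0
  · subst h; simp
  · have h' : (‖g‖:ℂ) ≠ 0 := by simpa using h
    refine (differentiable_const _).mul ?_
    exact Differentiable.const_cpow (by fun_prop) (Or.inl h')

lemma gz_meas {β : Type*} [MeasurableSpace β] (p : ℝ) (z : ℂ) (G : β → ℂ) (hG : Measurable G) : Measurable fun Y => gz p (G Y) z := by
  unfold gz
  refine hG.mul ?_
  exact (Complex.measurable_ofReal.comp hG.norm).pow_const _

lemma gz_bound (p : ℝ) (hp : 0 < p) (g z : ℂ) (hz : -1/2 < z.re) (hz2 : z.re < 2) (K : ℝ) (hK1 : 1 ≤ K) (hK : ‖g‖ ≤ K) : ‖gz p g z‖ ≤ K ^ (3*p/2) := by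
  rw [gz_norm p hp g z (by linarith)]
  have h0 : 0 ≤ p * (1 + z.re)/2 := by
    have : 0 < 1 + z.re := by linarith
    positivity
  refine (Real.rpow_le_rpow (norm_nonneg _) hK h0).trans (Real.rpow_le_rpow_of_exponent_le hK1 ?_)
  nlinarith

lemma interp {β : Type*} [MeasurableSpace β] (μ : Measure β) [IsFiniteMeasure μ] (M : β × β → ℂ) (hM : Measurable M)
    (A : ℝ) (hA : 0 ≤ A) (hMA : ∀ P, ‖M P‖ ≤ A)
    (h2 : ∀ G H : β → ℂ, Measurable G → Measurable H → ∀ K : ℝ, (∀ Y, ‖G Y‖ ≤ K) → (∀ Y, ‖H Y‖ ≤ K) →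
      ‖∫ P : β × β, M P * (G P.1 * H P.2) ∂(μ.prod μ)‖ₑ ≤ (∫⁻ Y, ‖G Y‖ₑ^2 ∂μ) ^ (1/2:ℝ) * (∫⁻ Y, ‖H Y‖ₑ^2 ∂μ) ^ (1/2:ℝ))
    (p : ℝ) (hp1 : 1 ≤ p) (hp2 : p ≤ 2)
    (G H : β → ℂ) (hG : Measurable G) (hH : Measurable H) (K : ℝ) (hK1 : 1 ≤ K) (hGK : ∀ Y, ‖G Y‖ ≤ K) (hHK : ∀ Y, ‖H Y‖ ≤ K) :
    ‖∫ P : β × β, M P * (G P.1 * H P.2) ∂(μ.prod μ)‖ₑ ≤ ENNReal.ofReal (A ^ (2/p-1)) * 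
      ((∫⁻ Y, ‖G Y‖ₑ^p ∂μ) ^ (1/p) * (∫⁻ Y, ‖H Y‖ₑ^p ∂μ) ^ (1/p)) := by
  have hp : 0 < p := by linarith
  set B := K ^ (3*p/2) with hBdef
  have hB0 : 0 ≤ B := by positivity
  -- lp masses
  have hint : ∀ G : β → ℂ, Measurable G → (∀ Y, ‖G Y‖ ≤ K) → Integrable (fun Y => ‖G Y‖^p) μ := by
    intro G hG hK
    refine Integrable.mono' (integrable_const (K^p)) (hG.norm.pow_const p).aestronglyMeasurable (ae_of_all _ fun Y => ?_)
    rw [Real.norm_of_nonneg (by positivity)]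
    exact Real.rpow_le_rpow (norm_nonneg _) (hK Y) hp.le
  have hlin : ∀ G : β → ℂ, Measurable G → (∀ Y, ‖G Y‖ ≤ K) → ∫⁻ Y, ‖G Y‖ₑ^p ∂μ = ENNReal.ofReal (∫ Y, ‖G Y‖^p ∂μ) := by
    intro G hG hK
    rw [ofReal_integral_eq_lintegral_ofReal (hint G hG hK) (ae_of_all _ fun _ => by positivity)]
    congr 1; ext Y
    rw [← ofReal_norm, ENNReal.ofReal_rpow_of_nonneg (norm_nonneg _) hp.le]
  set NG := ∫ Y, ‖G Y‖^p ∂μ with hNG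
  set NH := ∫ Y, ‖H Y‖^p ∂μ with hNH
  have hNG0 : 0 ≤ NG := integral_nonneg fun _ => by positivity
  have hNH0 : 0 ≤ NH := integral_nonneg fun _ => by positivity
  set f : ℂ → ℂ := fun z => ∫ P : β × β, M P * (gz p (G P.1) z * gz p (H P.2) z) ∂(μ.prod μ) with hf
  set U : Set ℂ := {z | -1/2 < z.re ∧ z.re < 2} with hU
  have hUo : IsOpen U := (isOpen_lt continuous_const Complex.continuous_re).inter (isOpen_lt Complex.continuous_re continuous_const)
  have hbd : ∀ z ∈ U, ∀ P : β × β, ‖M P * (gz p (G P.1) z * gz p (H P.2) z)‖ ≤ A * (B * B) := by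
    intro z hz P
    rw [norm_mul, norm_mul]
    have h1 := gz_bound p hp (G P.1) z hz.1 hz.2 K hK1 (hGK _)
    have h2 := gz_bound p hp (H P.2) z hz.1 hz.2 K hK1 (hHK _)
    have := hMA P
    gcongr
  have hmz : ∀ z, Measurable fun P : β × β => M P * (gz p (G P.1) z * gz p (H P.2) z) := fun z =>
    hM.mul (((gz_meas p z G hG).comp measurable_fst).mul ((gz_meas p z H hH).comp measurable_snd))
  have hdiff : DifferentiableOn ℂ f U := by
    refine diffInt (μ.prod μ) (fun z P => M P * (gz p (G P.1) z * gz p (H P.2) z)) U hUo (fun z hz => (hmz z).aestronglyMeasurable)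
      (fun _ => A * (B * B)) (integrable_const _) hbd ?_
    intro P
    exact (((differentiable_const _).mul ((gz_diff p (G P.1)).mul (gz_diff p (H P.2))))).differentiableOn
  have hcl : Complex.HadamardThreeLines.verticalClosedStrip 0 1 ⊆ U := by
    intro z hz
    have h : 0 ≤ z.re ∧ z.re ≤ 1 := hz
    exact ⟨by linarith [h.1], by linarith [h.2]⟩
  have hDC : DiffContOnCl ℂ f (Complex.HadamardThreeLines.verticalStrip 0 1) := by
    refine DifferentiableOn.diffContOnCl (hdiff.mono ?_)
    refine Set.Subset.trans ?_ hcl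
    rw [Complex.HadamardThreeLines.verticalClosedStrip, ← closure_Ioo zero_ne_one, ← Complex.closure_preimage_re]
    rfl
  have hBd : BddAbove ((norm ∘ f) '' Complex.HadamardThreeLines.verticalClosedStrip 0 1) := by
    refine ⟨A * (B*B) * (μ.prod μ).real Set.univ, ?_⟩
    rintro _ ⟨z, hz, rfl⟩
    exact norm_integral_le_of_norm_le_const (ae_of_all _ fun P => hbd z (hcl hz) P)
  have sq : ∀ G : β → ℂ, Measurable G → (∀ Y, ‖G Y‖ ≤ K) → ∀ z : ℂ, z.re = 0 → (∫⁻ Y, ‖gz p (G Y) z‖ₑ^2 ∂μ)^(1/2:ℝ) = ENNReal.ofReal ((∫ Y, ‖G Y‖^p ∂μ)^(1/2:ℝ)) := by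
    intro G hG hK z hz
    rw [← ENNReal.ofReal_rpow_of_nonneg (integral_nonneg fun _ => by positivity) (by norm_num), ← hlin G hG hK]
    congr 2; ext Y
    rw [← ofReal_norm, ← ofReal_norm, gz_norm p hp _ z (by linarith), ENNReal.ofReal_rpow_of_nonneg (norm_nonneg _) hp.le, ← ENNReal.ofReal_pow (by positivity), ← Real.rpow_natCast, ← Real.rpow_mul (norm_nonneg _), hz]
    congr 2; push_cast; ring
  have h0 : ∀ z ∈ Complex.re ⁻¹' {0}, ‖f z‖ ≤ NG^(1/2:ℝ) * NH^(1/2:ℝ) := by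
    intro z hz
    have hz : z.re = 0 := hz
    have := h2 (fun Y => gz p (G Y) z) (fun Y => gz p (H Y) z) (gz_meas p z G hG) (gz_meas p z H hH) B
      (fun Y => gz_bound p hp (G Y) z (by linarith) (by linarith) K hK1 (hGK _))
      (fun Y => gz_bound p hp (H Y) z (by linarith) (by linarith) K hK1 (hHK _))
    rw [sq G hG hGK z hz, sq H hH hHK z hz, ← ENNReal.ofReal_mul (by positivity), ← ofReal_norm, ENNReal.ofReal_le_ofReal_iff (by positivity)] at this
    exact this
  have h1 : ∀ z ∈ Complex.re ⁻¹' {1}, ‖f z‖ ≤ A * (NG * NH) := by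
    intro z hz
    have hz : z.re = 1 := hz
    have hi : Integrable (fun P : β × β => A * (‖G P.1‖^p * ‖H P.2‖^p)) (μ.prod μ) :=
      ((hint G hG hGK).mul_prod (hint H hH hHK)).const_mul A
    refine (norm_integral_le_of_norm_le hi (ae_of_all _ fun P => ?_)).trans ?_
    · rw [norm_mul, norm_mul, gz_norm p hp _ z (by linarith), gz_norm p hp _ z (by linarith), hz]
      have e : p * (1+1)/2 = p := by ring
      rw [e]
      exact mul_le_mul_of_nonneg_right (hMA P) (by positivity)
    · rw [integral_const_mul, integral_prod_mul (fun Y => ‖G Y‖^p) (fun Y => ‖H Y‖^p)]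
  have hθ : ((2/p-1 : ℝ) : ℂ) ∈ Complex.HadamardThreeLines.verticalClosedStrip 0 1 := by
    constructor
    · rw [Complex.ofReal_re, sub_nonneg, le_div_iff₀ hp]; linarith
    · rw [Complex.ofReal_re, sub_le_iff_le_add, div_le_iff₀ hp]; linarith
  have key := Complex.HadamardThreeLines.norm_le_interp_of_mem_verticalClosedStrip₀₁' f hθ hDC hBd h0 h1
  have hfθ : f ((2/p-1 : ℝ) : ℂ) = ∫ P : β × β, M P * (G P.1 * H P.2) ∂(μ.prod μ) := by
    have e : ∀ g : ℂ, gz p g ((2/p-1 : ℝ) : ℂ) = g := by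
      intro g
      have : ((p:ℂ) * (1 + ((2/p-1 : ℝ) : ℂ)) / 2 - 1) = 0 := by
        have : (p:ℂ) ≠ 0 := by exact_mod_cast hp.ne'
        push_cast; field_simp; ring
      rw [gz, this, Complex.cpow_zero, mul_one]
    simp only [hf, e]
  rw [hfθ, Complex.ofReal_re] at key
  rw [← ofReal_norm, hlin G hG hGK, hlin H hH hHK, ENNReal.ofReal_rpow_of_nonneg hNG0 (by positivity), ENNReal.ofReal_rpow_of_nonneg hNH0 (by positivity),
    ← ENNReal.ofReal_mul (by positivity), ← ENNReal.ofReal_mul (by positivity)]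
  refine ENNReal.ofReal_le_ofReal (key.trans (le_of_eq ?_))
  rw [Real.mul_rpow (by positivity) (by positivity), Real.mul_rpow hA (by positivity), Real.mul_rpow (by positivity) (by positivity),
    ← Real.rpow_mul hNG0, ← Real.rpow_mul hNH0]
  have hh : ∀ N : ℝ, 0 ≤ N → N ^ (1/2*(1-(2/p-1))) * N ^ (2/p-1) = N ^ (1/p) := by
    intro N hN
    have hθ' := hθ.1
    have hθ'' := hθ.2
    rw [Complex.ofReal_re] at hθ' hθ''
    rw [← Real.rpow_add_of_nonneg hN (by linarith) hθ']
    congr 1; field_simp; ring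
  rw [← hh NG hNG0, ← hh NH hNH0]; ring

end

section

lemma lint_even (h : ℝ → ℝ≥0∞) : ∫⁻ x, h |x| = 2 * ∫⁻ x in Set.Ioi 0, h x := by
  rw [← lintegral_add_compl (fun x => h |x|) (measurableSet_Ioi (a := (0:ℝ))), two_mul]
  congr 1
  · exact setLIntegral_congr_fun measurableSet_Ioi fun x hx => by rw [abs_of_pos hx]
  · rw [Set.compl_Ioi, ← setLIntegral_congr (Iio_ae_eq_Iic (a := (0:ℝ)))]
    have := (Measure.measurePreserving_neg (volume : Measure ℝ)).setLIntegral_comp_preimage_emb (MeasurableEquiv.neg ℝ).measurableEmbedding h (Set.Ioi 0)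
    rw [← this]
    have e : (fun x : ℝ => -x) ⁻¹' Set.Ioi 0 = Set.Iio 0 := by ext x; simp
    rw [e]
    exact setLIntegral_congr_fun measurableSet_Iio fun x hx => by rw [abs_of_neg hx]

lemma near_int (l : ℝ) (hl : l < 1) (R : ℝ) (hR : 0 < R) :
    ∫⁻ x in Set.Ioi 0, (Set.Iio R).indicator (fun x : ℝ => ENNReal.ofReal (x ^ (-l))) x = ENNReal.ofReal (R ^ (1-l) / (1-l)) := by
  rw [lintegral_indicator measurableSet_Iio, Measure.restrict_restrict measurableSet_Iio]
  have e : Set.Iio R ∩ Set.Ioi 0 = Set.Ioo 0 R := by ext x; simp [and_comm]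
  have hi : IntegrableOn (fun x : ℝ => x ^ (-l)) (Set.Ioo 0 R) := by
    have := (intervalIntegral.intervalIntegrable_rpow' (a := 0) (b := R) (r := -l) (by linarith))
    exact ((intervalIntegrable_iff_integrableOn_Ioo_of_le hR.le).1 this)
  rw [e, ← ofReal_integral_eq_lintegral_ofReal hi]
  · rw [← integral_Ioc_eq_integral_Ioo, ← intervalIntegral.integral_of_le hR.le, integral_rpow (Or.inl (by linarith))]
    rw [Real.zero_rpow (by linarith)]
    congr 2 <;> ring_nf
  · exact (ae_restrict_iff' measurableSet_Ioo).2 (ae_of_all _ fun x hx => Real.rpow_nonneg hx.1.le _)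

lemma far_int (R : ℝ) (hR : 0 < R) :
    ∫⁻ x in Set.Ioi 0, (Set.Ici R).indicator (fun x : ℝ => ENNReal.ofReal (x ^ (-2:ℝ))) x = ENNReal.ofReal (R⁻¹) := by
  rw [lintegral_indicator measurableSet_Ici, Measure.restrict_restrict measurableSet_Ici]
  have e : Set.Ici R ∩ Set.Ioi 0 = Set.Ici R := by ext x; simp; intro h; linarith
  rw [e, ← setLIntegral_congr (Ioi_ae_eq_Ici (a := R)), ← ofReal_integral_eq_lintegral_ofReal (integrableOn_Ioi_rpow_of_lt (by norm_num) hR)]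
  · rw [integral_Ioi_rpow_of_lt (by norm_num) hR]
    norm_num [Real.rpow_neg_one]
  · exact (ae_restrict_iff' measurableSet_Ioi).2 (ae_of_all _ fun x hx => Real.rpow_nonneg (hR.le.trans (le_of_lt hx)) _)

lemma near_t (l : ℝ) (hl : l < 1) (R : ℝ) (hR : 0 < R) (t : ℝ) :
    ∫⁻ s, (Set.Iio R).indicator (fun x : ℝ => ENNReal.ofReal (x ^ (-l))) |t - s| = 2 * ENNReal.ofReal (R ^ (1-l) / (1-l)) := by
  rw [← near_int l hl R hR, ← lint_even]
  exact lintegral_sub_left_eq_self (fun s => (Set.Iio R).indicator (fun x : ℝ => ENNReal.ofReal (x ^ (-l))) |s|) t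

lemma far_t (R : ℝ) (hR : 0 < R) (t : ℝ) :
    ∫⁻ s, (Set.Ici R).indicator (fun x : ℝ => ENNReal.ofReal (x ^ (-2:ℝ))) |t - s| = 2 * ENNReal.ofReal (R⁻¹) := by
  rw [← far_int R hR, ← lint_even]
  exact lintegral_sub_left_eq_self (fun s => (Set.Ici R).indicator (fun x : ℝ => ENNReal.ofReal (x ^ (-2:ℝ))) |s|) t

lemma hls_J (q : ℝ) (hq : 2 < q) (f : ℝ → ℝ≥0∞) (hf : Measurable f) (E A : ℝ) (hE : 0 < E) (hA : 0 < A)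
    (hfE : ∫⁻ s, f s ^ (q/(q-1)) = ENNReal.ofReal E) (t : ℝ) :
    ∫⁻ s, (if f s ≤ ENNReal.ofReal A then f s else 0) * ENNReal.ofReal (|t-s| ^ (-(2/q))) ≤
      ENNReal.ofReal ((2/(1-2/q) + 2^(1/q)) * (E^(1-2/q) * A^(q/(q-1)-1))) := by
  set p := q/(q-1) with hp
  set l := 2/q with hl
  have hl1 : l < 1 := by rw [hl, div_lt_one (by linarith)]; exact hq
  have hq1 : 0 < q - 1 := by linarith
  have hp1 : 1 < p := by rw [hp, one_lt_div hq1]; linarith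
  set R := E / A^p with hRdef
  have hR : 0 < R := by positivity
  have m1 : Measurable fun s : ℝ => (Set.Iio R).indicator (fun x : ℝ => ENNReal.ofReal (x ^ (-l))) |t - s| := by
    have : Measurable ((Set.Iio R).indicator (fun x : ℝ => ENNReal.ofReal (x ^ (-l)))) :=
      Measurable.indicator (by fun_prop) measurableSet_Iio
    exact this.comp (by fun_prop)
  have m2 : Measurable fun s : ℝ => (Set.Ici R).indicator (fun x : ℝ => ENNReal.ofReal (x ^ (-l))) |t - s| := by
    have : Measurable ((Set.Ici R).indicator (fun x : ℝ => ENNReal.ofReal (x ^ (-l)))) :=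
      Measurable.indicator (by fun_prop) measurableSet_Ici
    exact this.comp (by fun_prop)
  have hconj : p.HolderConjugate q := by
    refine (Real.holderConjugate_iff).2 ⟨hp1, ?_⟩
    rw [hp]; field_simp; ring
  calc _ ≤ ∫⁻ s, (ENNReal.ofReal A * (Set.Iio R).indicator (fun x : ℝ => ENNReal.ofReal (x ^ (-l))) |t - s|
            + f s * (Set.Ici R).indicator (fun x : ℝ => ENNReal.ofReal (x ^ (-l))) |t - s|) := by
        refine lintegral_mono fun s => ?_
        by_cases h : |t-s| < R
        · have h1 : |t-s| ∈ Set.Iio R := h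
          rw [Set.indicator_of_mem h1]
          refine le_add_right ?_
          gcongr
          split_ifs with h2
          · exact h2
          · simp
        · have h1 : |t-s| ∈ Set.Ici R := not_lt.1 h
          rw [Set.indicator_of_mem h1]
          refine le_add_left ?_
          gcongr
          split_ifs with h2
          · exact le_rfl
          · simp
    _ = ENNReal.ofReal A * (2 * ENNReal.ofReal (R ^ (1-l) / (1-l))) + ∫⁻ s, f s * (Set.Ici R).indicator (fun x : ℝ => ENNReal.ofReal (x ^ (-l))) |t - s| := by
        rw [lintegral_add_left (m1.const_mul _), lintegral_const_mul _ m1, near_t l hl1 R hR t]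
    _ ≤ ENNReal.ofReal A * (2 * ENNReal.ofReal (R ^ (1-l) / (1-l))) + (ENNReal.ofReal E)^(1/p) * (2 * ENNReal.ofReal (R⁻¹))^(1/q) := by
        gcongr
        refine (ENNReal.lintegral_mul_le_Lp_mul_Lq volume hconj hf.aemeasurable m2.aemeasurable).trans ?_
        rw [hfE, ← far_t R hR t]
        gcongr with s
        by_cases h : |t-s| < R
        · have h1 : |t-s| ∉ Set.Ici R := by simpa using h
          rw [Set.indicator_of_notMem h1, ENNReal.zero_rpow_of_pos (by linarith)]; simp
        · have h1 : |t-s| ∈ Set.Ici R := not_lt.1 h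
          rw [Set.indicator_of_mem h1, Set.indicator_of_mem h1, ENNReal.ofReal_rpow_of_nonneg (by positivity) (by linarith), ← Real.rpow_mul (abs_nonneg _)]
          apply le_of_eq; congr 2; rw [hl]; field_simp
    _ = _ := by
        have e2 : (2:ℝ≥0∞) = ENNReal.ofReal 2 := by simp
        rw [e2, ← ENNReal.ofReal_mul (by norm_num), ← ENNReal.ofReal_mul hA.le, ← ENNReal.ofReal_mul (by norm_num),
          ENNReal.ofReal_rpow_of_nonneg hE.le (by positivity), ENNReal.ofReal_rpow_of_nonneg (by positivity) (by positivity),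
          ← ENNReal.ofReal_mul (by positivity), ← ENNReal.ofReal_add]
        · congr 1
          rw [Real.mul_rpow (by norm_num) (by positivity)]
          have a1 : A * R^(1-l) = E^(1-l) * A^(p-1) := by
            rw [hRdef, Real.div_rpow hE.le (by positivity), ← Real.rpow_mul hA.le, mul_div_assoc', mul_comm A, mul_div_assoc]
            congr 1
            nth_rw 1 [← Real.rpow_one A]
            rw [← Real.rpow_sub hA]; congr 1; rw [hp, hl]; field_simp; ring
          have a2 : E^(1/p) * R⁻¹^(1/q) = E^(1-l) * A^(p-1) := by
            rw [hRdef, inv_div, Real.div_rpow (by positivity) hE.le, ← Real.rpow_mul hA.le, mul_div_assoc', mul_comm, mul_comm, mul_div_right_comm, ← Real.rpow_sub hE]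
            congr 2
            · rw [hp, hl]; field_simp; ring
            · rw [hp]; field_simp; ring
          calc _ = 2/(1-l) * (A * R^(1-l)) + 2^(1/q) * (E^(1/p) * R⁻¹^(1/q)) := by ring
            _ = _ := by rw [a1, a2]; ring
        · have : 0 < 1 - l := by linarith
          positivity
        · positivity

lemma hls (q : ℝ) (hq : 2 < q) : ∃ C : ℝ, 0 < C ∧ ∀ f : ℝ → ℝ≥0∞, Measurable f → (∀ t, f t ≠ ∞) →
    ∫⁻ t, ∫⁻ s, f t * f s * ENNReal.ofReal (|t-s| ^ (-(2/q))) ≤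
      ENNReal.ofReal C * (∫⁻ t, f t ^ (q/(q-1))) ^ (2/(q/(q-1))) := by
  set p := q/(q-1) with hp
  set l := 2/q with hl
  have hl1 : l < 1 := by rw [hl, div_lt_one (by linarith)]; exact hq
  have hl1' : 0 < 1 - l := by linarith
  have hq1 : 0 < q - 1 := by linarith
  have hp1 : 1 < p := by rw [hp, one_lt_div hq1]; linarith
  set c := (2/(1-l) + 2^(1/q) : ℝ) with hc
  have hc0 : 0 < c := by positivity
  refine ⟨2 * c, by positivity, fun f hf hfin => ?_⟩
  by_cases htop : ∫⁻ t, f t ^ p = ∞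
  · rw [htop, ENNReal.top_rpow_of_pos (by positivity), ENNReal.mul_top (by simpa using hc0)]
    exact le_top
  by_cases hz : ∫⁻ t, f t ^ p = 0
  · have h0 : ∀ᵐ t, f t = 0 := by
      have := (lintegral_eq_zero_iff (hf.pow_const p)).1 hz
      filter_upwards [this] with t ht
      simpa [show (0:ℝ) < p by linarith, show ¬ p < 0 by linarith] using ht
    have : ∫⁻ t, ∫⁻ s, f t * f s * ENNReal.ofReal (|t-s| ^ (-l)) = 0 := by
      rw [lintegral_congr_ae (g := fun _ => 0)]
      · simp
      · filter_upwards [h0] with t ht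
        simp [ht]
    rw [this]; simp
  obtain ⟨E, hE⟩ : ∃ E : ℝ, 0 < E ∧ ∫⁻ t, f t ^ p = ENNReal.ofReal E :=
    ⟨(∫⁻ t, f t ^ p).toReal, ENNReal.toReal_pos hz htop, (ENNReal.ofReal_toReal htop).symm⟩
  obtain ⟨hE0, hE⟩ := hE
  -- the halved kernel
  have hk : Measurable fun P : ℝ × ℝ => ENNReal.ofReal (|P.1-P.2| ^ (-l)) := by fun_prop
  have hms : MeasurableSet {P : ℝ × ℝ | f P.2 ≤ f P.1} := measurableSet_le (by fun_prop) (by fun_prop)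
  set T : ℝ × ℝ → ℝ≥0∞ := fun P => f P.1 * ((if f P.2 ≤ f P.1 then f P.2 else 0) * ENNReal.ofReal (|P.1-P.2| ^ (-l))) with hT
  have hTm : Measurable T := by
    refine (hf.comp measurable_fst).mul (Measurable.mul ?_ hk)
    exact Measurable.ite hms (hf.comp measurable_snd) measurable_const
  have bound : ∫⁻ t, ∫⁻ s, T (t,s) ≤ ENNReal.ofReal (c * E^(1-l)) * ENNReal.ofReal E := by
    rw [← hE, ← lintegral_const_mul _ (hf.pow_const p)]
    refine lintegral_mono fun t => ?_
    simp only [hT]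
    have hmm : Measurable fun s => (if f s ≤ f t then f s else 0) * ENNReal.ofReal (|t-s| ^ (-l)) := by
      refine Measurable.mul ?_ (by fun_prop)
      exact Measurable.ite (measurableSet_le hf measurable_const) hf measurable_const
    rw [lintegral_const_mul _ hmm]
    by_cases h0 : f t = 0
    · simp [h0]
    · have hA : 0 < (f t).toReal := ENNReal.toReal_pos h0 (hfin t)
      have eA : f t = ENNReal.ofReal (f t).toReal := (ENNReal.ofReal_toReal (hfin t)).symm
      have := hls_J q hq f hf E (f t).toReal hE0 hA hE t
      rw [← eA] at this
      refine (mul_le_mul_right this _).trans (le_of_eq ?_)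
      rw [eA, ENNReal.ofReal_rpow_of_pos hA, ← ENNReal.ofReal_mul hA.le, ← ENNReal.ofReal_mul (by positivity), ENNReal.toReal_ofReal hA.le]
      congr 1
      have : (f t).toReal ^ p = (f t).toReal * (f t).toReal ^ (p-1) := by
        nth_rw 2 [← Real.rpow_one (f t).toReal]
        rw [← Real.rpow_add hA]; congr 1; ring
      rw [this, hc]; ring
  calc _ ≤ ∫⁻ t, ∫⁻ s, (T (t,s) + T (s,t)) := by
        refine lintegral_mono fun t => lintegral_mono fun s => ?_
        simp only [hT]
        rcases le_total (f s) (f t) with h | h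
        · refine le_add_right ?_
          simp [h, mul_assoc]
        · refine le_add_left ?_
          rw [abs_sub_comm]
          simp [h]
          rw [← mul_assoc, mul_comm (f t)]
    _ = (∫⁻ t, ∫⁻ s, T (t,s)) + (∫⁻ t, ∫⁻ s, T (s,t)) := by
        have a1 : ∀ t, Measurable fun s => T (t,s) := fun t => hTm.comp measurable_prodMk_left
        simp_rw [lintegral_add_left (a1 _)]
        rw [lintegral_add_left hTm.lintegral_prod_right']
    _ = 2 * ∫⁻ t, ∫⁻ s, T (t,s) := by
        rw [lintegral_lintegral_swap (f := fun t s => T (s,t)) (hTm.comp measurable_swap).aemeasurable, two_mul]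
    _ ≤ 2 * (ENNReal.ofReal (c * E^(1-l)) * ENNReal.ofReal E) := by gcongr
    _ = _ := by
        have e2 : (2:ℝ≥0∞) = ENNReal.ofReal 2 := by simp
        rw [hE, e2, ENNReal.ofReal_rpow_of_pos hE0, ← ENNReal.ofReal_mul (by positivity), ← ENNReal.ofReal_mul (by positivity), ← ENNReal.ofReal_mul (by positivity)]
        congr 1
        have : E^(2/p) = E^(1-l) * E := by
          nth_rw 3 [← Real.rpow_one E]
          rw [← Real.rpow_add hE0]; congr 1; rw [hp, hl]; field_simp; ring
        rw [this]; ring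
end

section

section abs2
variable {α β : Type*} [MeasurableSpace α] [MeasurableSpace β]

lemma pair_bound (ν : Measure α) [SigmaFinite ν] (μ : Measure β) [IsFiniteMeasure μ]
    (g : α → ℝ) (hg : Integrable (fun X => g X ^ 2) ν)
    (k k' : α → β → ℂ) (hk : Measurable (Function.uncurry k)) (hk' : Measurable (Function.uncurry k'))
    (hb : ∀ X Y, ‖k X Y‖ ≤ g X) (hb' : ∀ X Y, ‖k' X Y‖ ≤ g X) (m : β → β → ℝ≥0∞) (hm : Measurable (Function.uncurry m))
    (hm1 : ∀ Y, ∫⁻ Y', m Y Y' ∂μ ≤ 1) (hm2 : ∀ Y', ∫⁻ Y, m Y Y' ∂μ ≤ 1)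
    (hM : ∀ Y Y', ‖∫ X, k X Y * conj (k X Y') ∂ν‖ₑ ≤ m Y Y')
    (hM' : ∀ Y Y', ‖∫ X, k' X Y * conj (k' X Y') ∂ν‖ₑ ≤ m Y Y')
    (A : ℝ) (hA : 0 ≤ A) (hMA : ∀ Y Y', ‖∫ X, k X Y * conj (k' X Y') ∂ν‖ ≤ A)
    (p : ℝ) (hp1 : 1 ≤ p) (hp2 : p ≤ 2)
    (G H : β → ℂ) (hG : Measurable G) (hH : Measurable H) (K : ℝ) (hK1 : 1 ≤ K) (hGK : ∀ Y, ‖G Y‖ ≤ K) (hHK : ∀ Y, ‖H Y‖ ≤ K) :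
    ‖∫ X, (∫ Y, k X Y * G Y ∂μ) * conj (∫ Y, k' X Y * H Y ∂μ) ∂ν‖ₑ ≤ ENNReal.ofReal (A ^ (2/p-1)) * 
      ((∫⁻ Y, ‖G Y‖ₑ^p ∂μ) ^ (1/p) * (∫⁻ Y, ‖H Y‖ₑ^p ∂μ) ^ (1/p)) := by
  have hcm : Measurable (fun z : ℂ => conj z) := Complex.continuous_conj.measurable
  have hk'c : Measurable (Function.uncurry fun X Y => conj (k' X Y)) := hcm.comp hk'
  have hHc : Measurable fun Y => conj (H Y) := hcm.comp hH
  have e0 : ∀ X, conj (∫ Y, k' X Y * H Y ∂μ) = ∫ Y, conj (k' X Y) * conj (H Y) ∂μ := by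
    intro X; rw [← integral_conj]; simp_rw [map_mul]
  simp_rw [e0]
  have e := fub ν μ μ (fun X => g X * K) (by simp_rw [mul_pow]; exact hg.mul_const _) (fun X Y => k X Y * G Y) (fun X Y => conj (k' X Y) * conj (H Y))
    (hk.mul (hG.comp measurable_snd)) (hk'c.mul (hHc.comp measurable_snd))
    (fun X Y => by rw [norm_mul]; exact mul_le_mul (hb X Y) (hGK Y) (norm_nonneg _) ((norm_nonneg _).trans (hb X Y)))
    (fun X Y => by rw [norm_mul, Complex.norm_conj, Complex.norm_conj]; exact mul_le_mul (hb' X Y) (hHK Y) (norm_nonneg _) ((norm_nonneg _).trans (hb' X Y)))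
  rw [e]
  have e2 : ∀ P : β × β, ∫ X, (k X P.1 * G P.1) * (conj (k' X P.2) * conj (H P.2)) ∂ν = (∫ X, k X P.1 * conj (k' X P.2) ∂ν) * (G P.1 * conj (H P.2)) := by
    intro P
    rw [← integral_mul_const]; congr 1; ext X; ring
  simp_rw [e2]
  have hconjn : ∀ z : ℂ, ‖conj z‖ₑ = ‖z‖ₑ := fun z => by rw [← ofReal_norm, ← ofReal_norm, Complex.norm_conj]
  have hMm : Measurable fun P : β × β => ∫ X, k X P.1 * conj (k' X P.2) ∂ν := by
    refine u_meas ν (fun (P : β × β) X => k X P.1 * conj (k' X P.2)) ?_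
    exact (hk.comp (by fun_prop : Measurable fun z : (β × β) × α => (z.2, z.1.1))).mul
      (hk'c.comp (by fun_prop : Measurable fun z : (β × β) × α => (z.2, z.1.2)))
  have := interp μ (fun P : β × β => ∫ X, k X P.1 * conj (k' X P.2) ∂ν) hMm A hA (fun P => hMA _ _)
    (fun G H hG hH K hK hK' => bilL2 ν μ g hg k (fun X Y => conj (k' X Y)) hk hk'c hb (fun X Y => by rw [Complex.norm_conj]; exact hb' X Y) m hm hm1 hm2 hM
      (fun Y Y' => by
        have : ∫ X, conj (k' X Y) * conj (conj (k' X Y')) ∂ν = conj (∫ X, k' X Y * conj (k' X Y') ∂ν) := by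
          rw [← integral_conj]; simp_rw [map_mul]
        rw [this, hconjn]; exact hM' Y Y') G H hG hH K hK hK')
    p hp1 hp2 G (fun Y => conj (H Y)) hG hHc K hK1 hGK (fun Y => by rw [Complex.norm_conj]; exact hHK Y)
  simp_rw [hconjn] at this
  exact this

lemma absDual (q r : ℝ) (hq : 2 < q) (hr : 2 < r) (κ : ℝ) (hκ : κ * (1 - 2/r) = 2/q) (A : ℝ) (hA : 0 < A) :
    ∃ C : ℝ, 0 < C ∧ ∀ (ν : Measure α) [SigmaFinite ν] (μ : Measure β) [IsFiniteMeasure μ]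
    (g : α → ℝ) (_ : Integrable (fun X => g X ^ 2) ν)
    (k : ℝ → α → β → ℂ) (_ : Measurable (fun z : ℝ × α × β => k z.1 z.2.1 z.2.2)) 
    (_ : ∀ t X Y, ‖k t X Y‖ ≤ g X) (m : β → β → ℝ≥0∞) (_ : Measurable (Function.uncurry m))
    (_ : ∀ Y, ∫⁻ Y', m Y Y' ∂μ ≤ 1) (_ : ∀ Y', ∫⁻ Y, m Y Y' ∂μ ≤ 1)
    (_ : ∀ t Y Y', ‖∫ X, k t X Y * conj (k t X Y') ∂ν‖ₑ ≤ m Y Y')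
    (_ : ∀ t s, t ≠ s → ∀ Y Y', ‖∫ X, k t X Y * conj (k s X Y') ∂ν‖ ≤ A * |t-s|^(-κ))
    (F : ℝ → β → ℂ) (_ : Measurable (Function.uncurry F)) (K : ℝ) (_ : 1 ≤ K) (_ : ∀ t Y, ‖F t Y‖ ≤ K)
    (S : Set ℝ) (_ : volume S ≠ ∞),
    ∫⁻ X, ‖∫ t in S, ∫ Y, k t X Y * F t Y ∂μ‖ₑ^2 ∂ν ≤ ENNReal.ofReal C * 
      (∫⁻ t, (∫⁻ Y, ‖F t Y‖ₑ ^ (r/(r-1)) ∂μ) ^ ((q/(q-1))/(r/(r-1)))) ^ (2/(q/(q-1))) := by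
  obtain ⟨C, hC, hls⟩ := hls q hq
  set p := r/(r-1) with hp
  have hr1 : 0 < r - 1 := by linarith
  have hp1 : 1 ≤ p := by rw [hp, one_le_div hr1]; linarith
  have hp2 : p ≤ 2 := by rw [hp, div_le_iff₀ hr1]; linarith
  have hθ : 2/p - 1 = 1 - 2/r := by rw [hp]; field_simp; ring
  refine ⟨A^(2/p-1) * C, by positivity, ?_⟩
  intro ν _ μ _ g hg k hk hb m hm hm1 hm2 hM hMA F hF K hK1 hFK S hS
  haveI : IsFiniteMeasure (volume.restrict S) := ⟨by rw [Measure.restrict_apply_univ]; exact hS.lt_top⟩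
  have hkt : ∀ t, Measurable (Function.uncurry (k t)) := fun t => hk.comp measurable_prodMk_left
  have hFt : ∀ t, Measurable (F t) := fun t => hF.comp measurable_prodMk_left
  set f : ℝ → ℝ≥0∞ := fun t => (∫⁻ Y, ‖F t Y‖ₑ ^ p ∂μ)^(1/p) with hf
  have hfm : Measurable f := by
    have : Measurable (Function.uncurry fun t Y => ‖F t Y‖ₑ ^ p) := (hF.enorm).pow_const p
    exact (this.lintegral_prod_right' (ν := μ)).pow_const _
  have hfin : ∀ t, f t ≠ ∞ := by
    intro t
    refine ENNReal.rpow_ne_top_of_nonneg (by positivity) ?_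
    have : ∫⁻ Y, ‖F t Y‖ₑ ^ p ∂μ ≤ ∫⁻ Y, (ENNReal.ofReal K)^p ∂μ := by
      gcongr with Y
      rw [← ofReal_norm]; exact ENNReal.ofReal_le_ofReal (hFK t Y)
    refine ne_top_of_le_ne_top ?_ this
    rw [lintegral_const]
    exact ENNReal.mul_ne_top (ENNReal.rpow_ne_top_of_nonneg (by linarith) ENNReal.ofReal_ne_top) (measure_ne_top _ _)
  have hΦ : Measurable (Function.uncurry fun X t => ∫ Y, k t X Y * F t Y ∂μ) := by
    refine u_meas μ (fun (z : α × ℝ) Y => k z.2 z.1 Y * F z.2 Y) ?_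
    exact (hk.comp (by fun_prop : Measurable fun z : (α × ℝ) × β => (z.1.2, z.1.1, z.2))).mul
      (hF.comp (by fun_prop : Measurable fun z : (α × ℝ) × β => (z.1.2, z.2)))
  have h1 := TTs ν (volume.restrict S) (fun X => g X * K * μ.real Set.univ) (by simp_rw [mul_assoc, mul_pow]; exact hg.mul_const _)
    (fun X t => ∫ Y, k t X Y * F t Y ∂μ) hΦ (fun X t => u_bound μ (fun X => g X * K) (fun X Y => k t X Y * F t Y)
      (fun X Y => by rw [norm_mul]; exact mul_le_mul (hb t X Y) (hFK t Y) (norm_nonneg _) ((norm_nonneg _).trans (hb t X Y))) X)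
  refine h1.trans ?_
  refine (lintegral_prod_le _).trans ?_
  refine (setLIntegral_le_lintegral S _).trans ?_
  have step : ∀ t, (∫⁻ s in S, ‖∫ X, (∫ Y, k t X Y * F t Y ∂μ) * conj (∫ Y, k s X Y * F s Y ∂μ) ∂ν‖ₑ) ≤
      ENNReal.ofReal (A^(2/p-1)) * ∫⁻ s, f t * f s * ENNReal.ofReal (|t-s|^(-(2/q))) := by
    intro t
    refine (setLIntegral_le_lintegral S _).trans ?_
    have hmm : Measurable fun s => f t * f s * ENNReal.ofReal (|t-s|^(-(2/q))) := by fun_prop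
    rw [← lintegral_const_mul _ hmm]
    refine lintegral_mono_ae ?_
    have : ∀ᵐ s : ℝ, s ≠ t := by simp [ae_iff]
    filter_upwards [this] with s hst
    have h0 : 0 < |t - s| := abs_pos.2 (sub_ne_zero.2 hst.symm)
    refine (pair_bound ν μ g hg (k t) (k s) (hkt t) (hkt s) (hb t) (hb s) m hm hm1 hm2 (hM t) (hM s) (A * |t-s|^(-κ)) (by positivity)
      (hMA t s hst.symm) p hp1 hp2 (F t) (F s) (hFt t) (hFt s) K hK1 (hFK t) (hFK s)).trans (le_of_eq ?_)
    rw [Real.mul_rpow hA.le (by positivity), ← Real.rpow_mul h0.le, ENNReal.ofReal_mul (by positivity)]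
    have : -κ * (2/p-1) = -(2/q) := by rw [hθ, neg_mul, hκ]
    rw [this]
    simp only [hf]; ring
  refine (lintegral_mono step).trans ?_
  have hmm : Measurable fun t => ∫⁻ s, f t * f s * ENNReal.ofReal (|t-s|^(-(2/q))) := by
    have : Measurable fun z : ℝ × ℝ => f z.1 * f z.2 * ENNReal.ofReal (|z.1-z.2|^(-(2/q))) := by fun_prop
    exact this.lintegral_prod_right'
  rw [lintegral_const_mul _ hmm, ENNReal.ofReal_mul (by positivity), mul_assoc]
  refine mul_le_mul_right ((hls f hfm hfin).trans (le_of_eq ?_)) _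
  have : ∀ t, f t ^ (q/(q-1)) = (∫⁻ Y, ‖F t Y‖ₑ ^ p ∂μ) ^ ((q/(q-1))/p) := by
    intro t
    rw [hf]; dsimp only
    rw [← ENNReal.rpow_mul]; congr 1; ring
  simp_rw [this]
end abs2
end

section

def bN (d : ℕ) (N : ℝ) : Set ((Fin d → ℝ) × ℝ) := {Y | ∑ i, Y.1 i ^ 2 + Y.2 ^ 2 ≤ N ∧ 0 < Y.2}

lemma bN_meas (d : ℕ) (N : ℝ) : MeasurableSet (bN d N) := by
  have h1 : MeasurableSet {Y : (Fin d → ℝ) × ℝ | ∑ i, Y.1 i ^ 2 + Y.2 ^ 2 ≤ N} := measurableSet_le (by fun_prop) (by fun_prop)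
  have h2 : MeasurableSet {Y : (Fin d → ℝ) × ℝ | 0 < Y.2} := measurableSet_lt (by fun_prop) (by fun_prop)
  exact h1.inter h2

lemma bN_fin (d : ℕ) (a : ℝ) (ha : 0 ≤ a) (N : ℝ) : ωa d a (bN d N) < ∞ := by
  have hi := gss_integrable d a ha 1 one_pos
  have hsub : bN d N ⊆ {X | Real.exp (-N) ≤ gss d 1 X} := by
    intro Y hY
    have := hY.1
    show _ ≤ Real.exp _
    exact Real.exp_le_exp.2 (by linarith)
  refine (measure_mono hsub).trans_lt ?_
  have h := hi.measure_norm_ge_lt_top (Real.exp_pos (-N))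
  refine lt_of_le_of_lt (measure_mono ?_) h
  intro X hX
  exact (show Real.exp (-N) ≤ gss d 1 X from hX).trans (le_abs_self _)

def kk (d : ℕ) (a N T ε t : ℝ) (X Y : (Fin d → ℝ) × ℝ) : ℂ :=
  open Classical in if (0 < X.2 ∧ Y ∈ bN d N) ∧ |t| ≤ T then kern d a ((ε:ℂ) - I * t) X Y else 0

lemma kk_meas (d : ℕ) (a : ℝ) (ha : 0 ≤ a) (N T ε : ℝ) :
    Measurable (fun z : ℝ × ((Fin d → ℝ) × ℝ) × ((Fin d → ℝ) × ℝ) => kk d a N T ε z.1 z.2.1 z.2.2) := by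
  classical
  have m1 : MeasurableSet {z : ℝ × ((Fin d → ℝ) × ℝ) × ((Fin d → ℝ) × ℝ) | 0 < z.2.1.2} := measurableSet_lt (by fun_prop) (by fun_prop)
  have m2 : MeasurableSet {z : ℝ × ((Fin d → ℝ) × ℝ) × ((Fin d → ℝ) × ℝ) | z.2.2 ∈ bN d N} := (measurable_snd.comp measurable_snd) (bN_meas d N)
  have m3 : MeasurableSet {z : ℝ × ((Fin d → ℝ) × ℝ) × ((Fin d → ℝ) × ℝ) | |z.1| ≤ T} := measurableSet_le (by fun_prop) (by fun_prop)
  unfold kk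
  refine Measurable.ite ((m1.inter m2).inter m3) ?_ measurable_const
  · have h1 : Measurable fun z : ℝ × ((Fin d → ℝ) × ℝ) × ((Fin d → ℝ) × ℝ) => (ε:ℂ) - I * (z.1 : ℂ) := by fun_prop
    have h2 : Measurable fun z : ℝ × ((Fin d → ℝ) × ℝ) × ((Fin d → ℝ) × ℝ) => ((ε:ℂ) - I * (z.1 : ℂ), z.2) := h1.prodMk measurable_snd
    exact Measurable.comp (f := fun z : ℝ × ((Fin d → ℝ) × ℝ) × ((Fin d → ℝ) × ℝ) => ((ε:ℂ) - I * (z.1 : ℂ), z.2)) (kern_measurable d a ha) h2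

lemma w_re (ε t : ℝ) : ((ε:ℂ) - I * t).re = ε := by simp
lemma w_im (ε t : ℝ) : ((ε:ℂ) - I * t).im = -t := by simp
lemma w_inv_re (ε t : ℝ) : (((ε:ℂ) - I * t)⁻¹).re = ε / (ε^2 + t^2) := by
  rw [Complex.inv_re, Complex.normSq_apply, w_re, w_im]; congr 1; ring

lemma kk_bound (d : ℕ) (a : ℝ) (ha : 0 ≤ a) (N T ε : ℝ) (hε : 0 < ε) (hT : 0 ≤ T) :
    ∃ g : ((Fin d → ℝ) × ℝ) → ℝ, Integrable (fun X => g X ^ 2) (ωa d a) ∧ ∀ t X Y, ‖kk d a N T ε t X Y‖ ≤ g X := by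
  set ρ := ε / (ε^2 + T^2) / 4 with hρ
  have hρ0 : 0 < ρ := by positivity
  set D := (C0 d a*ε^(-((d:ℝ)+a+1)/2)*Real.exp (ρ*N)) with hD
  have hD0 : 0 ≤ D := by have := C0_pos d a ha; positivity
  refine ⟨fun X => D * gss d (ρ/2) X, ?_, ?_⟩
  · have : (fun X => (D * gss d (ρ/2) X)^2) = fun X => D^2 * gss d ρ X := by
      ext X
      rw [mul_pow]; congr 1
      unfold gss
      rw [← Real.exp_nat_mul]; congr 1; push_cast; ring
    rw [this]
    exact (gss_integrable d a ha ρ hρ0).const_mul _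
  · intro t X Y
    unfold kk
    split_ifs with h
    · obtain ⟨⟨hX, hY⟩, ht⟩ := h
      refine kern_gauss d a ha _ ε ρ N hε hρ0.le (by rw [w_re]) ?_ X Y hX.le hY.2.le hY.1
      rw [w_inv_re, hρ]
      have : t^2 ≤ T^2 := sq_le_sq.2 (by rwa [abs_of_nonneg hT])
      have : 0 < ε^2 + t^2 := by positivity
      gcongr ?_ / 4
      exact div_le_div_of_nonneg_left hε.le this (by linarith)
    · rw [norm_zero]
      exact mul_nonneg hD0 (Real.exp_pos _).le

lemma kk_comp (d : ℕ) (a : ℝ) (ha : 0 ≤ a) (N T ε : ℝ) (hε : 0 < ε) (t s : ℝ) (Y Y' : (Fin d → ℝ) × ℝ) :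
    ((Y ∈ bN d N ∧ Y' ∈ bN d N) ∧ 
      ‖∫ X, kk d a N T ε t X Y * conj (kk d a N T ε s X Y') ∂(ωa d a)‖ = ‖kern d a (((2*ε : ℝ):ℂ) - I * ((t - s : ℝ):ℂ)) Y Y'‖) ∨
    ∫ X, kk d a N T ε t X Y * conj (kk d a N T ε s X Y') ∂(ωa d a) = 0 := by
  by_cases h : (Y ∈ bN d N ∧ |t| ≤ T) ∧ (Y' ∈ bN d N ∧ |s| ≤ T)
  · left
    refine ⟨⟨h.1.1, h.2.1⟩, ?_⟩
    have hw : 0 < ((ε:ℂ) - I * t).re := by rw [w_re]; exact hε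
    have hw' : 0 < ((ε:ℂ) - I * s).re := by rw [w_re]; exact hε
    have hw'' : 0 < (conj ((ε:ℂ) - I * s)).re := by rw [Complex.conj_re, w_re]; exact hε
    have : ∫ X, kk d a N T ε t X Y * conj (kk d a N T ε s X Y') ∂(ωa d a) = ∫ X, kern d a ((ε:ℂ) - I * t) X Y * kern d a (conj ((ε:ℂ) - I * s)) X Y' ∂(ωa d a) := by
      refine integral_congr_ae ?_
      filter_upwards [ωa_pos d a] with X hX
      simp only [kk, if_pos (show (0 < X.2 ∧ Y ∈ bN d N) ∧ |t| ≤ T from ⟨⟨hX, h.1.1⟩, h.1.2⟩),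
        if_pos (show (0 < X.2 ∧ Y' ∈ bN d N) ∧ |s| ≤ T from ⟨⟨hX, h.2.1⟩, h.2.2⟩)]
      rw [kern_conj d a _ hw']
    rw [this, kern_comp d a ha _ _ hw hw'']
    congr 2
    simp only [map_sub, map_mul, Complex.conj_ofReal, Complex.conj_I]
    push_cast; ring
  · right
    have : ∀ X, kk d a N T ε t X Y * conj (kk d a N T ε s X Y') = 0 := by
      intro X
      by_cases h1 : Y ∈ bN d N ∧ |t| ≤ T
      · have h2 : ¬ ((0 < X.2 ∧ Y' ∈ bN d N) ∧ |s| ≤ T) := fun hh => h ⟨h1, hh.1.2, hh.2⟩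
        simp only [kk, if_neg h2, map_zero, mul_zero]
      · have h2 : ¬ ((0 < X.2 ∧ Y ∈ bN d N) ∧ |t| ≤ T) := fun hh => h1 ⟨hh.1.2, hh.2⟩
        simp only [kk, if_neg h2, zero_mul]
    simp only [this, integral_zero]

lemma regular (d : ℕ) (a : ℝ) (ha : 0 ≤ a) (q r : ℝ) (hq : 2 < q) (hr : 2 < r)
    (hrel : 2 / q = ((d : ℝ) + a + 1) * (1 / 2 - 1 / r)) :
    ∃ C > (0:ℝ), ∀ (F : ((Fin d → ℝ) × ℝ) × ℝ → ℂ) (_ : Measurable F) (K : ℝ) (_ : ∀ P, ‖F P‖ ≤ K)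
      (N T ε : ℝ) (_ : 0 < ε) (_ : 0 ≤ T) (S : Set ℝ) (_ : MeasurableSet S) (_ : ∀ t ∈ S, |t| ≤ T),
      ∫⁻ X, ‖∫ t in S, ∫ Y in bN d N, kern d a ((ε:ℂ) - I * t) X Y * F (Y,t) ∂(ωa d a)‖ₑ^2 ∂(ωa d a) ≤ ENNReal.ofReal C *
       (∫⁻ t : ℝ, (∫⁻ Y, ‖F (Y, t)‖ₑ ^ (r / (r - 1)) ∂(ωa d a)) ^ ((q / (q - 1)) / (r / (r - 1)))) ^ (2 / (q / (q - 1))) := by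
  obtain ⟨C, hC, H⟩ := absDual (α := (Fin d → ℝ) × ℝ) (β := (Fin d → ℝ) × ℝ) q r hq hr (((d:ℝ)+a+1)/2) (by rw [hrel]; ring) (C0 d a) (C0_pos d a ha)
  refine ⟨C, hC, ?_⟩
  intro F hF K hFK N T ε hε hT S hSm hST
  have : IsFiniteMeasure ((ωa d a).restrict (bN d N)) := ⟨by rw [Measure.restrict_apply_univ]; exact bN_fin d a ha N⟩
  obtain ⟨g, hg, hkg⟩ := kk_bound d a ha N T ε hε hT
  have hpE : 0 < q / (q-1) := div_pos (by linarith) (by linarith)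
  have hpR : 0 < r / (r-1) := div_pos (by linarith) (by linarith)
  have hm0 : Measurable fun z : ((Fin d → ℝ) × ℝ) × ((Fin d → ℝ) × ℝ) => ‖kern d a ((2*ε:ℝ):ℂ) z.1 z.2‖ₑ :=
    (kern_continuous d a ha _).measurable.enorm
  classical
  set m : ((Fin d → ℝ) × ℝ) → ((Fin d → ℝ) × ℝ) → ℝ≥0∞ := fun Y Y' => if 0 ≤ Y.2 ∧ 0 ≤ Y'.2 then ‖kern d a ((2*ε:ℝ):ℂ) Y Y'‖ₑ else 0 with hm
  have hmm : Measurable (Function.uncurry m) := by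
    have m1 : MeasurableSet {z : ((Fin d → ℝ) × ℝ) × ((Fin d → ℝ) × ℝ) | 0 ≤ z.1.2} := measurableSet_le (by fun_prop) (by fun_prop)
    have m2 : MeasurableSet {z : ((Fin d → ℝ) × ℝ) × ((Fin d → ℝ) × ℝ) | 0 ≤ z.2.2} := measurableSet_le (by fun_prop) (by fun_prop)
    exact Measurable.ite (m1.inter m2) hm0 measurable_const
  have hms : ∀ Y Y', m Y Y' = m Y' Y := by
    intro Y Y'
    simp only [hm]
    rw [kern_symm]
    simp only [and_comm]
  have hm2 : ∀ Y', ∫⁻ Y in bN d N, m Y Y' ∂(ωa d a) ≤ 1 := by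
    intro Y'
    refine (setLIntegral_le_lintegral _ _).trans ?_
    by_cases h : 0 ≤ Y'.2
    · rw [← kern_mass d a ha (2*ε) (by positivity) Y' h]
      refine lintegral_mono fun X => ?_
      simp only [hm]; split_ifs
      · exact le_rfl
      · simp
    · simp [hm, h]
  have hm1 : ∀ Y, ∫⁻ Y' in bN d N, m Y Y' ∂(ωa d a) ≤ 1 := by
    intro Y
    simp_rw [hms Y]; exact hm2 Y
  have hFt : Measurable (Function.uncurry fun (t : ℝ) (Y : (Fin d → ℝ) × ℝ) => F (Y, t)) := hF.comp measurable_swap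
  have vS : volume S ≠ ∞ := by
    have : S ⊆ Set.Icc (-T) T := fun t ht => abs_le.1 (hST t ht)
    exact ((measure_mono this).trans_lt (by simp)).ne
  have key := H (ωa d a) ((ωa d a).restrict (bN d N)) g hg (kk d a N T ε) (kk_meas d a ha N T ε) hkg m hmm hm1 hm2 ?_ ?_
    (fun t Y => F (Y,t)) hFt (max 1 K) (le_max_left _ _) (fun t Y => (hFK _).trans (le_max_right _ _)) S vS
  · refine le_trans (le_of_eq ?_) (key.trans ?_)
    · refine lintegral_congr_ae ?_
      filter_upwards [ωa_pos d a] with X hX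
      congr 2
      refine setIntegral_congr_fun hSm fun t ht => ?_
      refine setIntegral_congr_fun (bN_meas d N) fun Y hY => ?_
      simp only [kk, if_pos (show (0 < X.2 ∧ Y ∈ bN d N) ∧ |t| ≤ T from ⟨⟨hX, hY⟩, hST t ht⟩)]
    · gcongr
      exact Measure.restrict_le_self
  · intro t Y Y'
    rcases kk_comp d a ha N T ε hε t t Y Y' with ⟨h1, h2⟩ | h
    · rw [← ofReal_norm, h2, ofReal_norm]
      simp only [hm, if_pos (show 0 ≤ Y.2 ∧ 0 ≤ Y'.2 from ⟨h1.1.2.le, h1.2.2.le⟩)]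
      simp
    · rw [h]; simp
  · intro t s hts Y Y'
    have h0 : 0 < |t - s| := abs_pos.2 (sub_ne_zero.2 hts)
    have hC0 := C0_pos d a ha
    rcases kk_comp d a ha N T ε hε t s Y Y' with ⟨h1, h2⟩ | h
    · rw [h2]
      have hwn : |t-s| ≤ ‖((2*ε : ℝ):ℂ) - I * ((t - s : ℝ):ℂ)‖ := by
        have := Complex.abs_im_le_norm (((2*ε : ℝ):ℂ) - I * ((t - s : ℝ):ℂ))
        rwa [w_im, abs_neg] at this
      refine (kern_bound d a ha _ ?_ ?_ Y Y' h1.1.2.le h1.2.2.le).trans ?_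
      · exact norm_pos_iff.1 (h0.trans_le hwn)
      · rw [w_re]; positivity
      · have e1 : Real.exp (-((((2*ε : ℝ):ℂ) - I * ((t - s : ℝ):ℂ))⁻¹.re/4)*sqd d Y Y') ≤ 1 := by
          rw [Real.exp_le_one_iff, w_inv_re]
          have : 0 ≤ sqd d Y Y' := by unfold sqd; positivity
          have : 0 ≤ 2*ε/((2*ε)^2+(t-s)^2)/4 * sqd d Y Y' := by positivity
          linarith
        have e2 : ‖((2*ε : ℝ):ℂ) - I * ((t - s : ℝ):ℂ)‖ ^ (-((d:ℝ)+a+1)/2) ≤ |t-s|^(-(((d:ℝ)+a+1)/2)) := by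
          rw [neg_div]
          exact Real.rpow_le_rpow_of_nonpos h0 hwn (by have : (0:ℝ) ≤ d := by positivity
                                                       linarith)
        calc _ ≤ C0 d a * |t-s|^(-(((d:ℝ)+a+1)/2)) * 1 := by gcongr
          _ = _ := mul_one _
    · rw [h, norm_zero]; positivity
end

section

lemma schw_dom (d : ℕ) (a : ℝ) (ha : 0 ≤ a) (F : SchwartzMap (((Fin d → ℝ) × ℝ) × ℝ) ℂ) :
    ∃ h : (Fin d → ℝ) × ℝ → ℝ, Integrable h (ωa d a) ∧ ∀ Y t, ‖F (Y,t)‖ ≤ h Y := by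
  set M : ℕ := ⌈a⌉₊ + 2 with hM
  set k : ℕ := (d+1) + M with hk
  set C := 2 ^ k * (Finset.Iic (k,0)).sup (fun m => SchwartzMap.seminorm ℝ m.1 m.2) F with hC
  refine ⟨fun Y => C * ((1+‖Y.1‖)^(-((d:ℝ)+1)) * (1+‖Y.2‖)^(-(M:ℝ))), ?_, ?_⟩
  · have h1 : Integrable (fun x : Fin d → ℝ => (1+‖x‖)^(-((d:ℝ)+1))) :=
      integrable_one_add_norm (by simp)
    have h2 : Integrable (fun z : ℝ => (1+‖z‖)^(-(M:ℝ))) (((volume : Measure ℝ).restrict (Set.Ioi 0)).withDensity fun z => ENNReal.ofReal (z ^ a)) := by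
      rw [integrable_withDensity_iff_integrable_smul₀' (by fun_prop) (by simp)]
      have h3 : Integrable (fun x : ℝ => (1+‖x‖)^(-(2:ℝ))) := integrable_one_add_norm (by simp)
      refine Integrable.mono' (h3.restrict (s := Set.Ioi 0)) ?_ ?_
      · apply Measurable.aestronglyMeasurable; fun_prop
      · filter_upwards [ae_restrict_mem measurableSet_Ioi] with z hz
        have hz' : 0 < z := hz
        simp only [ENNReal.toReal_ofReal (by positivity : 0 ≤ z^a), smul_eq_mul]
        rw [Real.norm_of_nonneg (by positivity), Real.norm_of_nonneg hz'.le]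
        have h1 : z^a ≤ (1+z)^(⌈a⌉₊:ℝ) := (Real.rpow_le_rpow hz'.le (by linarith) ha).trans
          (Real.rpow_le_rpow_of_exponent_le (by linarith) (Nat.le_ceil a))
        calc z^a * (1+z)^(-(M:ℝ)) ≤ (1+z)^(⌈a⌉₊:ℝ) * (1+z)^(-(M:ℝ)) := by gcongr
          _ = _ := by rw [← Real.rpow_add (by linarith)]; congr 1; rw [hM]; push_cast; ring
    unfold ωa
    exact (h1.mul_prod h2).const_mul C
  · intro Y t
    have := SchwartzMap.one_add_le_sup_seminorm_apply (𝕜 := ℝ) (m := (k,0)) (k := k) (n := 0) le_rfl le_rfl F (Y,t)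
    rw [norm_iteratedFDeriv_zero] at this
    have e1 : ‖Y.1‖ ≤ ‖(Y,t)‖ := (norm_fst_le Y).trans (norm_fst_le (Y,t))
    have e2 : ‖Y.2‖ ≤ ‖(Y,t)‖ := (norm_snd_le Y).trans (norm_fst_le (Y,t))
    have e3 : (1+‖Y.1‖)^(d+1) * (1+‖Y.2‖)^M ≤ (1+‖(Y,t)‖)^k := by
      have e0 : (1+‖(Y,t)‖)^k = (1+‖(Y,t)‖)^(d+1) * (1+‖(Y,t)‖)^M := pow_add _ _ _
      rw [e0]
      exact mul_le_mul (pow_le_pow_left₀ (by positivity) (by linarith) _) (pow_le_pow_left₀ (by positivity) (by linarith) _) (by positivity) (by positivity)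
    have e4 : (1+‖Y.1‖)^(d+1) * (1+‖Y.2‖)^M * ‖F (Y,t)‖ ≤ C := (mul_le_mul_of_nonneg_right e3 (norm_nonneg _)).trans this
    have p1 : (1+‖Y.1‖)^(-((d:ℝ)+1)) = ((1+‖Y.1‖)^(d+1))⁻¹ := by
      rw [Real.rpow_neg (by positivity)]; congr 1; exact_mod_cast Real.rpow_natCast _ (d+1)
    have p2 : (1+‖Y.2‖)^(-(M:ℝ)) = ((1+‖Y.2‖)^M)⁻¹ := by
      rw [Real.rpow_neg (by positivity), Real.rpow_natCast]
    show ‖F (Y,t)‖ ≤ C * ((1+‖Y.1‖)^(-((d:ℝ)+1)) * (1+‖Y.2‖)^(-(M:ℝ)))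
    rw [p1, p2, ← mul_inv, ← div_eq_mul_inv, le_div_iff₀ (by positivity)]
    linarith

lemma fatou2 {α : Type*} [MeasurableSpace α] (ν : Measure α) (U : α → ℂ) (u : ℕ → α → ℂ) (hu : ∀ j, Measurable (u j))
    (B : ℝ≥0∞) (hB : ∀ j, ∫⁻ X, ‖u j X‖ₑ^2 ∂ν ≤ B)
    (h : ∀ᵐ X ∂ν, U X = 0 ∨ Tendsto (fun j => u j X) atTop (𝓝 (U X))) : ∫⁻ X, ‖U X‖ₑ^2 ∂ν ≤ B := by
  calc _ ≤ ∫⁻ X, liminf (fun j => ‖u j X‖ₑ^2) atTop ∂ν := by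
        refine lintegral_mono_ae ?_
        filter_upwards [h] with X hX
        rcases hX with h0 | h1
        · simp [h0]
        · have : Tendsto (fun j => ‖u j X‖ₑ^2) atTop (𝓝 (‖U X‖ₑ^2)) := 
            (ENNReal.continuous_pow 2).tendsto _ |>.comp h1.enorm
          exact this.liminf_eq.ge
    _ ≤ liminf (fun j => ∫⁻ X, ‖u j X‖ₑ^2 ∂ν) atTop := lintegral_liminf_le fun j => (hu j).enorm.pow_const 2
    _ ≤ B := liminf_le_of_le (by isBoundedDefault) (fun b hb => by
        obtain ⟨j, hj⟩ := hb.exists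
        exact hj.trans (hB j))

attribute [local irreducible] kern

lemma J_meas (d : ℕ) (a : ℝ) (ha : 0 ≤ a) (F : ((Fin d → ℝ) × ℝ) × ℝ → ℂ) (hF : Measurable F) (ε : ℝ) (μ : Measure ((Fin d → ℝ) × ℝ)) [SFinite μ] :
    Measurable fun z : ((Fin d → ℝ) × ℝ) × ℝ => ∫ Y, kern d a ((ε:ℂ) - I * z.2) z.1 Y * F (Y, z.2) ∂μ := by
  refine u_meas μ (fun (z : ((Fin d → ℝ) × ℝ) × ℝ) (Y : (Fin d → ℝ) × ℝ) => kern d a ((ε:ℂ) - I * z.2) z.1 Y * F (Y, z.2)) ?_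
  have h1 : Measurable fun z : (((Fin d → ℝ) × ℝ) × ℝ) × ((Fin d → ℝ) × ℝ) => (((ε:ℂ) - I * z.1.2), (z.1.1, z.2)) := by fun_prop
  have h2 : Measurable fun z : (((Fin d → ℝ) × ℝ) × ℝ) × ((Fin d → ℝ) × ℝ) => (z.2, z.1.2) := by fun_prop
  have h3 : Measurable fun z : (((Fin d → ℝ) × ℝ) × ℝ) × ((Fin d → ℝ) × ℝ) => kern d a ((ε:ℂ) - I * z.1.2) z.1.1 z.2 :=
    Measurable.comp (g := fun P : ℂ × (((Fin d → ℝ) × ℝ) × ((Fin d → ℝ) × ℝ)) => kern d a P.1 P.2.1 P.2.2) (kern_measurable d a ha) h1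
  have h4 : Measurable fun z : (((Fin d → ℝ) × ℝ) × ℝ) × ((Fin d → ℝ) × ℝ) => F (z.2, z.1.2) := hF.comp h2
  exact Measurable.mul h3 h4

lemma kern_bd (d : ℕ) (a : ℝ) (ha : 0 ≤ a) (ε t δ : ℝ) (hε : 0 ≤ ε) (hδ : 0 < δ) (ht : δ ≤ |t|) (X Y : (Fin d → ℝ) × ℝ) (hX : 0 < X.2) (hY : 0 < Y.2) :
    ‖kern d a ((ε:ℂ) - I * t) X Y‖ ≤ C0 d a * δ^(-(((d:ℝ)+a+1)/2)) := by
  have hC0 := C0_pos d a ha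
  have hwn : |t| ≤ ‖(ε:ℂ) - I * t‖ := by
    have := Complex.abs_im_le_norm ((ε:ℂ) - I * t)
    rwa [w_im, abs_neg] at this
  refine (kern_bound d a ha _ ?_ ?_ X Y hX.le hY.le).trans ?_
  · exact norm_pos_iff.1 (hδ.trans_le (ht.trans hwn))
  · rw [w_re]; exact hε
  · have e1 : Real.exp (-(((ε:ℂ) - I * t)⁻¹.re/4)*sqd d X Y) ≤ 1 := by
      rw [Real.exp_le_one_iff, w_inv_re]
      have : 0 ≤ sqd d X Y := by unfold sqd; positivity
      have : 0 ≤ ε/(ε^2+t^2)/4 * sqd d X Y := by positivity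
      linarith
    have e2 : ‖(ε:ℂ) - I * t‖ ^ (-((d:ℝ)+a+1)/2) ≤ δ^(-(((d:ℝ)+a+1)/2)) := by
      rw [neg_div]
      exact Real.rpow_le_rpow_of_nonpos hδ (ht.trans hwn) (by have : (0:ℝ) ≤ d := by positivity
                                                              linarith)
    calc _ ≤ C0 d a * δ^(-(((d:ℝ)+a+1)/2)) * 1 := by gcongr
      _ = _ := mul_one _

def Sd (n : ℕ) : Set ℝ := {t | 1/((n:ℝ)+1) ≤ |t| ∧ |t| ≤ (n:ℝ)+1}

lemma Sd_meas (n : ℕ) : MeasurableSet (Sd n) := by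
  have h1 : MeasurableSet {t : ℝ | 1/((n:ℝ)+1) ≤ |t|} := measurableSet_le (by fun_prop) (by fun_prop)
  have h2 : MeasurableSet {t : ℝ | |t| ≤ (n:ℝ)+1} := measurableSet_le (by fun_prop) (by fun_prop)
  exact h1.inter h2

lemma Sd_fin (n : ℕ) : volume (Sd n) < ∞ := by
  have : Sd n ⊆ Set.Icc (-((n:ℝ)+1)) ((n:ℝ)+1) := fun t ht => abs_le.1 ht.2
  exact (measure_mono this).trans_lt (by simp)

lemma Sd_mono : Monotone Sd := by
  intro m n hmn t ht
  have : (m:ℝ) ≤ n := by exact_mod_cast hmn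
  refine ⟨le_trans ?_ ht.1, ht.2.trans (by linarith)⟩
  gcongr

lemma Sd_union : ⋃ n, Sd n = {0}ᶜ := by
  ext t
  simp only [Set.mem_iUnion, Set.mem_compl_iff, Set.mem_singleton_iff]
  constructor
  · rintro ⟨n, h1, -⟩ h0
    rw [h0, abs_zero] at h1
    have : 0 < 1/((n:ℝ)+1) := by positivity
    linarith
  · intro h
    have h0 : 0 < |t| := abs_pos.2 h
    obtain ⟨n, hn⟩ := exists_nat_ge (max (1/|t|) |t|)
    have h1 := (le_max_left _ _).trans hn
    have h2 := (le_max_right _ _).trans hn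
    refine ⟨n, ?_, by linarith⟩
    rw [div_le_iff₀ (by positivity)]
    rw [div_le_iff₀ h0] at h1
    nlinarith

lemma ae_restr {α : Type*} [MeasurableSpace α] {μ : Measure α} (f : α → ℂ) (s : Set α) (hs : MeasurableSet s) :
    ∫ x in s, f x ∂μ = ∫ x, s.indicator f x ∂μ := (integral_indicator hs).symm

set_option maxHeartbeats 1000000 in
lemma lim1 (d : ℕ) (a : ℝ) (ha : 0 ≤ a) (F : SchwartzMap (((Fin d → ℝ) × ℝ) × ℝ) ℂ) (n : ℕ) (X : (Fin d → ℝ) × ℝ) (hX : 0 < X.2) :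
    Tendsto (fun j : ℕ => ∫ t in Sd n, ∫ Y in bN d j, kern d a (((1/((j:ℝ)+1) : ℝ):ℂ) - I * t) X Y * F (Y,t) ∂(ωa d a)) atTop
      (𝓝 (∫ t in Sd n, ∫ Y, kern d a (((0:ℝ):ℂ) - I * t) X Y * F (Y,t) ∂(ωa d a))) := by
  obtain ⟨h, hh, hFh⟩ := schw_dom d a ha F
  have hFm : Measurable F := F.continuous.measurable
  have : IsFiniteMeasure (volume.restrict (Sd n)) := ⟨by rw [Measure.restrict_apply_univ]; exact Sd_fin n⟩
  set D := C0 d a * (1/((n:ℝ)+1))^(-(((d:ℝ)+a+1)/2)) with hD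
  have hD0 : 0 ≤ D := by have := C0_pos d a ha; positivity
  have hh0 : ∀ Y, 0 ≤ h Y := fun Y => (norm_nonneg _).trans (hFh Y 0)
  have bd : ∀ ε : ℝ, 0 ≤ ε → ∀ t ∈ Sd n, ∀ Y, 0 < Y.2 → ‖kern d a ((ε:ℂ) - I * t) X Y * F (Y,t)‖ ≤ D * h Y := by
    intro ε hε t ht Y hY
    rw [norm_mul]
    exact mul_le_mul (kern_bd d a ha ε t _ hε (by positivity) ht.1 X Y hX hY) (hFh Y t) (norm_nonneg _) hD0
  refine tendsto_integral_of_dominated_convergence (fun _ => ∫ Y, D * h Y ∂(ωa d a)) ?_ (integrable_const _) ?_ ?_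
  · intro j
    have := J_meas d a ha F hFm (1/((j:ℝ)+1)) ((ωa d a).restrict (bN d j))
    have := this.comp (measurable_prodMk_left (x := X))
    exact this.aestronglyMeasurable
  · intro j
    filter_upwards [ae_restrict_mem (Sd_meas n)] with t ht
    rw [ae_restr _ _ (bN_meas d j)]
    refine norm_integral_le_of_norm_le (hh.const_mul D) (ae_of_all _ fun Y => ?_)
    by_cases hY : Y ∈ bN d j
    · rw [Set.indicator_of_mem hY]
      exact bd _ (by positivity) t ht Y hY.2
    · rw [Set.indicator_of_notMem hY, norm_zero]; exact mul_nonneg hD0 (hh0 Y)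
  · filter_upwards [ae_restrict_mem (Sd_meas n)] with t ht
    have ht0 : t ≠ 0 := by
      have : t ∈ ⋃ n, Sd n := Set.mem_iUnion.2 ⟨n, ht⟩
      rw [Sd_union] at this; exact this
    simp_rw [ae_restr _ _ (bN_meas d _)]
    refine tendsto_integral_of_dominated_convergence (fun Y => D * h Y) ?_ (hh.const_mul D) ?_ ?_
    · intro j
      have h1 : Continuous fun Y : (Fin d → ℝ) × ℝ => kern d a (((1/((j:ℝ)+1) : ℝ):ℂ) - I * t) X Y :=
        Continuous.comp (g := fun P : ((Fin d → ℝ) × ℝ) × ((Fin d → ℝ) × ℝ) => kern d a (((1/((j:ℝ)+1) : ℝ):ℂ) - I * t) P.1 P.2)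
          (kern_continuous d a ha (((1/((j:ℝ)+1) : ℝ):ℂ) - I * t)) (by fun_prop : Continuous fun Y : (Fin d → ℝ) × ℝ => (X, Y))
      have h2 : Continuous fun Y : (Fin d → ℝ) × ℝ => F (Y, t) := F.continuous.comp (by fun_prop)
      have h12 : Measurable fun Y : (Fin d → ℝ) × ℝ => kern d a (((1/((j:ℝ)+1) : ℝ):ℂ) - I * t) X Y * F (Y, t) := (Continuous.mul h1 h2).measurable
      exact (Measurable.indicator h12 (bN_meas d j)).aestronglyMeasurable
    · intro j
      refine ae_of_all _ fun Y => ?_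
      by_cases hY : Y ∈ bN d j
      · rw [Set.indicator_of_mem hY]
        exact bd _ (by positivity) t ht Y hY.2
      · rw [Set.indicator_of_notMem hY, norm_zero]; exact mul_nonneg hD0 (hh0 Y)
    · filter_upwards [ωa_pos d a] with Y hY
      have hslit : (((0:ℝ):ℂ) - I * t) ∈ slitPlane := by
        right; rw [w_im]; simpa using ht0
      have c1 := (kern_continuousAt_w d a ha _ hslit X Y).tendsto
      have c2 : Tendsto (fun j : ℕ => ((1/((j:ℝ)+1) : ℝ):ℂ) - I * t) atTop (𝓝 (((0:ℝ):ℂ) - I * t)) :=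
        ((Complex.continuous_ofReal.tendsto 0).comp tendsto_one_div_add_atTop_nhds_zero_nat).sub_const _
      have c3 := (c1.comp c2).mul_const (F (Y,t))
      refine c3.congr' ?_
      obtain ⟨N, hN⟩ := exists_nat_ge (∑ i, Y.1 i ^ 2 + Y.2 ^ 2)
      filter_upwards [eventually_ge_atTop N] with j hj
      have : Y ∈ bN d j := ⟨hN.trans (by exact_mod_cast hj), hY⟩
      rw [Set.indicator_of_mem this]; rfl

lemma mainL (d : ℕ) (a : ℝ) (ha : 0 ≤ a) (q r : ℝ) (hq : 2 < q) (hr : 2 < r)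
    (hrel : 2 / q = ((d : ℝ) + a + 1) * (1 / 2 - 1 / r)) :
    ∃ C > (0:ℝ), ∀ F : SchwartzMap (((Fin d → ℝ) × ℝ) × ℝ) ℂ,
      eLpNorm (fun X => ∫ t : ℝ, ∫ Y, SK d a X Y (-t) * F (Y, t) ∂(ωa d a)) 2 (ωa d a)
        ≤ ENNReal.ofReal C *
            (∫⁻ t : ℝ,
              (∫⁻ Y, (‖F (Y, t)‖₊ : ℝ≥0∞) ^ (r / (r - 1)) ∂(ωa d a))
                ^ ((q / (q - 1)) / (r / (r - 1)))) ^ (1 / (q / (q - 1))) := by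
  obtain ⟨C, hC, H⟩ := regular d a ha q r hq hr hrel
  refine ⟨C^(1/2:ℝ), by positivity, fun F => ?_⟩
  have hFm : Measurable F := F.continuous.measurable
  obtain ⟨K, hK⟩ : ∃ K, ∀ P, ‖F P‖ ≤ K := by
    obtain ⟨K, hK⟩ := F.decay 0 0
    exact ⟨K, fun P => by simpa using hK.2 P⟩
  set Bd := ENNReal.ofReal C *
       (∫⁻ t : ℝ, (∫⁻ Y, ‖F (Y, t)‖ₑ ^ (r / (r - 1)) ∂(ωa d a)) ^ ((q / (q - 1)) / (r / (r - 1)))) ^ (2 / (q / (q - 1))) with hBd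
  have step1 : ∀ n : ℕ, ∫⁻ X, ‖∫ t in Sd n, ∫ Y, kern d a (((0:ℝ):ℂ) - I * t) X Y * F (Y,t) ∂(ωa d a)‖ₑ^2 ∂(ωa d a) ≤ Bd := by
    intro n
    refine fatou2 _ _ (fun j X => ∫ t in Sd n, ∫ Y in bN d j, kern d a (((1/((j:ℝ)+1) : ℝ):ℂ) - I * t) X Y * F (Y,t) ∂(ωa d a)) ?_ Bd ?_ ?_
    · intro j
      exact u_meas (volume.restrict (Sd n)) (fun X t => ∫ Y in bN d j, kern d a (((1/((j:ℝ)+1) : ℝ):ℂ) - I * t) X Y * F (Y,t) ∂(ωa d a))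
        (J_meas d a ha F hFm (1/((j:ℝ)+1)) ((ωa d a).restrict (bN d j)))
    · intro j
      exact H F hFm K hK j ((n:ℝ)+1) (1/((j:ℝ)+1)) (by positivity) (by positivity) (Sd n) (Sd_meas n) (fun t ht => ht.2)
    · filter_upwards [ωa_pos d a] with X hX
      exact Or.inr (lim1 d a ha F n X hX)
  have step2 : ∫⁻ X, ‖∫ t : ℝ, ∫ Y, SK d a X Y (-t) * F (Y, t) ∂(ωa d a)‖ₑ^2 ∂(ωa d a) ≤ Bd := by
    refine fatou2 _ _ (fun n X => ∫ t in Sd n, ∫ Y, kern d a (((0:ℝ):ℂ) - I * t) X Y * F (Y,t) ∂(ωa d a)) ?_ Bd step1 ?_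
    · intro n
      exact u_meas (volume.restrict (Sd n)) (fun X t => ∫ Y, kern d a (((0:ℝ):ℂ) - I * t) X Y * F (Y,t) ∂(ωa d a))
        (J_meas d a ha F hFm 0 (ωa d a))
    · filter_upwards [ωa_pos d a] with X hX
      have e1 : ∀ t : ℝ, t ≠ 0 → ∫ Y, SK d a X Y (-t) * F (Y, t) ∂(ωa d a) = ∫ Y, kern d a (((0:ℝ):ℂ) - I * t) X Y * F (Y,t) ∂(ωa d a) := by
        intro t ht
        refine integral_congr_ae ?_
        filter_upwards [ωa_pos d a] with Y hY
        rw [SK_eq d a ha X Y (-t) hX hY (neg_ne_zero.2 ht)]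
        congr 2; push_cast; ring
      by_cases hi : Integrable (fun t : ℝ => ∫ Y, SK d a X Y (-t) * F (Y, t) ∂(ωa d a))
      · right
        have e2 : ∀ n, ∫ t in Sd n, ∫ Y, kern d a (((0:ℝ):ℂ) - I * t) X Y * F (Y,t) ∂(ωa d a) = ∫ t in Sd n, ∫ Y, SK d a X Y (-t) * F (Y, t) ∂(ωa d a) := by
          intro n
          refine setIntegral_congr_fun (Sd_meas n) fun t ht => ?_
          have : t ∈ ⋃ n, Sd n := Set.mem_iUnion.2 ⟨n, ht⟩
          rw [Sd_union] at this
          exact (e1 t this).symm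
        simp_rw [e2]
        have := tendsto_setIntegral_of_monotone Sd_meas Sd_mono (hi.integrableOn (s := ⋃ n, Sd n))
        have e3 : ∫ t in ⋃ n, Sd n, ∫ Y, SK d a X Y (-t) * F (Y, t) ∂(ωa d a) = ∫ t : ℝ, ∫ Y, SK d a X Y (-t) * F (Y, t) ∂(ωa d a) := by
          rw [Sd_union, Measure.restrict_eq_self_of_ae_mem]
          simp [ae_iff]
        rwa [e3] at this
      · left
        exact integral_undef hi
  rw [eLpNorm_eq_lintegral_rpow_enorm_toReal (by simp) (by simp)]
  simp only [ENNReal.toReal_ofNat, ENNReal.rpow_ofNat]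
  refine (ENNReal.rpow_le_rpow step2 (by norm_num)).trans (le_of_eq ?_)
  rw [hBd, ENNReal.mul_rpow_of_nonneg _ _ (by norm_num), ENNReal.ofReal_rpow_of_pos hC, ← ENNReal.rpow_mul]
  congr 2
  ring
end


/-- A restriction-type (dual Strichartz) estimate: for `a ≥ 0` and
`q, r > 2` with `2/q = (d+a+1)(1/2 − 1/r)`, the operator
`𝕋_a(F)(X) = ∫_ℝ ∫ 𝕊_a(X,Y,−t) F(Y,t) dω_a(Y) dt` satisfies
`‖𝕋_a(F)‖_{L²_a} ≤ C ‖F‖_{L^{q'}_t L^{r'}_a}`; in particular, for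
`q = r = 2(d+a+3)/(d+a+1)` one has
`‖𝕋_a(F)‖_{L²_a} ≤ C ‖F‖_{L^{2(d+a+3)/(d+a+5)}(ℝ^{d+1}_+×ℝ, dω_a dt)}`. -/
theorem dual_strichartz_restriction
    (d : ℕ) (hd : 1 ≤ d) (a : ℝ) (ha : 0 ≤ a) (q r : ℝ) (hq : 2 < q) (hr : 2 < r)
    (hrel : 2 / q = ((d : ℝ) + a + 1) * (1 / 2 - 1 / r)) :
    (∃ C > (0 : ℝ), ∀ F : SchwartzMap (((Fin d → ℝ) × ℝ) × ℝ) ℂ,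
      eLpNorm (fun X => ∫ t : ℝ, ∫ Y, SK d a X Y (-t) * F (Y, t) ∂(ωa d a)) 2 (ωa d a)
        ≤ ENNReal.ofReal C *
            (∫⁻ t : ℝ,
              (∫⁻ Y, (‖F (Y, t)‖₊ : ℝ≥0∞) ^ (r / (r - 1)) ∂(ωa d a))
                ^ ((q / (q - 1)) / (r / (r - 1)))) ^ (1 / (q / (q - 1)))) ∧
    (∃ C > (0 : ℝ), ∀ F : SchwartzMap (((Fin d → ℝ) × ℝ) × ℝ) ℂ,
      eLpNorm (fun X => ∫ t : ℝ, ∫ Y, SK d a X Y (-t) * F (Y, t) ∂(ωa d a)) 2 (ωa d a)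
        ≤ ENNReal.ofReal C *
            eLpNorm (fun P : ((Fin d → ℝ) × ℝ) × ℝ => F P)
              (ENNReal.ofReal (2 * ((d : ℝ) + a + 3) / ((d : ℝ) + a + 5)))
              ((ωa d a).prod volume)) := by
  refine ⟨mainL d a ha q r hq hr hrel, ?_⟩
  have hd0 : (0:ℝ) ≤ d := by positivity
  have h1 : 0 < (d:ℝ) + a + 1 := by linarith
  have h5 : 0 < (d:ℝ) + a + 5 := by linarith
  have h3 : 0 < (d:ℝ) + a + 3 := by linarith
  have hQ2 : 2 < 2 * ((d:ℝ) + a + 3) / ((d:ℝ) + a + 1) := by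
    rw [lt_div_iff₀ h1]; linarith
  have hrelQ : 2 / (2 * ((d:ℝ) + a + 3) / ((d:ℝ) + a + 1)) = ((d : ℝ) + a + 1) * (1 / 2 - 1 / (2 * ((d:ℝ) + a + 3) / ((d:ℝ) + a + 1))) := by
    field_simp; ring
  have hP : (2 * ((d:ℝ) + a + 3) / ((d:ℝ) + a + 1)) / (2 * ((d:ℝ) + a + 3) / ((d:ℝ) + a + 1) - 1) = 2 * ((d:ℝ) + a + 3) / ((d:ℝ) + a + 5) := by
    have : 2 * ((d:ℝ) + a + 3) / ((d:ℝ) + a + 1) - 1 = ((d:ℝ) + a + 5) / ((d:ℝ) + a + 1) := by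
      field_simp; ring
    rw [this]; field_simp
  obtain ⟨C, hC, H⟩ := mainL d a ha _ _ hQ2 hQ2 hrelQ
  refine ⟨C, hC, fun F => (H F).trans (le_of_eq ?_)⟩
  have hP0 : 0 < 2 * ((d:ℝ) + a + 3) / ((d:ℝ) + a + 5) := by positivity
  rw [hP, div_self hP0.ne', eLpNorm_eq_lintegral_rpow_enorm_toReal (by simpa using hP0) (by simp),
    ENNReal.toReal_ofReal hP0.le]
  simp only [ENNReal.rpow_one]
  congr 2
  have hFm : Measurable fun P : ((Fin d → ℝ) × ℝ) × ℝ => F P := F.continuous.measurable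
  rw [lintegral_prod_symm _ (hFm.enorm.pow_const _).aemeasurable]
  rfl

end
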